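/- Let 2 ≤ p < ∞, s > 0, and set i = ⌊s⌋ + 1. There exists C > 0, depending only on φ, p, s, such that for every admissible finite collection 𝓘 = {[a_m,b_m]}_{m=1}^N and every measurable f : ℝ → ℂ with ‖ M^{i,s}_p f ‖_{L^p} < ∞, the rotated family g = {g_m}_{m=1}^N, g_m(x) = e^{−2πi a_m x}(f∗φ_m)(x), satisfies ‖ M^{i,s}_p g ‖_{L^p} ≤ C ‖ M^{i,s}_p f ‖_{L^p}. (Uniform boundedness of the rotated family on Ċ^s_p = Ḟ^s_{p∞}.) -/

import Mathlib

open MeasureTheory Real Set Function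
open scoped FourierTransform ENNReal NNReal

/-- `e2pi t = e^{2πit}`. -/
noncomputable def e2pi (t : ℝ) : ℂ := Complex.exp (2 * (Real.pi : ℂ) * Complex.I * (t : ℂ))

/-- Convolution of two functions on `ℝ`. -/
noncomputable def conv (f g : ℝ → ℂ) (x : ℝ) : ℂ := ∫ t, f t * g (x - t)

/-- The function `φ_m` associated with the interval `[a,b]`: its Fourier transform is
`ξ ↦ 𝓕φ ((ξ - a)/(b - a))`; in space variables it is `x ↦ (b-a) e^{2πiax} φ((b-a)x)`. -/
noncomputable def phim (φ : ℝ → ℂ) (a b : ℝ) (x : ℝ) : ℂ :=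
  ((b - a : ℝ) : ℂ) * e2pi (a * x) * φ ((b - a) * x)

/-- A finite collection of compact intervals `[a m, b m]` is admissible if the intervals are
nondegenerate, pairwise disjoint, and none of them contains `0` in its interior. -/
def Admissible {N : ℕ} (a b : Fin N → ℝ) : Prop :=
  (∀ m, a m < b m) ∧ (∀ m, (0 : ℝ) ∉ Set.Ioo (a m) (b m)) ∧
    ∀ m m', m ≠ m' → Disjoint (Set.Icc (a m) (b m)) (Set.Icc (a m') (b m'))

/-- The rotated Rubio de Francia piece `g_m(x) = e^{-2πi a x} (f ∗ φ_m)(x)`. -/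
noncomputable def rotConv (φ : ℝ → ℂ) (a b : ℝ) (f : ℝ → ℂ) (x : ℝ) : ℂ :=
  e2pi (-(a * x)) * conv f (phim φ a b) x

/-- Sharp maximal function `M^{i,s}_p` of a finite family `h = {h_m}` of functions, with the
`ℓ²`-norm inside: `sup_{I ∋ x} inf_{P} |I|^{-s} ((1/|I|) ∫_I (Σ_m |h_m - P_m|²)^{p/2})^{1/p}`,
the infimum over families of polynomials of degree `< i`, with values in `[0,∞]`. -/
noncomputable def sharpMax (i : ℕ) (s p : ℝ) {N : ℕ} (h : Fin N → ℝ → ℂ) (x : ℝ) : ℝ≥0∞ :=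
  ⨆ (u : ℝ) (v : ℝ) (_ : u < v) (_ : x ∈ Set.Icc u v),
    ⨅ (P : Fin N → Polynomial ℂ) (_ : ∀ m, (P m).degree < (i : WithBot ℕ)),
      ENNReal.ofReal (v - u) ^ (-s) *
        ((ENNReal.ofReal (v - u))⁻¹ *
          ∫⁻ t in Set.Icc u v,
            ENNReal.ofReal ((∑ m, ‖h m t - (P m).eval (t : ℂ)‖ ^ 2) ^ (p / 2))) ^ (1 / p)

/-!
The Fourier transform of `φ_m` vanishes to infinite order at `0` because `(a_m, b_m)` omits `0`, so
convolution with `φ_m` kills polynomials. On an interval `I` one may therefore replace `f` by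
`w = f - P` with `P` a single polynomial of degree `< i` nearly optimal for `f` on all the intervals
`2^j I` at once; since `s < i`, the mean of `|w|` over `2^j I` is summable against `2^{-ij}`.

The part of `w` near `I` is controlled in `L²(ℓ²)` by Plancherel, as the `[a_m, b_m]` are disjoint.
For the part `h` of `w` in a dyadic shell at distance `ρ` from `I`, the `i`-th derivative of the
rotated family is estimated pointwise: the rotation moves the spectrum of the `m`-th piece into
`[0, b_m - a_m]`, so a derivative costs a factor `b_m - a_m`, which is traded for `ρ⁻¹` by moving a
factor `y - t` from the kernel to `h`, and Bessel's inequality for the functions `φ_m(y - ·)` sums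
over `m`. Taylor's formula then gives the polynomial competitor, and `M^{i,s}_2 g ≤ C M^{i,s}_2 f`.

It remains to bound `M^{i,s}_p g` by `M^{i,s}_1 g` in `L^p`. Telescoping along dyadic intervals that
shrink to a point improves a mean oscillation bound `H(x) |I|^s`, valid for all `I ∋ x`, to an `L^p`
oscillation bound by the power `θ = p⁻¹ + s/4` of the maximal function of `H^{1/θ}`; as `s > 0`, one
has `θ p > 1`, and the strong Hardy-Littlewood maximal inequality applies.
-/

section MaximalFunction

/-- The uncentred Hardy-Littlewood maximal function on `ℝ`. The point is required to be interior to
the interval, which makes the maximal function lower semicontinuous. -/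
noncomputable def maximalFunction (W : ℝ → ℝ≥0∞) (x : ℝ) : ℝ≥0∞ :=
  ⨆ (u : ℝ) (v : ℝ) (_ : x ∈ Ioo u v), ⨍⁻ t in Icc u v, W t ∂volume

lemma measurable_iSup_mem_Ioo (A : ℝ → ℝ → ℝ≥0∞) :
    Measurable fun x : ℝ ↦ ⨆ (u : ℝ) (v : ℝ) (_ : x ∈ Ioo u v), A u v := by
  refine measurable_of_Ioi fun c ↦ ?_
  have hpre : (fun x : ℝ ↦ ⨆ (u : ℝ) (v : ℝ) (_ : x ∈ Ioo u v), A u v) ⁻¹' Ioi c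
      = ⋃ (u : ℝ) (v : ℝ) (_ : c < A u v), Ioo u v := by
    ext x
    simp only [mem_preimage, mem_Ioi, lt_iSup_iff, mem_iUnion, exists_prop, and_comm]
  rw [hpre]
  exact (isOpen_iUnion fun u ↦ isOpen_iUnion fun v ↦ isOpen_iUnion fun _ ↦ isOpen_Ioo).measurableSet

lemma measurable_maximalFunction (W : ℝ → ℝ≥0∞) : Measurable (maximalFunction W) :=
  measurable_iSup_mem_Ioo _

lemma setLAverage_le_maximalFunction (W : ℝ → ℝ≥0∞) {u v x : ℝ} (hx : x ∈ Ioo u v) :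
    ⨍⁻ t in Icc u v, W t ∂volume ≤ maximalFunction W x :=
  le_iSup₂_of_le (f := fun u v ↦ ⨆ (_ : x ∈ Ioo u v), ⨍⁻ t in Icc u v, W t ∂volume) u v
    (le_iSup_of_le hx le_rfl)

lemma closedBall_midpoint_eq_Icc (u v : ℝ) :
    Metric.closedBall ((u + v) / 2) ((v - u) / 2) = Icc u v := by
  rw [Real.closedBall_eq_Icc]
  congr 1 <;> ring

/-- Vitali covering: among the intervals on which `W` has mass at least `l` times their length,
select a disjoint family whose five-fold dilates cover. -/
lemma volume_lt_maximalFunction_le (W : ℝ → ℝ≥0∞) {l : ℝ} (hl : 0 < l) :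
    volume {x | ENNReal.ofReal l < maximalFunction W x} ≤ ENNReal.ofReal (5 / l) * ∫⁻ t, W t := by
  by_cases hW : ∫⁻ t, W t = ∞
  · rw [hW, ENNReal.mul_top (ENNReal.ofReal_pos.2 (by positivity)).ne']; exact le_top
  let T : Set (ℝ × ℝ) :=
    {q | q.1 < q.2 ∧ ENNReal.ofReal (l * (q.2 - q.1)) ≤ ∫⁻ t in Icc q.1 q.2, W t}
  have radius_le : ∀ q ∈ T, (q.2 - q.1) / 2 ≤ (∫⁻ t, W t).toReal / l := by
    rintro q ⟨hlt, hmass⟩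
    have := (ENNReal.ofReal_le_iff_le_toReal hW).1 (hmass.trans (setLIntegral_le_lintegral _ _))
    rw [le_div_iff₀ hl]
    nlinarith
  obtain ⟨S, hST, hdisj, hcov⟩ := Vitali.exists_disjoint_subfamily_covering_enlargement_closedBall T
    (fun q ↦ (q.1 + q.2) / 2) (fun q ↦ (q.2 - q.1) / 2) _ radius_le 5 (by norm_num)
  simp only [closedBall_midpoint_eq_Icc] at hdisj hcov
  have hS : S.Countable := hdisj.countable_of_nonempty_interior fun q hq ↦ by
    rw [interior_Icc]
    exact nonempty_Ioo.2 (hST hq).1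
  have hsub : {x | ENNReal.ofReal l < maximalFunction W x} ⊆
      ⋃ q ∈ S, Metric.closedBall ((q.1 + q.2) / 2) (5 * ((q.2 - q.1) / 2)) := by
    intro x hx
    simp only [mem_ofPred_eq, maximalFunction, lt_iSup_iff, setLAverage_eq, Real.volume_Icc] at hx
    obtain ⟨u, v, hxuv, hlt⟩ := hx
    have huv : 0 < v - u := sub_pos.2 (hxuv.1.trans hxuv.2)
    have hq : (u, v) ∈ T := ⟨sub_pos.1 huv, by
      rw [ENNReal.ofReal_mul hl.le]
      exact ENNReal.mul_le_of_le_div hlt.le⟩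
    obtain ⟨q, hqS, hq⟩ := hcov _ hq
    exact mem_biUnion hqS (hq (Ioo_subset_Icc_self hxuv))
  calc volume {x | ENNReal.ofReal l < maximalFunction W x}
      ≤ ∑' q : S, volume (Metric.closedBall ((q.1.1 + q.1.2) / 2) (5 * ((q.1.2 - q.1.1) / 2))) :=
        (measure_mono hsub).trans (measure_biUnion_le _ hS _)
    _ ≤ ∑' q : S, ENNReal.ofReal (5 / l) * ∫⁻ t in Icc q.1.1 q.1.2, W t := by
        refine ENNReal.tsum_le_tsum fun q ↦ ?_
        rw [Real.volume_closedBall, show 2 * (5 * ((q.1.2 - q.1.1) / 2))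
          = 5 / l * (l * (q.1.2 - q.1.1)) by field_simp, ENNReal.ofReal_mul (by positivity)]
        gcongr
        exact (hST q.2).2
    _ = ENNReal.ofReal (5 / l) * ∫⁻ t in ⋃ q ∈ S, Icc q.1 q.2, W t := by
        rw [ENNReal.tsum_mul_left, lintegral_biUnion hS (fun _ _ ↦ measurableSet_Icc) hdisj]
    _ ≤ ENNReal.ofReal (5 / l) * ∫⁻ t, W t := by gcongr; exact Measure.restrict_le_self

lemma maximalFunction_le_indicator_add (W : ℝ → ℝ≥0∞) (c : ℝ≥0∞) (x : ℝ) :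
    maximalFunction W x ≤ maximalFunction ({t | c < W t}.indicator W) x + c := by
  refine iSup_le fun u ↦ iSup₂_le fun v hx ↦ ?_
  have hvol : volume (Icc u v) ≠ 0 := by
    rw [Real.volume_Icc, ENNReal.ofReal_ne_zero_iff]
    exact sub_pos.2 (hx.1.trans hx.2)
  have hW : W ≤ fun t ↦ {t | c < W t}.indicator W t + c := by
    intro t
    by_cases ht : c < W t
    · simp [ht]
    · simpa [ht] using not_lt.1 ht
  calc ⨍⁻ t in Icc u v, W t ∂volume
      ≤ ⨍⁻ t in Icc u v, ({t | c < W t}.indicator W t + c) ∂volume := lintegral_mono hW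
    _ = (⨍⁻ t in Icc u v, {t | c < W t}.indicator W t ∂volume) + c := by
        rw [laverage, lintegral_add_right _ measurable_const, ← laverage, ← laverage,
          setLAverage_const hvol (by simp)]
    _ ≤ maximalFunction ({t | c < W t}.indicator W) x + c := by
        gcongr
        exact setLAverage_le_maximalFunction _ hx

variable {α : Type*} [MeasurableSpace α] {μ : Measure α}

lemma setLIntegral_Ioi_ofReal_rpow_eq_top (q : ℝ) :
    ∫⁻ t in Ioi (0 : ℝ), ENNReal.ofReal (t ^ q) = ∞ := by
  by_contra h
  refine not_integrableOn_Ioi_rpow q ⟨by fun_prop, ?_⟩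
  rw [hasFiniteIntegral_iff_ofReal]
  · exact lt_top_iff_ne_top.2 h
  · filter_upwards [ae_restrict_mem measurableSet_Ioi] with t ht
    exact Real.rpow_nonneg (mem_Ioi.1 ht).le q

lemma lintegral_ennreal_rpow_eq_lintegral_meas_lt_mul {G : α → ℝ≥0∞} (hG : Measurable G) {q : ℝ}
    (hq : 0 < q) :
    ∫⁻ x, G x ^ q ∂μ = ENNReal.ofReal q *
      ∫⁻ t in Ioi (0 : ℝ), μ {x | ENNReal.ofReal t < G x} * ENNReal.ofReal (t ^ (q - 1)) := by
  by_cases htop : μ {x | G x = ∞} = 0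
  · have hfin : ∀ᵐ x ∂μ, G x ≠ ∞ := by simpa [ae_iff] using htop
    have hreal := lintegral_rpow_eq_lintegral_meas_lt_mul μ (f := fun x ↦ (G x).toReal)
      (Filter.Eventually.of_forall fun _ ↦ ENNReal.toReal_nonneg) hG.ennreal_toReal.aemeasurable hq
    convert hreal using 1
    · refine lintegral_congr_ae (hfin.mono fun x hx ↦ ?_)
      dsimp only
      rw [← ENNReal.ofReal_rpow_of_nonneg ENNReal.toReal_nonneg hq.le, ENNReal.ofReal_toReal hx]
    · congr 1
      refine setLIntegral_congr_fun measurableSet_Ioi fun t ht ↦ ?_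
      congr 1
      refine measure_congr (hfin.mono fun x hx ↦ propext ?_)
      exact ENNReal.ofReal_lt_iff_lt_toReal (mem_Ioi.1 ht).le hx
  · have hleft : ∫⁻ x, G x ^ q ∂μ = ∞ := by
      refine lintegral_eq_top_of_measure_eq_top_ne_zero (hG.pow_const q).aemeasurable ?_
      simpa [ENNReal.rpow_eq_top_iff_of_pos hq] using htop
    have hright : ∞ ≤ ∫⁻ t in Ioi (0 : ℝ), μ {x | ENNReal.ofReal t < G x}
        * ENNReal.ofReal (t ^ (q - 1)) :=
      calc ∞ = ∫⁻ t in Ioi (0 : ℝ), μ {x | G x = ∞} * ENNReal.ofReal (t ^ (q - 1)) := by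
            rw [lintegral_const_mul _ (by fun_prop), setLIntegral_Ioi_ofReal_rpow_eq_top,
              ENNReal.mul_top htop]
        _ ≤ _ := by
            gcongr with t
            intro hx
            simp [hx]
    rw [hleft, top_le_iff.1 hright, ENNReal.mul_top (by simpa using hq)]

lemma lintegral_withDensity_mul_rpow {W : α → ℝ≥0∞} (hW : Measurable W) (c : ℝ≥0∞) {q : ℝ}
    (hq : 0 ≤ q) :
    ∫⁻ x, (c * W x) ^ q ∂μ.withDensity W = c ^ q * ∫⁻ x, W x ^ (q + 1) ∂μ := by
  rw [lintegral_withDensity_eq_lintegral_mul _ hW ((hW.const_mul c).pow_const q),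
    ← lintegral_const_mul _ (hW.pow_const _)]
  refine lintegral_congr fun x ↦ ?_
  rw [Pi.mul_apply, ENNReal.mul_rpow_of_nonneg _ _ hq,
    ENNReal.rpow_add_of_nonneg _ _ hq zero_le_one, ENNReal.rpow_one]
  ring

/-- Marcinkiewicz interpolation between weak type `(1,1)` and `L^∞`: apply the layer cake formula to
`G` for `μ`, and then to `2 W` for the measure with density `W`. -/
lemma lintegral_rpow_le_of_meas_lt_le {G W : α → ℝ≥0∞} (hG : Measurable G) (hW : Measurable W)
    {c r : ℝ} (hc : 0 ≤ c) (hr : 1 < r)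
    (h : ∀ t : ℝ, 0 < t → μ {x | ENNReal.ofReal t < G x} ≤
      ENNReal.ofReal (c / t) * ∫⁻ x in {x | ENNReal.ofReal t < 2 * W x}, W x ∂μ) :
    ∫⁻ x, G x ^ r ∂μ ≤
      ENNReal.ofReal (r * c * (r - 1)⁻¹ * 2 ^ (r - 1)) * ∫⁻ x, W x ^ r ∂μ := by
  have hr1 : 0 < r - 1 := by linarith
  have h2W : Measurable fun x ↦ 2 * W x := hW.const_mul 2
  let ν := μ.withDensity W
  have weak : ∀ t ∈ Ioi (0 : ℝ), μ {x | ENNReal.ofReal t < G x} * ENNReal.ofReal (t ^ (r - 1)) ≤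
      ENNReal.ofReal c *
        (ν {x | ENNReal.ofReal t < 2 * W x} * ENNReal.ofReal (t ^ (r - 1 - 1))) := by
    intro t (ht : 0 < t)
    rw [withDensity_apply _ (measurableSet_lt measurable_const h2W)]
    calc _ ≤ _ := mul_le_mul_left (h t ht) _
      _ = (ENNReal.ofReal (c / t) * ENNReal.ofReal (t ^ (r - 1))) *
          ∫⁻ x in {x | ENNReal.ofReal t < 2 * W x}, W x ∂μ := by ring
      _ = (ENNReal.ofReal c * ENNReal.ofReal (t ^ (r - 1 - 1))) *
          ∫⁻ x in {x | ENNReal.ofReal t < 2 * W x}, W x ∂μ := by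
          rw [← ENNReal.ofReal_mul (by positivity), ← ENNReal.ofReal_mul hc,
            Real.rpow_sub_one ht.ne' (r - 1)]
          congr 2
          ring
      _ = _ := by ring
  have layer : ∫⁻ t in Ioi (0 : ℝ), ν {x | ENNReal.ofReal t < 2 * W x}
      * ENNReal.ofReal (t ^ (r - 1 - 1)) =
      ENNReal.ofReal (r - 1)⁻¹ * (2 ^ (r - 1) * ∫⁻ x, W x ^ r ∂μ) := by
    have density := lintegral_withDensity_mul_rpow (μ := μ) hW 2 hr1.le
    rw [sub_add_cancel] at density
    rw [← density, lintegral_ennreal_rpow_eq_lintegral_meas_lt_mul h2W hr1, ← mul_assoc,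
      ← ENNReal.ofReal_mul (by positivity), inv_mul_cancel₀ hr1.ne', ENNReal.ofReal_one, one_mul]
  calc ∫⁻ x, G x ^ r ∂μ
      ≤ ENNReal.ofReal r * ∫⁻ t in Ioi (0 : ℝ), ENNReal.ofReal c *
        (ν {x | ENNReal.ofReal t < 2 * W x} * ENNReal.ofReal (t ^ (r - 1 - 1))) := by
        rw [lintegral_ennreal_rpow_eq_lintegral_meas_lt_mul hG (by linarith)]
        gcongr 1
        exact setLIntegral_mono' measurableSet_Ioi weak
    _ = ENNReal.ofReal r * (ENNReal.ofReal c *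
          (ENNReal.ofReal (r - 1)⁻¹ * (2 ^ (r - 1) * ∫⁻ x, W x ^ r ∂μ))) := by
        rw [lintegral_const_mul' _ _ ENNReal.ofReal_ne_top, layer]
    _ = _ := by
        rw [ENNReal.ofReal_mul (by positivity), ENNReal.ofReal_mul (by positivity),
          ENNReal.ofReal_mul (by positivity), ← ENNReal.ofReal_rpow_of_pos two_pos,
          ENNReal.ofReal_ofNat]
        ring

theorem lintegral_maximalFunction_rpow_le {W : ℝ → ℝ≥0∞} (hW : Measurable W) {r : ℝ} (hr : 1 < r) :
    ∫⁻ x, maximalFunction W x ^ r ≤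
      ENNReal.ofReal (r * 10 * (r - 1)⁻¹ * 2 ^ (r - 1)) * ∫⁻ x, W x ^ r := by
  refine lintegral_rpow_le_of_meas_lt_le (measurable_maximalFunction W) hW (by norm_num) hr
    fun t ht ↦ ?_
  have split : ENNReal.ofReal (t / 2) + ENNReal.ofReal (t / 2) = ENNReal.ofReal t := by
    rw [← ENNReal.ofReal_add (by positivity) (by positivity), add_halves]
  have hsub : {x | ENNReal.ofReal t < maximalFunction W x} ⊆ {x | ENNReal.ofReal (t / 2) <
      maximalFunction ({y | ENNReal.ofReal (t / 2) < W y}.indicator W) x} := fun x hx ↦ by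
    have := (mem_ofPred_eq ▸ hx).trans_le (maximalFunction_le_indicator_add W (.ofReal (t / 2)) x)
    rw [← split] at this
    exact lt_of_add_lt_add_right this
  have hset : {y | ENNReal.ofReal (t / 2) < W y} ⊆ {y | ENNReal.ofReal t < 2 * W y} := fun y hy ↦ by
    rw [mem_ofPred_eq, two_mul, ← split]
    exact ENNReal.add_lt_add hy hy
  calc volume {x | ENNReal.ofReal t < maximalFunction W x}
      ≤ ENNReal.ofReal (5 / (t / 2)) *
          ∫⁻ x, {y | ENNReal.ofReal (t / 2) < W y}.indicator W x :=
        (measure_mono hsub).trans (volume_lt_maximalFunction_le _ (by positivity))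
    _ ≤ ENNReal.ofReal (10 / t) * ∫⁻ x in {y | ENNReal.ofReal t < 2 * W y}, W x := by
        rw [lintegral_indicator (measurableSet_lt measurable_const hW),
          show 5 / (t / 2) = 10 / t by field_simp; norm_num]
        gcongr

end MaximalFunction

section NormalizedMeasure

open scoped ProbabilityTheory

lemma volume_Icc_ne_zero {u v : ℝ} (huv : u < v) : volume (Icc u v) ≠ 0 := by simpa using huv

lemma isProbabilityMeasure_cond_Icc {u v : ℝ} (huv : u < v) :
    IsProbabilityMeasure volume[|Icc u v] :=
  ProbabilityTheory.cond_isProbabilityMeasure_of_finite (volume_Icc_ne_zero huv) (by simp)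

lemma setLAverage_eq_lintegral_cond {α : Type*} [MeasurableSpace α] (μ : Measure α) (s : Set α)
    (f : α → ℝ≥0∞) : ⨍⁻ t in s, f t ∂μ = ∫⁻ t, f t ∂μ[|s] := by
  rw [laverage, Measure.restrict_apply_univ, ProbabilityTheory.cond]

lemma lintegral_cond_Icc (f : ℝ → ℝ≥0∞) (u v : ℝ) :
    ∫⁻ t, f t ∂volume[|Icc u v] = (ENNReal.ofReal (v - u))⁻¹ * ∫⁻ t in Icc u v, f t := by
  rw [ProbabilityTheory.cond, lintegral_smul_measure, Real.volume_Icc, smul_eq_mul]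

lemma cond_Icc_le_smul {u v u' v' K : ℝ} (huv : u < v) (hsub : Icc u v ⊆ Icc u' v')
    (hK : v' - u' ≤ K * (v - u)) :
    volume[|Icc u v] ≤ ENNReal.ofReal K • volume[|Icc u' v'] := by
  have hlen : 0 < v - u := sub_pos.2 huv
  have hlen' : 0 < v' - u' := by
    have := (Icc_subset_Icc_iff huv.le).1 hsub
    linarith
  have hK0 : 0 < K := pos_of_mul_pos_left (hlen'.trans_le hK) hlen.le
  rw [ProbabilityTheory.cond, ProbabilityTheory.cond, smul_smul, Real.volume_Icc, Real.volume_Icc]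
  refine Measure.le_iff'.2 fun s ↦ ?_
  simp only [Measure.smul_apply, smul_eq_mul]
  refine mul_le_mul' ?_ (Measure.restrict_mono hsub le_rfl s)
  rw [← ENNReal.ofReal_inv_of_pos hlen, ← ENNReal.ofReal_inv_of_pos hlen',
    ← ENNReal.ofReal_mul hK0.le]
  refine ENNReal.ofReal_le_ofReal ?_
  rw [← div_eq_mul_inv, inv_eq_one_div, div_le_div_iff₀ hlen hlen']
  linarith

lemma eLpNorm_cond_Icc_le {E : Type*} [NormedAddCommGroup E] {u v u' v' K : ℝ} (huv : u < v)
    (hsub : Icc u v ⊆ Icc u' v') (hK : v' - u' ≤ K * (v - u)) {p : ℝ≥0∞} (hp : p ≠ ∞) (f : ℝ → E) :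
    eLpNorm f p volume[|Icc u v] ≤
      ENNReal.ofReal K ^ (1 / p).toReal * eLpNorm f p volume[|Icc u' v'] := by
  rw [← smul_eq_mul, ← eLpNorm_smul_measure_of_ne_top hp]
  exact eLpNorm_mono_measure _ (cond_Icc_le_smul huv hsub hK)

end NormalizedMeasure

section PolynomialFunctions

open scoped ProbabilityTheory

variable {E : Type*} [NormedAddCommGroup E] [NormedSpace ℝ E]
  {F : Type*} [NormedAddCommGroup F] [NormedSpace ℝ F]

variable (E) in
/-- The space of `E`-valued polynomial functions of degree less than `n` on the real line. -/
def polyFun (n : ℕ) : Submodule ℝ (ℝ → E) :=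
  Submodule.span ℝ {P | ∃ k < n, ∃ c : E, P = fun t ↦ t ^ k • c}

lemma pow_smul_mem_polyFun {n k : ℕ} (hk : k < n) (c : E) :
    (fun t : ℝ ↦ t ^ k • c) ∈ polyFun E n :=
  Submodule.subset_span ⟨k, hk, c, rfl⟩

lemma const_mem_polyFun (n : ℕ) (c : E) : (fun _ : ℝ ↦ c) ∈ polyFun E (n + 1) := by
  simpa using pow_smul_mem_polyFun n.succ_pos c

lemma sub_pow_smul_mem_polyFun {n k : ℕ} (hk : k < n) (a : ℝ) (c : E) :
    (fun t : ℝ ↦ (t - a) ^ k • c) ∈ polyFun E n := by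
  have expand : (fun t : ℝ ↦ (t - a) ^ k • c) =
      ∑ m ∈ Finset.range (k + 1), fun t : ℝ ↦ t ^ m • ((-a) ^ (k - m) * k.choose m) • c := by
    ext t
    rw [Finset.sum_apply, sub_eq_add_neg, add_pow, Finset.sum_smul]
    simp only [mul_assoc, mul_smul]
  rw [expand]
  exact Submodule.sum_mem _ fun m hm ↦
    pow_smul_mem_polyFun (by have := Finset.mem_range.1 hm; omega) _

lemma comp_mem_polyFun {n : ℕ} {P : ℝ → E} (hP : P ∈ polyFun E n) (L : E →ₗ[ℝ] F) :
    (fun t ↦ L (P t)) ∈ polyFun F n := by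
  induction hP using Submodule.span_induction with
  | mem P hP =>
    obtain ⟨k, hk, c, rfl⟩ := hP
    simpa using pow_smul_mem_polyFun hk (L c)
  | zero =>
    simp only [Pi.zero_apply, map_zero]
    exact (polyFun F n).zero_mem
  | add P Q _ _ hP hQ =>
    simp only [Pi.add_apply, map_add]
    exact (polyFun F n).add_mem hP hQ
  | smul r P _ hP =>
    simp only [Pi.smul_apply, map_smul]
    exact (polyFun F n).smul_mem r hP

lemma continuous_of_mem_polyFun {n : ℕ} {P : ℝ → E} (hP : P ∈ polyFun E n) : Continuous P := by
  induction hP using Submodule.span_induction with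
  | mem P hP =>
    obtain ⟨k, -, c, rfl⟩ := hP
    fun_prop
  | zero => exact continuous_zero
  | add P Q _ _ hP hQ => exact hP.add hQ
  | smul r P _ hP => exact hP.const_smul r

lemma eq_sum_lagrange_basis_smul {k : ℕ} {z : Fin (k + 1) → ℝ} (hz : Injective z) {P : ℝ → E}
    (hP : P ∈ polyFun E (k + 1)) (y : ℝ) :
    P y = ∑ i, (Lagrange.basis Finset.univ z i).eval y • P (z i) := by
  induction hP using Submodule.span_induction with
  | mem P hP =>
    obtain ⟨m, hm, c, rfl⟩ := hP
    have interp := Lagrange.eq_interpolate (f := Polynomial.X ^ m) (v := z) (s := Finset.univ)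
      hz.injOn (by
        rw [Polynomial.degree_X_pow, Finset.card_univ, Fintype.card_fin]
        exact_mod_cast hm)
    have heval := congr_arg (Polynomial.eval y) interp
    simp only [Lagrange.interpolate_apply, Polynomial.eval_finsetSum, Polynomial.eval_mul,
      Polynomial.eval_C, Polynomial.eval_pow, Polynomial.eval_X] at heval
    simp only [smul_smul, ← Finset.sum_smul, heval, mul_comm]
  | zero => simp
  | add P Q _ _ hP hQ => simp only [Pi.add_apply, smul_add, Finset.sum_add_distrib, ← hP, ← hQ]
  | smul r P _ hP => simp only [Pi.smul_apply, smul_comm _ r, ← Finset.smul_sum, ← hP]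

lemma abs_eval_lagrange_basis_le {k : ℕ} {z : Fin (k + 1) → ℝ} {R δ y : ℝ} (hδ : 0 < δ)
    (hsep : ∀ i j, i ≠ j → δ ≤ |z i - z j|) (hR : ∀ j, |y - z j| ≤ R) (i : Fin (k + 1)) :
    |(Lagrange.basis Finset.univ z i).eval y| ≤ (R / δ) ^ k := by
  rw [Lagrange.basis, Polynomial.eval_prod, Finset.abs_prod]
  calc ∏ j ∈ Finset.univ.erase i, |(Lagrange.basisDivisor (z i) (z j)).eval y|
      ≤ ∏ _j ∈ Finset.univ.erase i, R / δ := by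
        refine Finset.prod_le_prod (fun _ _ ↦ abs_nonneg _) fun j hj ↦ ?_
        simp only [Lagrange.basisDivisor, Polynomial.eval_mul, Polynomial.eval_C,
          Polynomial.eval_sub, Polynomial.eval_X, abs_mul, abs_inv]
        rw [inv_mul_eq_div]
        exact div_le_div₀ ((abs_nonneg _).trans (hR j)) (hR j) hδ
          (hsep i j (Finset.ne_of_mem_erase hj).symm)
    _ = (R / δ) ^ k := by simp [div_pow]

/-- The nodes lie in every second member of a partition of the interval into `2 (k + 1)` pieces. -/
lemma exists_separated_nodes (k : ℕ) {f : ℝ → ℝ≥0∞} (hf : Measurable f) {u v : ℝ} (huv : u < v) :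
    ∃ z : Fin (k + 1) → ℝ, (∀ i, z i ∈ Icc u v) ∧
      (∀ i j, i ≠ j → (v - u) / (2 * (k + 1)) ≤ |z i - z j|) ∧
      ∀ i, f (z i) ≤ ENNReal.ofReal (2 * (k + 1)) * ∫⁻ t, f t ∂volume[|Icc u v] := by
  set δ := (v - u) / (2 * (k + 1)) with hδ
  have hδ0 : 0 < δ := div_pos (sub_pos.2 huv) (by positivity)
  have hvu : v - u = 2 * (k + 1) * δ := by rw [hδ]; field_simp
  have hsub : ∀ i : Fin (k + 1), Icc (u + 2 * i * δ) (u + (2 * i + 1) * δ) ⊆ Icc u v := by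
    intro i
    have hi : (i : ℝ) ≤ k := by exact_mod_cast Nat.lt_succ_iff.1 i.2
    refine Icc_subset_Icc (le_add_of_nonneg_right (by positivity)) ?_
    nlinarith
  have node : ∀ i : Fin (k + 1), ∃ z ∈ Icc (u + 2 * i * δ) (u + (2 * i + 1) * δ),
      f z ≤ ENNReal.ofReal (2 * (k + 1)) * ∫⁻ t, f t ∂volume[|Icc u v] := by
    intro i
    have hlt : u + 2 * i * δ < u + (2 * i + 1) * δ := by linarith
    obtain ⟨z, hz, hfz⟩ :=
      exists_le_setLAverage (volume_Icc_ne_zero hlt) (by simp) hf.aemeasurable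
    refine ⟨z, hz, hfz.trans ?_⟩
    rw [setLAverage_eq_lintegral_cond, ← smul_eq_mul (ENNReal.ofReal _), ← lintegral_smul_measure]
    refine lintegral_mono' (cond_Icc_le_smul hlt (hsub i) ?_) le_rfl
    rw [hvu]
    exact le_of_eq (by ring)
  choose z hz hfz using node
  have lt_sep : ∀ i j : Fin (k + 1), i < j → δ ≤ z j - z i := by
    intro i j hij
    have : (i : ℝ) + 1 ≤ j := by exact_mod_cast hij
    have := (hz i).2
    have := (hz j).1
    nlinarith
  refine ⟨z, fun i ↦ hsub i (hz i), fun i j hij ↦ ?_, hfz⟩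
  rcases lt_or_gt_of_ne hij with h | h
  · exact (lt_sep i j h).trans ((le_abs_self _).trans_eq (abs_sub_comm _ _))
  · exact (lt_sep j i h).trans (le_abs_self _)

lemma enorm_le_lintegral_cond_of_mem_polyFun {k : ℕ} {P : ℝ → E} (hP : P ∈ polyFun E (k + 1))
    {c r y τ : ℝ} (hr : 0 < r) (hτ : 1 ≤ τ) (hy : |y - c| ≤ τ * r) :
    ‖P y‖ₑ ≤ ENNReal.ofReal ((2 * (k + 1)) ^ (k + 2) * τ ^ k) *
      ∫⁻ t, ‖P t‖ₑ ∂volume[|Icc (c - r) (c + r)] := by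
  obtain ⟨z, hz, hsep, hPz⟩ := exists_separated_nodes k
    (continuous_of_mem_polyFun hP).enorm.measurable (show c - r < c + r by linarith)
  set A := ∫⁻ t, ‖P t‖ₑ ∂volume[|Icc (c - r) (c + r)]
  have hδ : (c + r - (c - r)) / (2 * (k + 1)) = r / (k + 1) := by field_simp; ring
  rw [hδ] at hsep
  have hδ0 : 0 < r / (k + 1) := by positivity
  have hinj : Injective z := fun i j hij ↦ by
    by_contra h
    have := hsep i j h
    rw [hij, sub_self, abs_zero] at this
    linarith
  have hdist : ∀ j, |y - z j| ≤ 2 * τ * r := fun j ↦ by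
    have hzc : |c - z j| ≤ r := by rw [abs_le]; constructor <;> linarith [(hz j).1, (hz j).2]
    have := abs_sub_le y c (z j)
    nlinarith
  have hbasis : ∀ i, ‖(Lagrange.basis Finset.univ z i).eval y‖ₑ ≤
      ENNReal.ofReal ((2 * (k + 1) * τ) ^ k) := fun i ↦ by
    rw [← ofReal_norm, Real.norm_eq_abs]
    refine ENNReal.ofReal_le_ofReal ((abs_eval_lagrange_basis_le hδ0 hsep hdist i).trans_eq ?_)
    congr 1
    field_simp
  calc ‖P y‖ₑ = ‖∑ i, (Lagrange.basis Finset.univ z i).eval y • P (z i)‖ₑ := by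
        rw [← eq_sum_lagrange_basis_smul hinj hP]
    _ ≤ ∑ i, ‖(Lagrange.basis Finset.univ z i).eval y‖ₑ * ‖P (z i)‖ₑ := by
        simpa only [enorm_smul] using enorm_sum_le Finset.univ
          fun i ↦ (Lagrange.basis Finset.univ z i).eval y • P (z i)
    _ ≤ ∑ _i : Fin (k + 1), ENNReal.ofReal ((2 * (k + 1) * τ) ^ k) *
          (ENNReal.ofReal (2 * (k + 1)) * A) := by
        gcongr with i
        · exact hbasis i
        · exact hPz i
    _ = ENNReal.ofReal ((k + 1 : ℕ) * ((2 * (k + 1) * τ) ^ k * (2 * (k + 1)))) * A := by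
        rw [Finset.sum_const, Finset.card_univ, Fintype.card_fin, nsmul_eq_mul,
          ← mul_assoc (ENNReal.ofReal _), ← ENNReal.ofReal_mul (by positivity), ← mul_assoc,
          ENNReal.ofReal_mul (Nat.cast_nonneg _), ENNReal.ofReal_natCast]
    _ ≤ _ := by
        gcongr ENNReal.ofReal ?_ * A
        rw [mul_pow, pow_add, Nat.cast_succ]
        have : 0 ≤ (2 * ((k : ℝ) + 1)) ^ k * τ ^ k := by positivity
        nlinarith

lemma enorm_le_eLpNorm_cond_of_mem_polyFun {k : ℕ} {P : ℝ → E} (hP : P ∈ polyFun E (k + 1))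
    {c r y τ : ℝ} (hr : 0 < r) (hτ : 1 ≤ τ) (hy : |y - c| ≤ τ * r) {p : ℝ≥0∞} (hp : 1 ≤ p) :
    ‖P y‖ₑ ≤ ENNReal.ofReal ((2 * (k + 1)) ^ (k + 2) * τ ^ k) *
      eLpNorm P p volume[|Icc (c - r) (c + r)] := by
  have := isProbabilityMeasure_cond_Icc (show c - r < c + r by linarith)
  refine (enorm_le_lintegral_cond_of_mem_polyFun hP hr hτ hy).trans ?_
  rw [← eLpNorm_one_eq_lintegral_enorm]
  gcongr
  exact eLpNorm_le_eLpNorm_of_exponent_le hp (continuous_of_mem_polyFun hP).aestronglyMeasurable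

end PolynomialFunctions

section SelfImprovement

open scoped ProbabilityTheory Topology
open Filter (Tendsto atTop)

lemma tendsto_lintegral_cond_Icc_enorm_sub {E : Type*} [NormedAddCommGroup E] {g : ℝ → E} {t : ℝ}
    (hg : ContinuousAt g t) {a b : ℕ → ℝ} (hab : ∀ j, a j < b j) (ha : Tendsto a atTop (𝓝 t))
    (hb : Tendsto b atTop (𝓝 t)) :
    Tendsto (fun j ↦ ∫⁻ x, ‖g t - g x‖ₑ ∂volume[|Icc (a j) (b j)]) atTop (𝓝 0) := by
  refine ENNReal.tendsto_nhds_zero.2 fun ε hε ↦ ?_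
  have near : ∀ᶠ x in 𝓝 t, ‖g t - g x‖ₑ < ε := by
    have : ContinuousAt (fun x ↦ ‖g t - g x‖ₑ) t := by fun_prop
    exact this.eventually_lt continuousAt_const (by simpa using hε)
  filter_upwards [(ha.Icc hb).eventually (Filter.eventually_smallSets_subset.2 near)] with j hj
  have := isProbabilityMeasure_cond_Icc (hab j)
  calc ∫⁻ x, ‖g t - g x‖ₑ ∂volume[|Icc (a j) (b j)]
      ≤ ∫⁻ _x, ε ∂volume[|Icc (a j) (b j)] := by
        refine lintegral_mono_ae ?_
        filter_upwards [ProbabilityTheory.ae_cond_mem measurableSet_Icc] with x hx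
        exact (hj hx).le
    _ = ε := by simp

lemma lintegral_cond_Icc_maximalFunction_indicator_sq_le {W : ℝ → ℝ≥0∞} (hW : Measurable W)
    (u v : ℝ) :
    ∫⁻ t, maximalFunction ((Icc u v).indicator W) t ^ (2 : ℝ) ∂volume[|Icc u v] ≤
      40 * ∫⁻ t, W t ^ (2 : ℝ) ∂volume[|Icc u v] := by
  have strong := lintegral_maximalFunction_rpow_le
    (hW.indicator (measurableSet_Icc (a := u) (b := v))) (one_lt_two (α := ℝ))
  rw [show (2 : ℝ) * 10 * (2 - 1)⁻¹ * 2 ^ ((2 : ℝ) - 1) = 40 by norm_num,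
    ENNReal.ofReal_ofNat] at strong
  have hind : ∫⁻ t, (Icc u v).indicator W t ^ (2 : ℝ) = ∫⁻ t in Icc u v, W t ^ (2 : ℝ) := by
    rw [← lintegral_indicator measurableSet_Icc]
    congr with t
    by_cases ht : t ∈ Icc u v <;> simp [ht]
  rw [lintegral_cond_Icc, lintegral_cond_Icc, mul_left_comm]
  gcongr
  exact (setLIntegral_le_lintegral _ _).trans (hind ▸ strong)

lemma ae_cond_Icc_mem_Ioo (u v : ℝ) : ∀ᵐ t ∂volume[|Icc u v], t ∈ Ioo u v := by
  refine Measure.smul_absolutelyContinuous.ae_le ?_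
  rw [← restrict_Ioo_eq_restrict_Icc]
  exact ae_restrict_mem measurableSet_Ioo

lemma eLpNorm_cond_Icc_le_of_enorm_le_maximalFunction {p : ℝ} (hp : 0 < p) {E : Type*}
    [NormedAddCommGroup E] {f : ℝ → E} {W : ℝ → ℝ≥0∞} (hW : Measurable W) {D : ℝ≥0∞} {u v : ℝ}
    (h : ∀ t ∈ Ioo u v, ‖f t‖ₑ ≤ D * maximalFunction ((Icc u v).indicator W) t ^ (2 * p⁻¹)) :
    eLpNorm f (ENNReal.ofReal p) volume[|Icc u v] ≤
      D * (40 * ∫⁻ t, W t ^ (2 : ℝ) ∂volume[|Icc u v]) ^ p⁻¹ := by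
  have pointwise : ∀ᵐ t ∂volume[|Icc u v], ‖f t‖ₑ ^ p ≤
      D ^ p * maximalFunction ((Icc u v).indicator W) t ^ (2 : ℝ) := by
    filter_upwards [ae_cond_Icc_mem_Ioo u v] with t ht
    refine (ENNReal.rpow_le_rpow (h t ht) hp.le).trans_eq ?_
    rw [ENNReal.mul_rpow_of_nonneg _ _ hp.le, ← ENNReal.rpow_mul, mul_assoc,
      inv_mul_cancel₀ hp.ne', mul_one]
  rw [eLpNorm_eq_lintegral_rpow_enorm_toReal (by simpa using hp) ENNReal.ofReal_ne_top,
    ENNReal.toReal_ofReal hp.le, one_div, ENNReal.rpow_inv_le_iff hp,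
    ENNReal.mul_rpow_of_nonneg _ _ hp.le, ENNReal.rpow_inv_rpow hp.ne']
  refine (lintegral_mono_ae pointwise).trans ?_
  rw [lintegral_const_mul _ ((measurable_maximalFunction _).pow_const _)]
  gcongr
  exact lintegral_cond_Icc_maximalFunction_indicator_sq_le hW u v

variable {E : Type*} [NormedAddCommGroup E] [NormedSpace ℝ E]

/-- `g` is within `c` of the polynomials of degree less than `n`, in the normalized `L^p` norm on
`[u, v]`. -/
def HasPolyApprox (n : ℕ) (p : ℝ≥0∞) (g : ℝ → E) (u v : ℝ) (c : ℝ≥0∞) : Prop :=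
  ∃ P ∈ polyFun E n, eLpNorm (g - P) p volume[|Icc u v] ≤ c

lemma enorm_le_lintegral_cond_Icc_of_mem_polyFun {k : ℕ} {P : ℝ → E} (hP : P ∈ polyFun E (k + 1))
    {u v t : ℝ} (huv : u < v) (ht : t ∈ Icc u v) :
    ‖P t‖ₑ ≤ ENNReal.ofReal ((2 * (k + 1)) ^ (k + 2)) * ∫⁻ x, ‖P x‖ₑ ∂volume[|Icc u v] := by
  have h := enorm_le_lintegral_cond_of_mem_polyFun hP (c := (u + v) / 2) (r := (v - u) / 2) (y := t)
    (by linarith) le_rfl (by rw [one_mul, abs_le]; constructor <;> linarith [ht.1, ht.2])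
  rwa [one_pow, mul_one, show (u + v) / 2 - (v - u) / 2 = u by ring,
    show (u + v) / 2 + (v - u) / 2 = v by ring] at h

lemma enorm_sub_le_lintegral_cond_add_lintegral_cond {k : ℕ} {g P Q : ℝ → E} (hg : Continuous g)
    (hP : P ∈ polyFun E (k + 1)) (hQ : Q ∈ polyFun E (k + 1)) {u v t : ℝ} (huv : u < v)
    (ht : t ∈ Icc u v) :
    ‖P t - Q t‖ₑ ≤ ENNReal.ofReal ((2 * (k + 1)) ^ (k + 2)) *
      (∫⁻ x, ‖P x - g x‖ₑ ∂volume[|Icc u v] + ∫⁻ x, ‖g x - Q x‖ₑ ∂volume[|Icc u v]) := by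
  refine (enorm_le_lintegral_cond_Icc_of_mem_polyFun
    (Submodule.sub_mem _ hP hQ) huv ht).trans (mul_le_mul_right ?_ _)
  rw [← lintegral_add_left
    (show Measurable fun x ↦ ‖P x - g x‖ₑ from
      ((continuous_of_mem_polyFun hP).sub hg).enorm.measurable)]
  refine lintegral_mono fun x ↦ ?_
  rw [Pi.sub_apply, ← sub_add_sub_cancel (P x) (g x) (Q x)]
  exact enorm_add_le _ _

/-- Telescope along the approximating polynomials; the tail vanishes since `g` is continuous. -/
lemma enorm_sub_le_tsum_lintegral_cond {k : ℕ} {g : ℝ → E} (hg : Continuous g) {t : ℝ}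
    {a b : ℕ → ℝ} (hab : ∀ j, a j < b j) (ht : ∀ j, t ∈ Icc (a j) (b j))
    (hsub : ∀ j, Icc (a (j + 1)) (b (j + 1)) ⊆ Icc (a j) (b j))
    (hlen : ∀ j, b j - a j ≤ 2 * (b (j + 1) - a (j + 1)))
    (ha : Tendsto a atTop (𝓝 t)) (hb : Tendsto b atTop (𝓝 t))
    {P : ℕ → ℝ → E} (hP : ∀ j, P j ∈ polyFun E (k + 1)) :
    ‖g t - P 0 t‖ₑ ≤ 4 * ENNReal.ofReal ((2 * (k + 1)) ^ (k + 2)) *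
      ∑' j, ∫⁻ x, ‖g x - P j x‖ₑ ∂volume[|Icc (a j) (b j)] := by
  set C := ENNReal.ofReal ((2 * (k + 1)) ^ (k + 2))
  set e : ℕ → ℝ≥0∞ := fun j ↦ ∫⁻ x, ‖g x - P j x‖ₑ ∂volume[|Icc (a j) (b j)]
  set δ : ℕ → ℝ≥0∞ := fun j ↦ ∫⁻ x, ‖g t - g x‖ₑ ∂volume[|Icc (a j) (b j)]
  have step : ∀ j, ‖P (j + 1) t - P j t‖ₑ ≤ C * (e (j + 1) + 2 * e j) := by
    intro j
    refine (enorm_sub_le_lintegral_cond_add_lintegral_cond hg (hP (j + 1)) (hP j) (hab (j + 1))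
      (ht (j + 1))).trans ?_
    have shrink := lintegral_mono' (cond_Icc_le_smul (hab (j + 1)) (hsub j) (hlen j))
      (le_refl fun x ↦ ‖g x - P j x‖ₑ)
    rw [lintegral_smul_measure, smul_eq_mul, ENNReal.ofReal_ofNat] at shrink
    simp_rw [enorm_sub_rev (P (j + 1) _)]
    gcongr
  have last : ∀ K, ‖g t - P K t‖ₑ ≤ C * (δ K + e K) := fun K ↦
    enorm_sub_le_lintegral_cond_add_lintegral_cond hg (const_mem_polyFun k (g t)) (hP K) (hab K)
      (ht K)
  have telescope : ∀ K, ‖P K t - P 0 t‖ₑ ≤ C * ∑ j ∈ Finset.range K, (e (j + 1) + 2 * e j) := by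
    intro K
    rw [← Finset.sum_range_sub (fun j ↦ P j t), Finset.mul_sum]
    exact (enorm_sum_le _ _).trans (Finset.sum_le_sum fun j _ ↦ step j)
  have bound : ∀ K, ‖g t - P 0 t‖ₑ ≤ C * δ K + 4 * C * ∑' j, e j := by
    intro K
    have head : e K ≤ ∑' j, e j := ENNReal.le_tsum K
    have shifted : ∑ j ∈ Finset.range K, e (j + 1) ≤ ∑' j, e j :=
      (ENNReal.sum_le_tsum _).trans <|
        ENNReal.tsum_comp_le_tsum_of_injective (add_left_injective 1) e
    have unshifted : ∑ j ∈ Finset.range K, e j ≤ ∑' j, e j := ENNReal.sum_le_tsum _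
    calc ‖g t - P 0 t‖ₑ ≤ ‖g t - P K t‖ₑ + ‖P K t - P 0 t‖ₑ := by
          rw [← sub_add_sub_cancel (g t) (P K t) (P 0 t)]; exact enorm_add_le _ _
      _ ≤ C * (δ K + e K) + C * ∑ j ∈ Finset.range K, (e (j + 1) + 2 * e j) :=
          add_le_add (last K) (telescope K)
      _ ≤ C * (δ K + ∑' j, e j) + C * (∑' j, e j + 2 * ∑' j, e j) := by
          rw [Finset.sum_add_distrib, ← Finset.mul_sum]
          gcongr
      _ = C * δ K + 4 * C * ∑' j, e j := by ring
  refine ge_of_tendsto' (x := atTop) ?_ bound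
  have hδ0 := tendsto_lintegral_cond_Icc_enorm_sub hg.continuousAt hab ha hb
  simpa using (ENNReal.Tendsto.const_mul hδ0 (.inr (ENNReal.ofReal_ne_top))).add_const
    (4 * C * ∑' j, e j)

lemma lintegral_le_lintegral_sq_rpow {α : Type*} [MeasurableSpace α] {μ : Measure α}
    [IsProbabilityMeasure μ] {W : α → ℝ≥0∞} (hW : Measurable W) :
    ∫⁻ x, W x ∂μ ≤ (∫⁻ x, W x ^ (2 : ℝ) ∂μ) ^ (1 / 2 : ℝ) := by
  have := eLpNorm_le_eLpNorm_of_exponent_le (μ := μ) (one_le_two : (1 : ℝ≥0∞) ≤ 2)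
    hW.aestronglyMeasurable
  simpa [eLpNorm_one_eq_lintegral_enorm, eLpNorm_eq_lintegral_rpow_enorm_toReal] using this

lemma exists_rpow_le_lintegral_cond_Icc {H : ℝ → ℝ≥0∞} (hH : Measurable H) {u v : ℝ}
    (huv : u < v) {ρ : ℝ} (hρ : 0 < ρ) :
    ∃ x ∈ Icc u v, H x ≤ (∫⁻ t, H t ^ ρ⁻¹ ∂volume[|Icc u v]) ^ ρ := by
  obtain ⟨x, hx, hle⟩ := exists_le_setLAverage (volume_Icc_ne_zero huv) (by simp)
    (hH.pow_const ρ⁻¹).aemeasurable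
  rw [setLAverage_eq_lintegral_cond, ENNReal.rpow_inv_le_iff hρ] at hle
  exact ⟨x, hx, hle⟩

/-- The scale `2⁻ʲ` loses `2^{js/2}` against the average over the full interval, but gains `2^{-js}`
from the approximation rate. -/
lemma lintegral_cond_Icc_rpow_mul_le {W : ℝ → ℝ≥0∞} {s q : ℝ} (hs : 0 < s) (hq : 0 ≤ q)
    {u v a b t : ℝ} (hsub : Icc a b ⊆ Icc u v) (ht : t ∈ Ioo a b) {j : ℕ}
    (hlen : b - a = (1 / 2) ^ j * (v - u)) :
    (∫⁻ x, W x ∂volume[|Icc a b]) ^ (q + s / 2) * ENNReal.ofReal (b - a) ^ s ≤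
      (2⁻¹ ^ (s / 2)) ^ j * (ENNReal.ofReal (v - u) ^ s *
        (∫⁻ x, W x ∂volume[|Icc u v]) ^ (s / 2) *
          maximalFunction ((Icc u v).indicator W) t ^ q) := by
  set A := ∫⁻ x, W x ∂volume[|Icc u v]
  have small_le_max : ∫⁻ x, W x ∂volume[|Icc a b] ≤
      maximalFunction ((Icc u v).indicator W) t := by
    refine le_trans (le_of_eq ?_) (setLAverage_le_maximalFunction _ ht)
    rw [setLAverage_eq_lintegral_cond]
    refine lintegral_congr_ae ?_
    filter_upwards [ProbabilityTheory.ae_cond_mem measurableSet_Icc] with x hx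
    rw [indicator_of_mem (hsub hx)]
  have small_le_large : ∫⁻ x, W x ∂volume[|Icc a b] ≤ 2 ^ j * A := by
    have h := cond_Icc_le_smul (K := 2 ^ j) (ht.1.trans ht.2) hsub (le_of_eq (by
      rw [hlen, ← mul_assoc, ← mul_pow]
      norm_num))
    have := lintegral_mono' h (le_refl W)
    rwa [lintegral_smul_measure, smul_eq_mul, ENNReal.ofReal_pow zero_le_two,
      ENNReal.ofReal_ofNat] at this
  have hscale : ENNReal.ofReal (b - a) = 2⁻¹ ^ j * ENNReal.ofReal (v - u) := by
    rw [hlen, ENNReal.ofReal_mul (by positivity), ENNReal.ofReal_pow (by positivity), one_div,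
      ENNReal.ofReal_inv_of_pos two_pos, ENNReal.ofReal_ofNat]
  have geometric : ((2 : ℝ≥0∞) ^ j) ^ (s / 2) * (2⁻¹ ^ j) ^ s = (2⁻¹ ^ (s / 2)) ^ j := by
    have cancel : ((2 : ℝ≥0∞) ^ j) ^ (s / 2) * (2⁻¹ ^ j) ^ (s / 2) = 1 := by
      rw [← ENNReal.mul_rpow_of_nonneg _ _ (by positivity), ← mul_pow,
        ENNReal.mul_inv_cancel two_ne_zero ENNReal.ofNat_ne_top, one_pow, ENNReal.one_rpow]
    nth_rw 2 [← add_halves s]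
    rw [ENNReal.rpow_add_of_nonneg _ _ (by positivity) (by positivity), ← mul_assoc, cancel,
      one_mul, ← ENNReal.rpow_natCast, ← ENNReal.rpow_natCast, ← ENNReal.rpow_mul,
      ← ENNReal.rpow_mul, mul_comm]
  calc (∫⁻ x, W x ∂volume[|Icc a b]) ^ (q + s / 2) * ENNReal.ofReal (b - a) ^ s
      ≤ maximalFunction ((Icc u v).indicator W) t ^ q * (2 ^ j * A) ^ (s / 2) *
          (2⁻¹ ^ j * ENNReal.ofReal (v - u)) ^ s := by
        rw [ENNReal.rpow_add_of_nonneg _ _ hq (by positivity), hscale]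
        gcongr
    _ = ((2 ^ j) ^ (s / 2) * (2⁻¹ ^ j) ^ s) * (ENNReal.ofReal (v - u) ^ s * A ^ (s / 2) *
          maximalFunction ((Icc u v).indicator W) t ^ q) := by
        rw [ENNReal.mul_rpow_of_nonneg _ _ (by positivity), ENNReal.mul_rpow_of_nonneg _ _ hs.le]
        ring
    _ = _ := by rw [geometric]

/-- The constant in the pointwise bound `enorm_sub_le_maximalFunction`: telescoping costs the first
factor, the geometric series the second. -/
noncomputable def telescopeConst (k : ℕ) (s : ℝ) : ℝ≥0∞ :=
  4 * ENNReal.ofReal ((2 * (k + 1)) ^ (k + 2)) * (1 - 2⁻¹ ^ (s / 2))⁻¹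

lemma telescopeConst_ne_top (k : ℕ) {s : ℝ} (hs : 0 < s) : telescopeConst k s ≠ ∞ := by
  have : (2⁻¹ : ℝ≥0∞) ^ (s / 2) < 1 := ENNReal.rpow_lt_one (by simp) (by positivity)
  refine ENNReal.mul_ne_top (ENNReal.mul_ne_top (by simp) (by simp)) ?_
  simpa [tsub_eq_zero_iff_le] using this

lemma enorm_sub_le_maximalFunction {k : ℕ} {s q : ℝ} (hs : 0 < s) (hq : 0 ≤ q) {g : ℝ → E}
    (hg : Continuous g) {W : ℝ → ℝ≥0∞} {P : ℝ → ℝ → ℝ → E}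
    (hP : ∀ a b, a < b → P a b ∈ polyFun E (k + 1))
    (hPg : ∀ a b, a < b → ∫⁻ x, ‖g x - P a b x‖ₑ ∂volume[|Icc a b] ≤
      (∫⁻ x, W x ∂volume[|Icc a b]) ^ (q + s / 2) * ENNReal.ofReal (b - a) ^ s)
    {u v t : ℝ} (ht : t ∈ Ioo u v) :
    ‖g t - P u v t‖ₑ ≤ telescopeConst k s * (ENNReal.ofReal (v - u) ^ s *
      (∫⁻ x, W x ∂volume[|Icc u v]) ^ (s / 2) *
        maximalFunction ((Icc u v).indicator W) t ^ q) := by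
  obtain ⟨hut, htv⟩ := ht
  let a : ℕ → ℝ := fun j ↦ t - (1 / 2) ^ j * (t - u)
  let b : ℕ → ℝ := fun j ↦ t + (1 / 2) ^ j * (v - t)
  have mem : ∀ j, t ∈ Ioo (a j) (b j) := fun j ↦
    ⟨sub_lt_self _ (mul_pos (by positivity) (by linarith)),
      lt_add_of_pos_right _ (mul_pos (by positivity) (by linarith))⟩
  have hab : ∀ j, a j < b j := fun j ↦ (mem j).1.trans (mem j).2
  have hlen : ∀ j, b j - a j = (1 / 2) ^ j * (v - u) := fun j ↦ by simp only [a, b]; ring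
  have pow_tendsto : Tendsto (fun j : ℕ ↦ (1 / 2 : ℝ) ^ j) atTop (𝓝 0) :=
    tendsto_pow_atTop_nhds_zero_of_lt_one (by norm_num) (by norm_num)
  have ha : Tendsto a atTop (𝓝 t) := by
    have := (pow_tendsto.mul_const (t - u)).const_sub t
    rwa [zero_mul, sub_zero] at this
  have hb : Tendsto b atTop (𝓝 t) := by
    have := (pow_tendsto.mul_const (v - t)).const_add t
    rwa [zero_mul, add_zero] at this
  have anti : ∀ i j : ℕ, i ≤ j → Icc (a j) (b j) ⊆ Icc (a i) (b i) := fun i j hij ↦ by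
    have : (1 / 2 : ℝ) ^ j ≤ (1 / 2) ^ i := pow_le_pow_of_le_one (by norm_num) (by norm_num) hij
    exact Icc_subset_Icc (by simp only [a]; nlinarith) (by simp only [b]; nlinarith)
  have ha0 : a 0 = u := by simp [a]
  have hb0 : b 0 = v := by simp [b]
  have telescope := enorm_sub_le_tsum_lintegral_cond hg hab (fun j ↦ Ioo_subset_Icc_self (mem j))
    (fun j ↦ anti j (j + 1) j.le_succ) (fun j ↦ by rw [hlen, hlen, pow_succ]; linarith)
    ha hb
    (P := fun j ↦ P (a j) (b j)) (fun j ↦ hP _ _ (hab j))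
  simp only [ha0, hb0] at telescope
  refine telescope.trans ?_
  rw [telescopeConst, mul_assoc _ (1 - _)⁻¹, ← ENNReal.tsum_geometric, ← ENNReal.tsum_mul_right]
  gcongr with j
  refine (hPg _ _ (hab j)).trans (lintegral_cond_Icc_rpow_mul_le hs hq ?_ (mem j) (hlen j))
  simpa only [ha0, hb0] using anti 0 j j.zero_le

theorem hasPolyApprox_self_improvement {k : ℕ} {s p : ℝ} (hs : 0 < s) (hp : 0 < p) {g : ℝ → E}
    (hg : Continuous g) {H : ℝ → ℝ≥0∞} (hH : Measurable H)
    (h : ∀ x u v, u < v → x ∈ Icc u v →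
      HasPolyApprox (k + 1) 1 g u v (H x * ENNReal.ofReal (v - u) ^ s))
    {u v : ℝ} (huv : u < v) :
    HasPolyApprox (k + 1) (ENNReal.ofReal p) g u v
      (telescopeConst k s * 40 ^ p⁻¹ * ENNReal.ofReal (v - u) ^ s *
        (∫⁻ t, H t ^ (p⁻¹ + s / 4)⁻¹ ∂volume[|Icc u v]) ^ (p⁻¹ + s / 4)) := by
  set W : ℝ → ℝ≥0∞ := fun t ↦ H t ^ (2 * p⁻¹ + s / 2)⁻¹
  have hW : Measurable W := hH.pow_const _
  have select : ∀ a b, a < b → ∃ P ∈ polyFun E (k + 1), ∫⁻ x, ‖g x - P x‖ₑ ∂volume[|Icc a b] ≤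
      (∫⁻ x, W x ∂volume[|Icc a b]) ^ (2 * p⁻¹ + s / 2) * ENNReal.ofReal (b - a) ^ s := by
    intro a b hab
    obtain ⟨x, hx, hHx⟩ := exists_rpow_le_lintegral_cond_Icc hH hab
      (show 0 < 2 * p⁻¹ + s / 2 by positivity)
    obtain ⟨P, hP, hle⟩ := h x a b hab hx
    rw [eLpNorm_one_eq_lintegral_enorm] at hle
    exact ⟨P, hP, hle.trans (by gcongr)⟩
  choose! P hP hPg using select
  have := isProbabilityMeasure_cond_Icc huv
  set A := ∫⁻ x, W x ∂volume[|Icc u v]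
  set B := ∫⁻ x, W x ^ (2 : ℝ) ∂volume[|Icc u v]
  have hBH : B = ∫⁻ t, H t ^ (p⁻¹ + s / 4)⁻¹ ∂volume[|Icc u v] := by
    refine lintegral_congr fun t ↦ ?_
    rw [← ENNReal.rpow_mul, show (2 * p⁻¹ + s / 2)⁻¹ * 2 = (p⁻¹ + s / 4)⁻¹ by field_simp; ring]
  have jensen : A ^ (s / 2) ≤ B ^ (s / 4) := by
    rw [show s / 4 = 1 / 2 * (s / 2) by ring, ENNReal.rpow_mul]
    gcongr
    exact lintegral_le_lintegral_sq_rpow hW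
  refine ⟨P u v, hP u v huv, ?_⟩
  calc eLpNorm (g - P u v) (ENNReal.ofReal p) volume[|Icc u v]
      ≤ telescopeConst k s * (ENNReal.ofReal (v - u) ^ s * A ^ (s / 2)) * (40 * B) ^ p⁻¹ := by
        refine eLpNorm_cond_Icc_le_of_enorm_le_maximalFunction hp hW fun t ht ↦ ?_
        rw [mul_assoc]
        exact enorm_sub_le_maximalFunction hs (by positivity) hg hP hPg ht
    _ ≤ telescopeConst k s * (ENNReal.ofReal (v - u) ^ s * B ^ (s / 4)) * (40 * B) ^ p⁻¹ := by
        gcongr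
    _ = telescopeConst k s * 40 ^ p⁻¹ * ENNReal.ofReal (v - u) ^ s * B ^ (p⁻¹ + s / 4) := by
        rw [ENNReal.mul_rpow_of_nonneg _ _ (by positivity),
          ENNReal.rpow_add_of_nonneg _ _ (by positivity) (by positivity)]
        ring
    _ = _ := by rw [hBH]

end SelfImprovement

section ExponentialKernel

lemma e2pi_add (x y : ℝ) : e2pi (x + y) = e2pi x * e2pi y := by
  simp only [e2pi, ← Complex.exp_add]
  congr 1
  push_cast
  ring

@[simp]
lemma norm_e2pi (x : ℝ) : ‖e2pi x‖ = 1 := by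
  rw [e2pi, show 2 * (π : ℂ) * Complex.I * x = ((2 * π * x : ℝ) : ℂ) * Complex.I by push_cast; ring]
  exact Complex.norm_exp_ofReal_mul_I _

@[simp]
lemma e2pi_zero : e2pi 0 = 1 := by simp [e2pi]

lemma continuous_e2pi : Continuous e2pi := by unfold e2pi; fun_prop

lemma fourier_eq_integral_e2pi (f : ℝ → ℂ) (ξ : ℝ) : 𝓕 f ξ = ∫ t, e2pi (-(ξ * t)) * f t := by
  rw [Real.fourier_real_eq_integral_exp_smul]
  congr with t
  rw [smul_eq_mul, e2pi]
  congr 2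
  push_cast
  ring

lemma fourierInv_eq_integral_e2pi (f : ℝ → ℂ) (ξ : ℝ) : 𝓕⁻ f ξ = ∫ t, e2pi (ξ * t) * f t := by
  rw [Real.fourierInv_eq']
  congr with t
  rw [smul_eq_mul, e2pi]
  congr 2
  simp only [RCLike.inner_apply, conj_trivial]
  push_cast
  ring

end ExponentialKernel

section SpectrumInInterval

lemma deriv_eq_zero_of_support_subset_Ioo {F : ℝ → ℂ} (hF : Differentiable ℝ F) {a b ξ : ℝ}
    (hsupp : support F ⊆ Ioo a b) (hξ : ξ ∉ Ioo a b) : deriv F ξ = 0 := by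
  have zero {x} (hx : x ∉ Ioo a b) : F x = 0 := notMem_support.1 fun h ↦ hx (hsupp h)
  have hd := (hF ξ).hasDerivAt
  rw [mem_Ioo, not_and_or, not_lt, not_lt] at hξ
  rcases hξ with hξ | hξ
  · exact (uniqueDiffWithinAt_Iic ξ).eq_deriv _ hd.hasDerivWithinAt <|
      (hasDerivWithinAt_const ξ (Iic ξ) 0).congr
        (fun y hy ↦ zero fun h ↦ absurd h.1 (not_lt.2 (hy.trans hξ)))
        (zero fun h ↦ absurd h.1 (not_lt.2 hξ))
  · exact (uniqueDiffWithinAt_Ici ξ).eq_deriv _ hd.hasDerivWithinAt <|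
      (hasDerivWithinAt_const ξ (Ici ξ) 0).congr
        (fun y hy ↦ zero fun h ↦ absurd h.2 (not_lt.2 (hξ.trans hy)))
        (zero fun h ↦ absurd h.2 (not_lt.2 hξ))

/-- The Schwartz function `x ↦ (y - x) η x`. -/
noncomputable def mulSubCoord (y : ℝ) (η : SchwartzMap ℝ ℂ) : SchwartzMap ℝ ℂ :=
  SchwartzMap.smulLeftCLM ℂ (fun x : ℝ ↦ y - x) η

lemma mulSubCoord_apply (y : ℝ) (η : SchwartzMap ℝ ℂ) (x : ℝ) :
    mulSubCoord y η x = ((y - x : ℝ) : ℂ) * η x := by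
  rw [mulSubCoord, SchwartzMap.smulLeftCLM_apply_apply (by fun_prop)]
  simp

lemma iterate_mulSubCoord_apply (y : ℝ) (n : ℕ) (η : SchwartzMap ℝ ℂ) (x : ℝ) :
    (mulSubCoord y)^[n] η x = ((y - x : ℝ) : ℂ) ^ n * η x := by
  induction n with
  | zero => simp
  | succ n ih => rw [iterate_succ_apply', mulSubCoord_apply, ih, pow_succ', mul_assoc]

lemma hasDerivAt_fourier_mulSubCoord_zero (η : SchwartzMap ℝ ℂ) (ξ : ℝ) :
    HasDerivAt (𝓕 (η : ℝ → ℂ)) (2 * π * Complex.I * 𝓕 (mulSubCoord 0 η : ℝ → ℂ) ξ) ξ := by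
  have hx : Integrable fun x : ℝ ↦ x • η x := by
    refine (mulSubCoord 0 η).integrable.neg.congr (.of_forall fun x ↦ ?_)
    simp [mulSubCoord_apply]
  refine (Real.hasDerivAt_fourier η.integrable hx ξ).congr_deriv ?_
  rw [fourier_eq_integral_e2pi, fourier_eq_integral_e2pi, ← integral_const_mul]
  congr with t
  rw [mulSubCoord_apply, smul_eq_mul]
  push_cast
  ring

lemma support_fourier_mulSubCoord_subset {η : SchwartzMap ℝ ℂ} {a b : ℝ}
    (hη : support (𝓕 (η : ℝ → ℂ)) ⊆ Ioo a b) (y : ℝ) :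
    support (𝓕 (mulSubCoord y η : ℝ → ℂ)) ⊆ Ioo a b := by
  refine support_subset_iff'.2 fun ξ hξ ↦ ?_
  have hη0 : 𝓕 (η : ℝ → ℂ) ξ = 0 := notMem_support.1 fun h ↦ hξ (hη h)
  have hcoord : 𝓕 (mulSubCoord 0 η : ℝ → ℂ) ξ = 0 := by
    have hderiv := (hasDerivAt_fourier_mulSubCoord_zero η ξ).deriv
    rw [deriv_eq_zero_of_support_subset_Ioo
      (fun ξ ↦ (hasDerivAt_fourier_mulSubCoord_zero η ξ).differentiableAt) hη hξ] at hderiv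
    exact (mul_eq_zero.1 hderiv.symm).resolve_left (by simp [Real.pi_ne_zero])
  have hsplit : mulSubCoord y η = (y : ℂ) • η + mulSubCoord 0 η := by
    ext x
    simp only [mulSubCoord_apply, add_apply, smul_apply, smul_eq_mul]
    push_cast
    ring
  rw [hsplit, ← SchwartzMap.fourier_coe, FourierTransform.fourier_add,
    FourierTransform.fourier_smul, add_apply, smul_apply,
    SchwartzMap.fourier_coe, SchwartzMap.fourier_coe, hη0, hcoord, smul_zero, add_zero]

lemma support_fourier_iterate_mulSubCoord_subset {η : SchwartzMap ℝ ℂ} {a b : ℝ}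
    (hη : support (𝓕 (η : ℝ → ℂ)) ⊆ Ioo a b) (y : ℝ) (n : ℕ) :
    support (𝓕 ((mulSubCoord y)^[n] η : ℝ → ℂ)) ⊆ Ioo a b := by
  induction n with
  | zero => exact hη
  | succ n ih =>
    rw [iterate_succ_apply']
    exact support_fourier_mulSubCoord_subset ih y

lemma support_fourier_derivCLM_subset {η : SchwartzMap ℝ ℂ} {S : Set ℝ}
    (hη : support (𝓕 (η : ℝ → ℂ)) ⊆ S) :
    support (𝓕 (SchwartzMap.derivCLM ℂ ℂ η : ℝ → ℂ)) ⊆ S := by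
  refine support_subset_iff'.2 fun ξ hξ ↦ ?_
  have hderiv : (SchwartzMap.derivCLM ℂ ℂ η : ℝ → ℂ) = deriv η := by
    ext x
    rw [SchwartzMap.derivCLM_apply]
  have hη0 : 𝓕 (η : ℝ → ℂ) ξ = 0 := notMem_support.1 fun h ↦ hξ (hη h)
  rw [hderiv, Real.fourier_deriv η.integrable η.differentiable
    (by rw [← hderiv]; exact SchwartzMap.integrable _)]
  simp only [hη0, smul_zero]

lemma support_fourier_iterate_derivCLM_subset {η : SchwartzMap ℝ ℂ} {S : Set ℝ}
    (hη : support (𝓕 (η : ℝ → ℂ)) ⊆ S) (n : ℕ) :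
    support (𝓕 ((SchwartzMap.derivCLM ℂ ℂ)^[n] η : ℝ → ℂ)) ⊆ S := by
  induction n with
  | zero => exact hη
  | succ n ih =>
    rw [iterate_succ_apply']
    exact support_fourier_derivCLM_subset ih

lemma integral_pow_mul_eq_zero_of_support_fourier_subset {θ : SchwartzMap ℝ ℂ} {a b : ℝ}
    (hθ : support (𝓕 (θ : ℝ → ℂ)) ⊆ Ioo a b) (h0 : (0 : ℝ) ∉ Ioo a b) (y : ℝ) (n : ℕ) :
    ∫ t : ℝ, (t : ℂ) ^ n * θ (y - t) = 0 := by
  have hspec := support_fourier_iterate_mulSubCoord_subset hθ y n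
  have hzero : 𝓕 ((mulSubCoord y)^[n] θ : ℝ → ℂ) 0 = 0 := notMem_support.1 fun h ↦ h0 (hspec h)
  rw [fourier_eq_integral_e2pi] at hzero
  rw [← integral_sub_left_eq_self _ _ y, ← hzero]
  simp [iterate_mulSubCoord_apply]

end SpectrumInInterval

section FrequencyPiece

lemma exists_schwartzMap_eq_phim (η : SchwartzMap ℝ ℂ) {a b : ℝ} (hab : a < b) :
    ∃ θ : SchwartzMap ℝ ℂ, ⇑θ = phim η a b ∧
      ∀ ξ, 𝓕 (θ : ℝ → ℂ) ξ = 𝓕 (η : ℝ → ℂ) ((ξ - a) / (b - a)) := by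
  have hL : 0 < b - a := sub_pos.2 hab
  obtain ⟨ψ, hψ⟩ : ∃ ψ : SchwartzMap ℝ ℂ, ∀ ξ, ψ ξ = 𝓕 (η : ℝ → ℂ) ((ξ - a) / (b - a)) := by
    refine ⟨SchwartzMap.compSubConstCLM ℂ a (SchwartzMap.compCLMOfContinuousLinearEquiv ℂ
      (ContinuousLinearEquiv.unitsEquivAut ℝ (Units.mk0 (b - a)⁻¹ (inv_ne_zero hL.ne'))) (𝓕 η)),
      fun ξ ↦ ?_⟩
    simp [SchwartzMap.fourier_coe, div_eq_mul_inv]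
  refine ⟨𝓕⁻ ψ, funext fun x ↦ ?_, fun ξ ↦ ?_⟩
  · set G : ℝ → ℂ := fun w ↦ e2pi (a * x) * (e2pi ((b - a) * x * w) * 𝓕 (η : ℝ → ℂ) w) with hG
    have hchange (t : ℝ) :
        e2pi (x * (t + a)) * 𝓕 (η : ℝ → ℂ) ((t + a - a) / (b - a)) = G (t / (b - a)) := by
      rw [add_sub_cancel_right,
        show x * (t + a) = a * x + (b - a) * x * (t / (b - a)) by field_simp; ring, e2pi_add]
      exact mul_assoc _ _ _
    have hinv : 𝓕⁻ (𝓕 (η : ℝ → ℂ)) = η := by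
      rw [← SchwartzMap.fourier_coe, ← SchwartzMap.fourierInv_coe,
        FourierTransform.fourierInv_fourier_eq]
    rw [SchwartzMap.fourierInv_coe, fourierInv_eq_integral_e2pi]
    simp_rw [hψ]
    rw [← integral_add_right_eq_self _ a]
    simp_rw [hchange]
    rw [Measure.integral_comp_div, hG, integral_const_mul, ← fourierInv_eq_integral_e2pi, hinv,
      phim, abs_of_pos hL, Complex.real_smul, mul_assoc]
  · rw [← SchwartzMap.fourier_coe, FourierTransform.fourier_fourierInv_eq, hψ]

/-- The Schwartz function whose underlying function is `phim η a b`. -/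
noncomputable def phimSchwartz (η : SchwartzMap ℝ ℂ) {a b : ℝ} (hab : a < b) : SchwartzMap ℝ ℂ :=
  (exists_schwartzMap_eq_phim η hab).choose

lemma coe_phimSchwartz (η : SchwartzMap ℝ ℂ) {a b : ℝ} (hab : a < b) :
    ⇑(phimSchwartz η hab) = phim η a b :=
  (exists_schwartzMap_eq_phim η hab).choose_spec.1

lemma fourier_phimSchwartz (η : SchwartzMap ℝ ℂ) {a b : ℝ} (hab : a < b) (ξ : ℝ) :
    𝓕 (phimSchwartz η hab : ℝ → ℂ) ξ = 𝓕 (η : ℝ → ℂ) ((ξ - a) / (b - a)) :=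
  (exists_schwartzMap_eq_phim η hab).choose_spec.2 ξ

lemma support_fourier_phimSchwartz_subset {η : SchwartzMap ℝ ℂ}
    (hη : support (𝓕 (η : ℝ → ℂ)) ⊆ Ioo 0 1) {a b : ℝ} (hab : a < b) :
    support (𝓕 (phimSchwartz η hab : ℝ → ℂ)) ⊆ Ioo a b := by
  intro ξ hξ
  rw [mem_support, fourier_phimSchwartz] at hξ
  obtain ⟨h0, h1⟩ := hη hξ
  have hL : 0 < b - a := sub_pos.2 hab
  rw [lt_div_iff₀ hL] at h0
  rw [div_lt_one hL] at h1
  constructor <;> linarith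

lemma pairwise_disjoint_support_fourier_phimSchwartz {η : SchwartzMap ℝ ℂ}
    (hη : support (𝓕 (η : ℝ → ℂ)) ⊆ Ioo 0 1) {N : ℕ} {a b : Fin N → ℝ} (hab : Admissible a b) :
    Pairwise (Disjoint on fun m ↦ support (𝓕 (phimSchwartz η (hab.1 m) : ℝ → ℂ))) :=
  fun m m' hmm ↦ (hab.2.2 m m' hmm).mono
    ((support_fourier_phimSchwartz_subset hη _).trans Ioo_subset_Icc_self)
    ((support_fourier_phimSchwartz_subset hη _).trans Ioo_subset_Icc_self)

lemma integral_norm_phim_sq (η : ℝ → ℂ) {a b : ℝ} (hab : a < b) :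
    ∫ x, ‖phim η a b x‖ ^ 2 = (b - a) * ∫ x, ‖η x‖ ^ 2 := by
  have hL : 0 < b - a := sub_pos.2 hab
  have hdil (x : ℝ) :
      ‖phim η a b x‖ ^ 2 = (fun w ↦ (b - a) ^ 2 * ‖η w‖ ^ 2) ((b - a) * x) := by
    simp only [phim, norm_mul, norm_e2pi, Complex.norm_real, Real.norm_eq_abs, abs_of_pos hL]
    ring
  simp_rw [hdil]
  rw [Measure.integral_comp_mul_left (fun w ↦ (b - a) ^ 2 * ‖η w‖ ^ 2), integral_const_mul,
    abs_of_pos (inv_pos.2 hL), smul_eq_mul]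
  field_simp

end FrequencyPiece

section Bessel

lemma sum_inv_norm_sq_mul_norm_inner_sq_le {ι E : Type*} [Fintype ι] [NormedAddCommGroup E]
    [InnerProductSpace ℂ E] {v : ι → E} (hv : Pairwise fun m m' ↦ inner ℂ (v m) (v m') = 0)
    (x : E) : ∑ m, (‖v m‖ ^ 2)⁻¹ * ‖inner ℂ (v m) x‖ ^ 2 ≤ ‖x‖ ^ 2 := by
  classical
  have hon : Orthonormal ℂ fun m : {m // v m ≠ 0} ↦ ((‖v m‖⁻¹ : ℝ) : ℂ) • v m := by
    refine ⟨fun m ↦ ?_, fun m m' hmm ↦ ?_⟩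
    · simp [norm_smul, m.2]
    · simp only [inner_smul_left, inner_smul_right, hv (Subtype.coe_ne_coe.2 hmm), mul_zero]
  have hterm (m : ι) : (‖v m‖ ^ 2)⁻¹ * ‖inner ℂ (v m) x‖ ^ 2 =
      ‖inner ℂ (((‖v m‖⁻¹ : ℝ) : ℂ) • v m) x‖ ^ 2 := by
    rw [inner_smul_left, norm_mul, mul_pow]
    simp
  have hsub : ∑ m, (‖v m‖ ^ 2)⁻¹ * ‖inner ℂ (v m) x‖ ^ 2 =
      ∑ m : {m // v m ≠ 0}, ‖inner ℂ (((‖v m‖⁻¹ : ℝ) : ℂ) • v m) x‖ ^ 2 := by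
    simp_rw [hterm]
    exact (Fintype.sum_of_injective Subtype.val Subtype.val_injective _ _
      (fun m hm ↦ by simp [not_not.1 fun hv0 ↦ hm ⟨⟨m, hv0⟩, rfl⟩]) fun _ ↦ rfl).symm
  rw [hsub]
  exact hon.sum_inner_products_le (s := Finset.univ) x

lemma inner_toLp_eq_zero_of_disjoint_support_fourier {θ θ' : SchwartzMap ℝ ℂ}
    (h : Disjoint (support (𝓕 (θ : ℝ → ℂ))) (support (𝓕 (θ' : ℝ → ℂ)))) :
    inner ℂ (θ.toLp 2) (θ'.toLp 2) = 0 := by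
  rw [← SchwartzMap.inner_fourier_toL2_eq, L2.inner_def, ← integral_zero ℝ ℂ]
  refine integral_congr_ae ?_
  filter_upwards [(𝓕 θ).coeFn_toLp 2, (𝓕 θ').coeFn_toLp 2] with ξ h1 h2
  rw [h1, h2, SchwartzMap.fourier_coe, SchwartzMap.fourier_coe]
  by_cases hξ : 𝓕 (θ : ℝ → ℂ) ξ = 0
  · rw [hξ, inner_zero_left]
  · rw [notMem_support.1 (disjoint_left.1 h hξ), inner_zero_right]

lemma conv_eq_integral_sub (h g : ℝ → ℂ) (y : ℝ) : conv h g y = ∫ x, h (y - x) * g x := by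
  rw [conv, ← integral_sub_left_eq_self _ _ y]
  simp

lemma exists_norm_inner_toLp_eq_norm_conv {h : ℝ → ℂ} (hh : MemLp h 2) (y : ℝ) :
    ∃ z : Lp ℂ 2 (volume : Measure ℝ), ‖z‖ = (eLpNorm h 2).toReal ∧
      ∀ θ : SchwartzMap ℝ ℂ, ‖inner ℂ (θ.toLp 2) z‖ = ‖conv h θ y‖ := by
  have hmp := Measure.measurePreserving_sub_left (volume : Measure ℝ) y
  have hz : MemLp (fun x ↦ starRingEnd ℂ (h (y - x))) 2 := (hh.comp_measurePreserving hmp).star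
  refine ⟨hz.toLp, ?_, fun θ ↦ ?_⟩
  · rw [Lp.norm_toLp, ← eLpNorm_comp_measurePreserving hh.aestronglyMeasurable hmp]
    exact congrArg _ (eLpNorm_congr_norm_ae (.of_forall fun x ↦ by simp))
  · suffices inner ℂ (θ.toLp 2) hz.toLp = starRingEnd ℂ (conv h θ y) by
      rw [this, RCLike.norm_conj]
    rw [L2.inner_def, conv_eq_integral_sub, ← integral_conj]
    refine integral_congr_ae ?_
    filter_upwards [θ.coeFn_toLp 2, hz.coeFn_toLp] with x h1 h2
    simp [h1, h2]

lemma norm_conv_le {h : ℝ → ℂ} (hh : MemLp h 2) (θ : SchwartzMap ℝ ℂ) (y : ℝ) :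
    ‖conv h θ y‖ ≤ ‖θ.toLp 2‖ * (eLpNorm h 2).toReal := by
  obtain ⟨z, hz, hinner⟩ := exists_norm_inner_toLp_eq_norm_conv hh y
  rw [← hinner, ← hz]
  exact norm_inner_le_norm _ _

lemma sum_inv_norm_sq_mul_norm_conv_sq_le {ι : Type*} [Fintype ι] {θ : ι → SchwartzMap ℝ ℂ}
    (hθ : Pairwise (Disjoint on fun m ↦ support (𝓕 (θ m : ℝ → ℂ)))) {h : ℝ → ℂ}
    (hh : MemLp h 2) (y : ℝ) :
    ∑ m, (‖(θ m).toLp 2‖ ^ 2)⁻¹ * ‖conv h (θ m) y‖ ^ 2 ≤ (eLpNorm h 2).toReal ^ 2 := by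
  obtain ⟨z, hz, hinner⟩ := exists_norm_inner_toLp_eq_norm_conv hh y
  simp_rw [← hinner, ← hz]
  exact sum_inv_norm_sq_mul_norm_inner_sq_le
    (fun m m' hmm ↦ inner_toLp_eq_zero_of_disjoint_support_fourier (hθ hmm)) z

lemma norm_toLp_two_sq (θ : SchwartzMap ℝ ℂ) :
    ‖θ.toLp 2‖ ^ 2 = ∫ x, ‖θ x‖ ^ 2 := by
  rw [← inner_self_eq_norm_sq (𝕜 := ℂ), L2.inner_def, ← integral_re (L2.integrable_inner _ _)]
  refine integral_congr_ae ?_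
  filter_upwards [θ.coeFn_toLp 2] with x hx
  rw [hx, inner_self_eq_norm_sq]

lemma norm_toLp_phimSchwartz_sq (η : SchwartzMap ℝ ℂ) {a b : ℝ} (hab : a < b) :
    ‖(phimSchwartz η hab).toLp 2‖ ^ 2 = (b - a) * ‖η.toLp 2‖ ^ 2 := by
  rw [norm_toLp_two_sq, norm_toLp_two_sq, coe_phimSchwartz, integral_norm_phim_sq η hab]

lemma sum_inv_mul_norm_conv_phim_sq_le {η : SchwartzMap ℝ ℂ}
    (hη : support (𝓕 (η : ℝ → ℂ)) ⊆ Ioo 0 1) {N : ℕ} {a b : Fin N → ℝ} (hab : Admissible a b)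
    {h : ℝ → ℂ} (hh : MemLp h 2) (y : ℝ) :
    ∑ m, (b m - a m)⁻¹ * ‖conv h (phim η (a m) (b m)) y‖ ^ 2 ≤
      (‖η.toLp 2‖ * (eLpNorm h 2).toReal) ^ 2 := by
  have bessel := sum_inv_norm_sq_mul_norm_conv_sq_le (θ := fun m ↦ phimSchwartz η (hab.1 m))
    (pairwise_disjoint_support_fourier_phimSchwartz hη hab) hh y
  rcases eq_or_ne ‖η.toLp 2‖ 0 with hη0 | hη0
  · have hconv (m : Fin N) : conv h (phim η (a m) (b m)) y = 0 := by
      have hnorm := norm_toLp_phimSchwartz_sq η (hab.1 m)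
      rw [hη0, zero_pow two_ne_zero, mul_zero, sq_eq_zero_iff] at hnorm
      have := norm_conv_le hh (phimSchwartz η (hab.1 m)) y
      rwa [hnorm, zero_mul, norm_le_zero_iff, coe_phimSchwartz] at this
    simp [hconv, hη0]
  · calc ∑ m, (b m - a m)⁻¹ * ‖conv h (phim η (a m) (b m)) y‖ ^ 2
        = ‖η.toLp 2 volume‖ ^ 2 * ∑ m, (‖(phimSchwartz η (hab.1 m)).toLp 2 volume‖ ^ 2)⁻¹ *
            ‖conv h (phimSchwartz η (hab.1 m)) y‖ ^ 2 := by
          rw [Finset.mul_sum]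
          refine Finset.sum_congr rfl fun m _ ↦ ?_
          rw [norm_toLp_phimSchwartz_sq, coe_phimSchwartz]
          field_simp
      _ ≤ ‖η.toLp 2 volume‖ ^ 2 * (eLpNorm h 2 volume).toReal ^ 2 :=
          mul_le_mul_of_nonneg_left bessel (sq_nonneg _)
      _ = (‖η.toLp 2 volume‖ * (eLpNorm h 2 volume).toReal) ^ 2 := (mul_pow _ _ 2).symm

end Bessel

section SquareFunction

lemma eLpNorm_two_sq {α E : Type*} [MeasurableSpace α] [NormedAddCommGroup E] (f : α → E)
    (μ : Measure α) : eLpNorm f 2 μ ^ 2 = ∫⁻ x, ‖f x‖ₑ ^ 2 ∂μ := by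
  rw [eLpNorm_eq_lintegral_rpow_enorm_toReal two_ne_zero ENNReal.ofNat_ne_top,
    ← ENNReal.rpow_natCast, ← ENNReal.rpow_mul]
  simp

lemma lintegral_enorm_fourier_sq (g : SchwartzMap ℝ ℂ) :
    ∫⁻ y, ‖𝓕 g y‖ₑ ^ 2 = ∫⁻ y, ‖g y‖ₑ ^ 2 := by
  have hlp (g : SchwartzMap ℝ ℂ) : ∫⁻ y, ‖g y‖ₑ ^ 2 = ‖g.toLp 2‖ₑ ^ 2 := by
    rw [Lp.enorm_def, eLpNorm_congr_ae (g.coeFn_toLp 2 volume), eLpNorm_two_sq]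
  rw [hlp, hlp, ← ofReal_norm, ← ofReal_norm, SchwartzMap.norm_fourier_toL2_eq]

lemma sum_le_of_pairwise_disjoint_support {α ι : Type*} [Fintype ι] {F : ι → α → ℝ≥0∞}
    (hF : Pairwise (Disjoint on fun m ↦ support (F m))) {B : ℝ≥0∞} (hB : ∀ m x, F m x ≤ B) (x : α) :
    ∑ m, F m x ≤ B := by
  by_cases hx : ∃ m, F m x ≠ 0
  · obtain ⟨m, hm⟩ := hx
    rw [Finset.sum_eq_single_of_mem m (Finset.mem_univ m) fun m' _ hmm ↦
      notMem_support.1 (disjoint_left.1 (hF hmm.symm) hm)]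
    exact hB m x
  · push Not at hx
    simp [hx]

lemma exists_schwartz_eq_conv (g θ : SchwartzMap ℝ ℂ) : ∃ G : SchwartzMap ℝ ℂ,
    conv g θ = G ∧ ∀ ξ, 𝓕 G ξ = 𝓕 g ξ * 𝓕 (θ : ℝ → ℂ) ξ := by
  refine ⟨SchwartzMap.convolution (ContinuousLinearMap.mul ℂ ℂ) g θ, funext fun y ↦ ?_, fun ξ ↦ ?_⟩
  · rw [SchwartzMap.convolution_apply]
    rfl
  · rw [SchwartzMap.fourier_convolution]
    rfl

lemma lintegral_sum_enorm_conv_sq_le_of_schwartz {ι : Type*} [Fintype ι]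
    {θ : ι → SchwartzMap ℝ ℂ} (hθ : Pairwise (Disjoint on fun m ↦ support (𝓕 (θ m : ℝ → ℂ))))
    {B : ℝ≥0∞} (hB : ∀ m ξ, ‖𝓕 (θ m : ℝ → ℂ) ξ‖ₑ ≤ B) (g : SchwartzMap ℝ ℂ) :
    ∫⁻ y, ∑ m, ‖conv g (θ m) y‖ₑ ^ 2 ≤ (B * eLpNorm g 2) ^ 2 := by
  choose G hconv hfourier using fun m ↦ exists_schwartz_eq_conv g (θ m)
  have hmult (ξ : ℝ) : ∑ m, ‖𝓕 (θ m : ℝ → ℂ) ξ‖ₑ ^ 2 ≤ B ^ 2 := by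
    refine sum_le_of_pairwise_disjoint_support
      (F := fun m ξ ↦ ‖𝓕 (θ m : ℝ → ℂ) ξ‖ₑ ^ 2) (fun m m' hmm ↦ ?_)
      (fun m ξ ↦ by gcongr; exact hB m ξ) ξ
    have hsupp (m : ι) : support (fun ξ ↦ ‖𝓕 (θ m : ℝ → ℂ) ξ‖ₑ ^ 2) ⊆
        support (𝓕 (θ m : ℝ → ℂ)) := support_subset_iff.2 fun ξ hξ h ↦ hξ (by simp [h])
    exact (hθ hmm).mono (hsupp m) (hsupp m')
  calc ∫⁻ y, ∑ m, ‖conv g (θ m) y‖ₑ ^ 2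
      = ∑ m, ∫⁻ y, ‖G m y‖ₑ ^ 2 := by
        simp_rw [hconv]
        exact lintegral_finsetSum _ fun m _ ↦ by fun_prop
    _ = ∑ m, ∫⁻ ξ, ‖𝓕 (G m) ξ‖ₑ ^ 2 := by simp_rw [fun m ↦ lintegral_enorm_fourier_sq (G m)]
    _ = ∫⁻ ξ, ‖𝓕 g ξ‖ₑ ^ 2 * ∑ m, ‖𝓕 (θ m : ℝ → ℂ) ξ‖ₑ ^ 2 := by
        rw [← lintegral_finsetSum _ fun m _ ↦ by fun_prop]
        simp only [hfourier, enorm_mul, mul_pow, Finset.mul_sum]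
    _ ≤ ∫⁻ ξ, ‖𝓕 g ξ‖ₑ ^ 2 * B ^ 2 := lintegral_mono fun ξ ↦ by gcongr; exact hmult ξ
    _ = (B * eLpNorm g 2 volume) ^ 2 := by
        rw [lintegral_mul_const _ (by fun_prop), lintegral_enorm_fourier_sq, mul_pow,
          eLpNorm_two_sq, mul_comm]

lemma integrable_mul_schwartz_sub {h : ℝ → ℂ} (hh : MemLp h 2) (θ : SchwartzMap ℝ ℂ) (y : ℝ) :
    Integrable fun t ↦ h t * θ (y - t) :=
  hh.integrable_mul ((θ.memLp 2).comp_measurePreserving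
    (Measure.measurePreserving_sub_left volume y))

open Filter in
lemma tendsto_conv_of_tendsto_eLpNorm_two {h : ℝ → ℂ} (hh : MemLp h 2) {G : ℕ → SchwartzMap ℝ ℂ}
    (hG : Tendsto (fun n ↦ eLpNorm (⇑(G n) - h) 2) atTop (nhds 0)) (θ : SchwartzMap ℝ ℂ) (y : ℝ) :
    Tendsto (fun n ↦ conv (G n) θ y) atTop (nhds (conv h θ y)) := by
  have hdiff (n : ℕ) : MemLp (⇑(G n) - h) 2 := ((G n).memLp 2).sub hh
  have hsub (n : ℕ) : conv (G n) θ y - conv h θ y = conv (⇑(G n) - h) θ y := by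
    rw [conv, conv, conv, ← integral_sub (integrable_mul_schwartz_sub ((G n).memLp 2) θ y)
      (integrable_mul_schwartz_sub hh θ y)]
    simp only [Pi.sub_apply, sub_mul]
  rw [tendsto_iff_norm_sub_tendsto_zero]
  refine squeeze_zero (fun _ ↦ norm_nonneg _)
    (fun n ↦ (congrArg norm (hsub n)).trans_le (norm_conv_le (hdiff n) θ y)) ?_
  simpa using ((ENNReal.tendsto_toReal ENNReal.zero_ne_top).comp hG).const_mul ‖θ.toLp 2 volume‖

open Filter in
lemma exists_schwartz_tendsto_eLpNorm_two {h : ℝ → ℂ} (hh : MemLp h 2) :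
    ∃ G : ℕ → SchwartzMap ℝ ℂ, Tendsto (fun n ↦ eLpNorm (⇑(G n) - h) 2) atTop (nhds 0) := by
  have hdense := SchwartzMap.denseRange_toLpCLM (E := ℝ) (F := ℂ) (p := 2) (μ := volume)
    (by norm_num)
  obtain ⟨u, hu, hlim⟩ := mem_closure_iff_seq_limit.1 (hdense hh.toLp)
  choose G hG using hu
  refine ⟨G, (Lp.tendsto_Lp_iff_tendsto_eLpNorm'' (fun n ↦ (G n : ℝ → ℂ))
    (fun n ↦ (G n).memLp 2) h hh).1 (hlim.congr fun n ↦ ?_)⟩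
  rw [← hG n]
  rfl

open Filter in
lemma lintegral_sum_enorm_conv_sq_le {ι : Type*} [Fintype ι]
    {θ : ι → SchwartzMap ℝ ℂ} (hθ : Pairwise (Disjoint on fun m ↦ support (𝓕 (θ m : ℝ → ℂ))))
    {B : ℝ≥0} (hB : ∀ m ξ, ‖𝓕 (θ m : ℝ → ℂ) ξ‖ₑ ≤ B) {h : ℝ → ℂ} (hh : MemLp h 2) :
    ∫⁻ y, ∑ m, ‖conv h (θ m) y‖ₑ ^ 2 ≤ (B * eLpNorm h 2) ^ 2 := by
  obtain ⟨G, hG⟩ := exists_schwartz_tendsto_eLpNorm_two hh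
  have hmeas (g θ : SchwartzMap ℝ ℂ) : Measurable (conv g θ) := by
    obtain ⟨G, hG, -⟩ := exists_schwartz_eq_conv g θ
    exact hG ▸ G.continuous.measurable
  have hlim (y : ℝ) : Tendsto (fun n ↦ ∑ m, ‖conv (G n) (θ m) y‖ₑ ^ 2) atTop
      (nhds (∑ m, ‖conv h (θ m) y‖ₑ ^ 2)) := tendsto_finsetSum _ fun m _ ↦
    ENNReal.Tendsto.pow (tendsto_conv_of_tendsto_eLpNorm_two hh hG (θ m) y).enorm
  have hbound : Tendsto (fun n ↦ (B * (eLpNorm (⇑(G n) - h) 2 + eLpNorm h 2)) ^ 2) atTop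
      (nhds ((B * eLpNorm h 2) ^ 2)) := by
    refine ENNReal.Tendsto.pow (ENNReal.Tendsto.const_mul ?_ (Or.inr ENNReal.coe_ne_top))
    simpa using hG.add_const (eLpNorm h 2 volume)
  calc ∫⁻ y, ∑ m, ‖conv h (θ m) y‖ₑ ^ 2
      = ∫⁻ y, liminf (fun n ↦ ∑ m, ‖conv (G n) (θ m) y‖ₑ ^ 2) atTop := by
        simp_rw [fun y ↦ (hlim y).liminf_eq]
    _ ≤ liminf (fun n ↦ ∫⁻ y, ∑ m, ‖conv (G n) (θ m) y‖ₑ ^ 2) atTop :=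
        lintegral_liminf_le fun n ↦ Finset.measurable_fun_sum _ fun m _ ↦
          (hmeas (G n) (θ m)).enorm.pow_const 2
    _ ≤ liminf (fun n ↦ (B * (eLpNorm (⇑(G n) - h) 2 volume + eLpNorm h 2 volume)) ^ 2) atTop := by
        refine liminf_le_liminf (.of_forall fun n ↦ ?_)
        refine (lintegral_sum_enorm_conv_sq_le_of_schwartz hθ hB (G n)).trans ?_
        gcongr
        conv_lhs => rw [← sub_add_cancel (⇑(G n)) h]
        exact eLpNorm_add_le (((G n).memLp 2).sub hh).1 hh.1 (by norm_num)
    _ = (B * eLpNorm h 2 volume) ^ 2 := hbound.liminf_eq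

end SquareFunction

section Tempered

/-- Functions that become integrable after division by some power of `1 + |t|`: the convolution
of such a function with a Schwartz function is an absolutely convergent integral. -/
def IsTempered (w : ℝ → ℂ) : Prop :=
  ∃ K : ℕ, Integrable fun t ↦ ((1 + |t|) ^ K)⁻¹ • w t

lemma continuous_one_add_abs_pow_inv (K : ℕ) : Continuous fun t : ℝ ↦ ((1 + |t|) ^ K)⁻¹ :=
  Continuous.inv₀ (by fun_prop) fun t ↦ by positivity

namespace IsTempered

variable {w w₁ w₂ : ℝ → ℂ}

lemma of_integrable (hw : Integrable w) : IsTempered w := ⟨0, by simpa using hw⟩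

lemma aestronglyMeasurable (hw : IsTempered w) : AEStronglyMeasurable w := by
  obtain ⟨K, hK⟩ := hw
  refine ((by fun_prop : Continuous fun t : ℝ ↦ (1 + |t|) ^ K).aestronglyMeasurable.smul
    hK.aestronglyMeasurable).congr (.of_forall fun t ↦ ?_)
  exact smul_inv_smul₀ (by positivity : (1 + |t|) ^ K ≠ 0) (w t)

lemma integrable_of_le {K K' : ℕ} (hw : Integrable fun t ↦ ((1 + |t|) ^ K)⁻¹ • w t)
    (hK : K ≤ K') : Integrable fun t ↦ ((1 + |t|) ^ K')⁻¹ • w t := by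
  have hmeas := (aestronglyMeasurable ⟨K, hw⟩ : AEStronglyMeasurable w)
  refine hw.mono ((continuous_one_add_abs_pow_inv K').aestronglyMeasurable.smul hmeas)
    (.of_forall fun t ↦ ?_)
  rw [norm_smul, norm_smul]
  gcongr ?_ * _
  rw [norm_of_nonneg (by positivity), norm_of_nonneg (by positivity)]
  gcongr
  linarith [abs_nonneg t]

lemma add (h₁ : IsTempered w₁) (h₂ : IsTempered w₂) : IsTempered (w₁ + w₂) := by
  obtain ⟨K₁, hK₁⟩ := h₁
  obtain ⟨K₂, hK₂⟩ := h₂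
  exact ⟨max K₁ K₂, ((integrable_of_le hK₁ (le_max_left _ _)).add
    (integrable_of_le hK₂ (le_max_right _ _))).congr (.of_forall fun t ↦ (smul_add _ _ _).symm)⟩

lemma const_smul (r : ℝ) (hw : IsTempered w) : IsTempered (r • w) := by
  obtain ⟨K, hK⟩ := hw
  exact ⟨K, (hK.smul r).congr (.of_forall fun t ↦ smul_comm r _ (w t))⟩

lemma indicator (hw : IsTempered w) {A : Set ℝ} (hA : MeasurableSet A) :
    IsTempered (A.indicator w) := by
  obtain ⟨K, hK⟩ := hw
  refine ⟨K, (hK.indicator hA).congr (.of_forall fun t ↦ ?_)⟩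
  exact (indicator_smul_apply A _ _ t)

lemma e2pi_mul (a : ℝ) (hw : IsTempered w) : IsTempered fun t ↦ e2pi (-(a * t)) * w t := by
  obtain ⟨K, hK⟩ := hw
  have hchar : Continuous fun t ↦ e2pi (-(a * t)) := continuous_e2pi.comp (by fun_prop)
  refine ⟨K, (hK.bdd_mul hchar.aestronglyMeasurable (c := 1) (by simp)).congr
    (.of_forall fun t ↦ mul_smul_comm _ _ _)⟩

end IsTempered

lemma isTempered_of_mem_polyFun {n : ℕ} {P : ℝ → ℂ} (hP : P ∈ polyFun ℂ n) : IsTempered P := by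
  induction hP using Submodule.span_induction with
  | mem P hP =>
    obtain ⟨k, -, c, rfl⟩ := hP
    have hdecay : Integrable fun t : ℝ ↦ (1 + ‖t‖) ^ (-2 : ℝ) :=
      integrable_one_add_norm (by simp)
    refine ⟨k + 2, (hdecay.smul_const c).mono
      ((continuous_one_add_abs_pow_inv _).smul (by fun_prop)).aestronglyMeasurable
      (.of_forall fun t ↦ ?_)⟩
    rw [smul_smul, norm_smul, norm_smul]
    gcongr ?_ * _
    calc ‖((1 + |t|) ^ (k + 2))⁻¹ * t ^ k‖ = ((1 + |t|) ^ (k + 2))⁻¹ * |t| ^ k := by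
          rw [norm_mul, norm_of_nonneg (by positivity), norm_pow, Real.norm_eq_abs]
      _ ≤ ((1 + |t|) ^ (k + 2))⁻¹ * (1 + |t|) ^ k := by gcongr; linarith
      _ = ((1 + |t|) ^ 2)⁻¹ := by field_simp; ring
      _ = ‖(1 + ‖t‖) ^ (-2 : ℝ)‖ := by
          rw [norm_of_nonneg (by positivity), rpow_neg (by positivity), rpow_ofNat,
            Real.norm_eq_abs]
  | zero => exact .of_integrable (integrable_zero _ _ _)
  | add P Q _ _ hP hQ => exact hP.add hQ
  | smul r P _ hP => exact hP.const_smul r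

lemma isTempered_of_memLp_two {h : ℝ → ℂ} (hh : MemLp h 2) : IsTempered h := by
  have hdecay : Integrable fun t : ℝ ↦ (1 + ‖t‖) ^ (-2 : ℝ) := integrable_one_add_norm (by simp)
  have hweight : MemLp (fun t : ℝ ↦ ((1 + |t|) ^ 1)⁻¹) 2 := by
    rw [memLp_two_iff_integrable_sq (continuous_one_add_abs_pow_inv 1).aestronglyMeasurable]
    refine hdecay.congr (.of_forall fun t ↦ ?_)
    simp [rpow_neg (by positivity : 0 ≤ 1 + |t|)]
  exact ⟨1, memLp_one_iff_integrable.1 (hh.smul hweight)⟩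

lemma exists_one_add_abs_pow_mul_norm_le (θ : SchwartzMap ℝ ℂ) (K : ℕ) :
    ∃ C, ∀ y t, (1 + |t|) ^ K * ‖θ (y - t)‖ ≤ C * (1 + |y|) ^ K := by
  have hdecay := SchwartzMap.one_add_le_sup_seminorm_apply (𝕜 := ℂ) (m := (K, 0)) le_rfl le_rfl θ
  simp only [norm_iteratedFDeriv_zero] at hdecay
  obtain ⟨C, hC⟩ : ∃ C, ∀ x, (1 + ‖x‖) ^ K * ‖θ x‖ ≤ C := ⟨_, hdecay⟩
  refine ⟨C, fun y t ↦ ?_⟩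
  have peetre : 1 + |t| ≤ (1 + |y|) * (1 + ‖y - t‖) := by
    have := abs_sub_abs_le_abs_sub t y
    rw [abs_sub_comm, ← Real.norm_eq_abs (y - t)] at this
    nlinarith [abs_nonneg y, norm_nonneg (y - t)]
  calc (1 + |t|) ^ K * ‖θ (y - t)‖
      ≤ ((1 + |y|) * (1 + ‖y - t‖)) ^ K * ‖θ (y - t)‖ := by gcongr
    _ = ((1 + ‖y - t‖) ^ K * ‖θ (y - t)‖) * (1 + |y|) ^ K := by rw [mul_pow]; ring
    _ ≤ C * (1 + |y|) ^ K := by gcongr; exact hC _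

lemma norm_mul_schwartz_le {C : ℝ} {K : ℕ} {θ : SchwartzMap ℝ ℂ}
    (hC : ∀ y t, (1 + |t|) ^ K * ‖θ (y - t)‖ ≤ C * (1 + |y|) ^ K) (w : ℝ → ℂ) (y t : ℝ) :
    ‖w t * θ (y - t)‖ ≤ C * (1 + |y|) ^ K * ‖((1 + |t|) ^ K)⁻¹ • w t‖ := by
  calc ‖w t * θ (y - t)‖ = (1 + |t|) ^ K * ‖θ (y - t)‖ * ‖((1 + |t|) ^ K)⁻¹ • w t‖ := by
        rw [norm_smul, norm_mul, norm_inv, norm_of_nonneg (by positivity : 0 ≤ (1 + |t|) ^ K)]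
        field_simp
    _ ≤ _ := mul_le_mul_of_nonneg_right (hC y t) (norm_nonneg _)

namespace IsTempered

lemma integrable_mul_schwartz {w : ℝ → ℂ} (hw : IsTempered w) (θ : SchwartzMap ℝ ℂ) (y : ℝ) :
    Integrable fun t ↦ w t * θ (y - t) := by
  obtain ⟨K, hK⟩ := id hw
  obtain ⟨C, hC⟩ := exists_one_add_abs_pow_mul_norm_le θ K
  exact (hK.norm.const_mul _).mono'
    (hw.aestronglyMeasurable.mul (θ.continuous.comp (by fun_prop)).aestronglyMeasurable)
    (.of_forall (norm_mul_schwartz_le hC w y))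

lemma hasDerivAt_conv {w : ℝ → ℂ} (hw : IsTempered w) (θ : SchwartzMap ℝ ℂ) (y : ℝ) :
    HasDerivAt (conv w θ) (conv w (SchwartzMap.derivCLM ℂ ℂ θ) y) y := by
  obtain ⟨K, hK⟩ := id hw
  obtain ⟨C, hC⟩ := exists_one_add_abs_pow_mul_norm_le (SchwartzMap.derivCLM ℂ ℂ θ) K
  have hC0 : 0 ≤ C := by
    have := (by positivity : (0 : ℝ) ≤ _).trans (hC 0 0)
    simpa using this
  refine (hasDerivAt_integral_of_dominated_loc_of_deriv_le (Metric.ball_mem_nhds y one_pos)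
    (.of_forall fun x ↦ (hw.integrable_mul_schwartz θ x).aestronglyMeasurable)
    (hw.integrable_mul_schwartz θ y)
    (F' := fun x t ↦ w t * SchwartzMap.derivCLM ℂ ℂ θ (x - t))
    (hw.integrable_mul_schwartz (SchwartzMap.derivCLM ℂ ℂ θ) y).aestronglyMeasurable
    (bound := fun t ↦ C * (2 + |y|) ^ K * ‖((1 + |t|) ^ K)⁻¹ • w t‖)
    (.of_forall fun t x hx ↦ ?_) (hK.norm.const_mul _) (.of_forall fun t x _ ↦ ?_)).2
  · refine (norm_mul_schwartz_le hC w x t).trans ?_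
    have : |x| ≤ 1 + |y| := by
      have := abs_sub_abs_le_abs_sub x y
      rw [Metric.mem_ball, Real.dist_eq] at hx
      linarith
    gcongr ?_ * ?_ ^ K * _
    linarith
  · have hθ : HasDerivAt θ (SchwartzMap.derivCLM ℂ ℂ θ (x - t)) (x - t) :=
      θ.differentiableAt.hasDerivAt
    exact (hθ.comp_sub_const x t).const_mul (w t)

end IsTempered

lemma conv_eq_zero_of_mem_polyFun {n : ℕ} {Q : ℝ → ℂ} (hQ : Q ∈ polyFun ℂ n)
    {θ : SchwartzMap ℝ ℂ} {a b : ℝ} (hθ : support (𝓕 (θ : ℝ → ℂ)) ⊆ Ioo a b)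
    (h0 : (0 : ℝ) ∉ Ioo a b) (y : ℝ) : conv Q θ y = 0 := by
  induction hQ using Submodule.span_induction with
  | mem P hP =>
    obtain ⟨k, -, c, rfl⟩ := hP
    calc conv (fun t ↦ t ^ k • c) θ y = c * ∫ t : ℝ, (t : ℂ) ^ k * θ (y - t) := by
          rw [conv, ← integral_const_mul]
          congr with t
          rw [Complex.real_smul]
          push_cast
          ring
      _ = 0 := by rw [integral_pow_mul_eq_zero_of_support_fourier_subset hθ h0, mul_zero]
  | zero => simp [conv]
  | add P Q hP hQ hP0 hQ0 =>
    simp only [conv, Pi.add_apply, add_mul] at hP0 hQ0 ⊢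
    rw [integral_add ((isTempered_of_mem_polyFun hP).integrable_mul_schwartz θ y)
      ((isTempered_of_mem_polyFun hQ).integrable_mul_schwartz θ y), hP0, hQ0, add_zero]
  | smul r P _ hP0 =>
    simp only [conv, Pi.smul_apply, smul_mul_assoc] at hP0 ⊢
    rw [integral_smul, hP0, smul_zero]

end Tempered

section RotatedFamily

lemma norm_rotConv (η w : ℝ → ℂ) (a b y : ℝ) :
    ‖rotConv η a b w y‖ = ‖conv w (phim η a b) y‖ := by
  rw [rotConv, norm_mul, norm_e2pi, one_mul]

lemma rotConv_eq_conv (η : ℝ → ℂ) (a b : ℝ) (w : ℝ → ℂ) :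
    rotConv η a b w = conv (fun t ↦ e2pi (-(a * t)) * w t) (phim η 0 (b - a)) := by
  ext y
  rw [rotConv, conv, conv, ← integral_const_mul]
  congr with t
  rw [phim, phim, show a * (y - t) = a * y + -(a * t) by ring, e2pi_add]
  have hcancel : e2pi (-(a * y)) * e2pi (a * y) = 1 := by rw [← e2pi_add]; simp
  simp only [sub_zero, zero_mul, e2pi_zero]
  linear_combination (w t * (b - a : ℝ) * e2pi (-(a * t)) * η ((b - a) * (y - t))) * hcancel

lemma derivCLM_phimSchwartz_zero (η : SchwartzMap ℝ ℂ) {L : ℝ} (hL : 0 < L) (x : ℝ) :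
    SchwartzMap.derivCLM ℂ ℂ (phimSchwartz η hL) x =
      L * phimSchwartz (SchwartzMap.derivCLM ℂ ℂ η) hL x := by
  have hη : HasDerivAt η (SchwartzMap.derivCLM ℂ ℂ η (L * x)) (L * x) :=
    η.differentiableAt.hasDerivAt
  rw [SchwartzMap.derivCLM_apply, coe_phimSchwartz, coe_phimSchwartz]
  simp only [funext fun x ↦ show phim η 0 L x = L * η (L * x) by simp [phim],
    show phim (SchwartzMap.derivCLM ℂ ℂ η) 0 L x = L * SchwartzMap.derivCLM ℂ ℂ η (L * x) by
      simp [phim]]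
  have hscale : HasDerivAt (fun x ↦ η (L * x)) (L • SchwartzMap.derivCLM ℂ ℂ η (L * x)) x :=
    (hη.scomp x ((hasDerivAt_id x).const_mul L)).congr_deriv (by simp)
  rw [(hscale.const_mul (L : ℂ)).deriv, Complex.real_smul]

lemma hasDerivAt_rotConv (η : SchwartzMap ℝ ℂ) {a b : ℝ} (hab : a < b) {w : ℝ → ℂ}
    (hw : IsTempered w) (y : ℝ) : HasDerivAt (rotConv η a b w)
      ((b - a : ℝ) * rotConv (SchwartzMap.derivCLM ℂ ℂ η) a b w y) y := by
  have hL : 0 < b - a := sub_pos.2 hab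
  rw [rotConv_eq_conv, rotConv_eq_conv, ← coe_phimSchwartz η hL,
    ← coe_phimSchwartz (SchwartzMap.derivCLM ℂ ℂ η) hL]
  refine ((hw.e2pi_mul a).hasDerivAt_conv (phimSchwartz η hL) y).congr_deriv ?_
  rw [conv, conv, ← integral_const_mul]
  congr with t
  rw [derivCLM_phimSchwartz_zero]
  ring

lemma hasSum_rotConv_indicator (η : SchwartzMap ℝ ℂ) {a b : ℝ} (hab : a < b) {w : ℝ → ℂ}
    (hw : IsTempered w) {A : ℕ → Set ℝ} (hA : ∀ j, MeasurableSet (A j))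
    (hdisj : Pairwise (Disjoint on A)) (y : ℝ) :
    HasSum (fun j ↦ rotConv η a b ((A j).indicator w) y)
      (rotConv η a b ((⋃ j, A j).indicator w) y) := by
  have restrict {B : Set ℝ} (hB : MeasurableSet B) :
      rotConv η a b (B.indicator w) y =
        e2pi (-(a * y)) * ∫ t in B, w t * phimSchwartz η hab (y - t) := by
    rw [rotConv, conv, ← integral_indicator hB, coe_phimSchwartz]
    simp only [indicator_mul_left]
  simp only [restrict (hA _), restrict (MeasurableSet.iUnion hA)]
  exact (hasSum_integral_iUnion hA hdisj
    (hw.integrable_mul_schwartz (phimSchwartz η hab) y).integrableOn).mul_left _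

variable {N : ℕ} {a b : Fin N → ℝ}

/-- The rotated pieces `e^{-2πi a_m y} (w ∗ η_m)(y)`, gathered into one vector of the Hermitian
space `ℂ^N`, whose norm is the `ℓ²`-norm of the family. -/
noncomputable def rotFamily (η : ℝ → ℂ) (a b : Fin N → ℝ) (w : ℝ → ℂ) (y : ℝ) :
    EuclideanSpace ℂ (Fin N) :=
  WithLp.toLp 2 fun m ↦ rotConv η (a m) (b m) w y

lemma rotFamily_add (η : SchwartzMap ℝ ℂ) (hab : ∀ m, a m < b m) {w₁ w₂ : ℝ → ℂ}
    (h₁ : IsTempered w₁) (h₂ : IsTempered w₂) :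
    rotFamily η a b (w₁ + w₂) = rotFamily η a b w₁ + rotFamily η a b w₂ := by
  ext y m
  simp only [rotFamily, rotConv, conv, Pi.add_apply, PiLp.add_apply, add_mul,
    ← coe_phimSchwartz η (hab m)]
  rw [integral_add (h₁.integrable_mul_schwartz _ y) (h₂.integrable_mul_schwartz _ y), mul_add]

lemma rotFamily_eq_zero_of_mem_polyFun {η : SchwartzMap ℝ ℂ}
    (hη : support (𝓕 (η : ℝ → ℂ)) ⊆ Ioo 0 1) (hab : Admissible a b) {n : ℕ} {Q : ℝ → ℂ}
    (hQ : Q ∈ polyFun ℂ n) : rotFamily η a b Q = 0 := by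
  ext y m
  simp [rotFamily, rotConv, ← coe_phimSchwartz η (hab.1 m), conv_eq_zero_of_mem_polyFun hQ
    (support_fourier_phimSchwartz_subset hη (hab.1 m)) (hab.2.1 m)]

lemma iteratedDeriv_rotFamily (η : SchwartzMap ℝ ℂ) (hab : ∀ m, a m < b m) {w : ℝ → ℂ}
    (hw : IsTempered w) (n : ℕ) :
    iteratedDeriv n (rotFamily η a b w) = fun y ↦ WithLp.toLp 2 fun m ↦
      (((b m - a m) ^ n : ℝ) : ℂ) *
        rotConv ((SchwartzMap.derivCLM ℂ ℂ)^[n] η) (a m) (b m) w y := by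
  induction n with
  | zero => simp [rotFamily, funext_iff]
  | succ n ih =>
    rw [iteratedDeriv_succ, ih]
    ext1 y
    refine HasDerivAt.deriv ?_
    refine ((PiLp.continuousLinearEquiv 2 ℝ fun _ : Fin N ↦ ℂ).symm.hasFDerivAt.comp_hasDerivAt y
      (hasDerivAt_pi.2 fun m ↦ (hasDerivAt_rotConv _ (hab m) hw y).const_mul _)).congr_deriv ?_
    ext m
    simp [iterate_succ_apply', pow_succ, mul_assoc]

lemma contDiff_rotFamily (η : SchwartzMap ℝ ℂ) (hab : ∀ m, a m < b m) {w : ℝ → ℂ}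
    (hw : IsTempered w) {n : ℕ} : ContDiff ℝ n (rotFamily η a b w) := by
  refine contDiff_of_differentiable_iteratedDeriv fun k _ y ↦ ?_
  rw [iteratedDeriv_rotFamily η hab hw]
  exact ((PiLp.continuousLinearEquiv 2 ℝ fun _ : Fin N ↦ ℂ).symm.hasFDerivAt.comp_hasDerivAt y
    (hasDerivAt_pi.2 fun m ↦
      (hasDerivAt_rotConv _ (hab m) hw y).const_mul _)).differentiableAt

lemma enorm_iteratedDeriv_rotFamily_indicator_iUnion_le (η : SchwartzMap ℝ ℂ)
    (hab : ∀ m, a m < b m) {w : ℝ → ℂ} (hw : IsTempered w) {A : ℕ → Set ℝ}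
    (hA : ∀ j, MeasurableSet (A j)) (hdisj : Pairwise (Disjoint on A)) (n : ℕ) (y : ℝ) :
    ‖iteratedDeriv n (rotFamily η a b ((⋃ j, A j).indicator w)) y‖ₑ ≤
      ∑' j, ‖iteratedDeriv n (rotFamily η a b ((A j).indicator w)) y‖ₑ := by
  have hsum : HasSum (fun j ↦ iteratedDeriv n (rotFamily η a b ((A j).indicator w)) y)
      (iteratedDeriv n (rotFamily η a b ((⋃ j, A j).indicator w)) y) := by
    simp only [iteratedDeriv_rotFamily η hab (hw.indicator (hA _)),
      iteratedDeriv_rotFamily η hab (hw.indicator (MeasurableSet.iUnion hA))]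
    exact (PiLp.continuousLinearEquiv 2 ℝ fun _ : Fin N ↦ ℂ).symm.hasSum.2 <|
      Pi.hasSum.2 fun m ↦ (hasSum_rotConv_indicator _ (hab m) hw hA hdisj y).mul_left _
  rw [← hsum.tsum_eq]
  exact enorm_tsum_le_tsum_enorm

end RotatedFamily

section DistantData

lemma exists_mem_polyFun_norm_sub_le {E : Type*} [NormedAddCommGroup E] [NormedSpace ℝ E]
    {G : ℝ → E} {n : ℕ} (hG : ContDiff ℝ (n + 1) G) {u v C : ℝ} (huv : u < v)
    (hC : ∀ t ∈ Icc u v, ‖iteratedDeriv (n + 1) G t‖ ≤ C) :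
    ∃ P ∈ polyFun E (n + 1), ∀ t ∈ Icc u v, ‖G t - P t‖ ≤ C * (v - u) ^ (n + 1) := by
  refine ⟨taylorWithinEval G n (Icc u v) u, ?_, fun t ht ↦ ?_⟩
  · have expand : taylorWithinEval G n (Icc u v) u = ∑ k ∈ Finset.range (n + 1),
        ((k.factorial : ℝ)⁻¹ • fun t ↦ (t - u) ^ k • iteratedDerivWithin k G (Icc u v) u) := by
      ext t
      simp only [taylor_within_apply, Finset.sum_apply, Pi.smul_apply, mul_smul]
    rw [expand]
    exact Submodule.sum_mem _ fun k hk ↦ Submodule.smul_mem _ _ <|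
      sub_pow_smul_mem_polyFun (Finset.mem_range.1 hk) u _
  · have hC0 : 0 ≤ C := (norm_nonneg _).trans (hC t ht)
    have htu : 0 ≤ t - u := sub_nonneg.2 ht.1
    calc ‖G t - taylorWithinEval G n (Icc u v) u t‖
        ≤ C * (t - u) ^ (n + 1) / n.factorial :=
          taylor_mean_remainder_bound huv.le hG.contDiffOn ht fun y hy ↦ by
            rw [iteratedDerivWithin_eq_iteratedDeriv (uniqueDiffOn_Icc huv)
              (by exact_mod_cast hG.contDiffAt) hy]
            exact hC y hy
      _ ≤ C * (t - u) ^ (n + 1) :=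
          div_le_self (by positivity) (by exact_mod_cast n.factorial_pos)
      _ ≤ C * (v - u) ^ (n + 1) := by gcongr; exact ht.2

lemma norm_conv_phim_iterate_mulSubCoord (ψ : SchwartzMap ℝ ℂ) (n : ℕ) {ρ y : ℝ} (hρ : 0 < ρ)
    {h : ℝ → ℂ} (hfar : ∀ t, |t - y| < ρ → h t = 0) (a b : ℝ) :
    ‖conv (fun t ↦ (((y - t) ^ n : ℝ) : ℂ)⁻¹ * h t) (phim ((mulSubCoord 0)^[n] ψ) a b) y‖ =
      |b - a| ^ n * ‖conv h (phim ψ a b) y‖ := by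
  have factor : conv (fun t ↦ (((y - t) ^ n : ℝ) : ℂ)⁻¹ * h t)
      (phim ((mulSubCoord 0)^[n] ψ) a b) y =
        (((-(b - a)) ^ n : ℝ) : ℂ) * conv h (phim ψ a b) y := by
    rw [conv, conv, ← integral_const_mul]
    congr with t
    by_cases ht : |t - y| < ρ
    · simp [hfar t ht]
    have hne : (y - t : ℝ) ≠ 0 := by
      rw [abs_sub_comm] at ht
      exact abs_pos.1 (hρ.trans_le (not_lt.1 ht))
    have hne' : ((y - t : ℝ) : ℂ) ≠ 0 := by exact_mod_cast hne
    rw [phim, phim, iterate_mulSubCoord_apply, zero_sub, neg_mul_eq_neg_mul]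
    push_cast
    rw [mul_pow]
    push_cast at hne'
    field_simp
  rw [factor, norm_mul, Complex.norm_real, norm_pow, norm_neg, Real.norm_eq_abs]

lemma norm_inv_pow_mul_le (n : ℕ) {ρ y : ℝ} (hρ : 0 < ρ) {h : ℝ → ℂ}
    (hfar : ∀ t, |t - y| < ρ → h t = 0) (t : ℝ) :
    ‖(((y - t) ^ n : ℝ) : ℂ)⁻¹ * h t‖ ≤ (ρ ^ n)⁻¹ * ‖h t‖ := by
  by_cases ht : |t - y| < ρ
  · simp [hfar t ht]
  rw [norm_mul, norm_inv, Complex.norm_real, norm_pow, Real.norm_eq_abs, abs_sub_comm]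
  have := not_lt.1 ht
  gcongr

/-- A frequency `L` is weighed against the distance `ρ` so that both terms on the right are
covered by a Bessel inequality. -/
lemma pow_mul_sq_le_inv_mul_sq_add {L ρ : ℝ} (hL : 0 < L) (hρ : 0 < ρ) (n : ℕ) (X : ℝ) :
    ρ ^ (2 * n + 1) * (L ^ n * X) ^ 2 ≤
      L⁻¹ * X ^ 2 + (ρ ^ (n + 1)) ^ 2 * (L⁻¹ * (L ^ (n + 1) * X) ^ 2) := by
  have hpow : (L * ρ) ^ (2 * n + 1) ≤ 1 + (L * ρ) ^ (2 * n + 2) := by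
    have hx : 0 < L * ρ := mul_pos hL hρ
    rcases le_total (L * ρ) 1 with h1 | h1
    · linarith [pow_le_one₀ hx.le h1 (n := 2 * n + 1), pow_pos hx (2 * n + 2)]
    · linarith [pow_le_pow_right₀ h1 (by omega : 2 * n + 1 ≤ 2 * n + 2)]
  calc ρ ^ (2 * n + 1) * (L ^ n * X) ^ 2 = L⁻¹ * X ^ 2 * (L * ρ) ^ (2 * n + 1) := by
        field_simp
        ring
    _ ≤ L⁻¹ * X ^ 2 * (1 + (L * ρ) ^ (2 * n + 2)) := by gcongr
    _ = L⁻¹ * X ^ 2 + (ρ ^ (n + 1)) ^ 2 * (L⁻¹ * (L ^ (n + 1) * X) ^ 2) := by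
        field_simp
        ring

variable {N : ℕ} {a b : Fin N → ℝ}

lemma pow_mul_norm_iteratedDeriv_rotFamily_sq_le {η : SchwartzMap ℝ ℂ}
    (hη : support (𝓕 (η : ℝ → ℂ)) ⊆ Ioo 0 1) (hab : Admissible a b) {h : ℝ → ℂ}
    (hh : MemLp h 2) (n : ℕ) {ρ y : ℝ} (hρ : 0 < ρ) (hfar : ∀ t, |t - y| < ρ → h t = 0) :
    ρ ^ (2 * n + 1) * ‖iteratedDeriv n (rotFamily η a b h) y‖ ^ 2 ≤
      (‖((SchwartzMap.derivCLM ℂ ℂ)^[n] η).toLp 2 volume‖ ^ 2 +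
        ‖((mulSubCoord 0)^[n + 1] ((SchwartzMap.derivCLM ℂ ℂ)^[n] η)).toLp 2 volume‖ ^ 2) *
          (eLpNorm h 2).toReal ^ 2 := by
  set ψ := (SchwartzMap.derivCLM ℂ ℂ)^[n] η
  set χ := (mulSubCoord 0)^[n + 1] ψ
  set h' : ℝ → ℂ := fun t ↦ (((y - t) ^ (n + 1) : ℝ) : ℂ)⁻¹ * h t
  have hψ : support (𝓕 (ψ : ℝ → ℂ)) ⊆ Ioo 0 1 := support_fourier_iterate_derivCLM_subset hη n
  have hχ : support (𝓕 (χ : ℝ → ℂ)) ⊆ Ioo 0 1 :=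
    support_fourier_iterate_mulSubCoord_subset hψ 0 (n + 1)
  have hh'_le := norm_inv_pow_mul_le (n + 1) hρ hfar
  have hh' : MemLp h' 2 := hh.of_le_mul
    ((by fun_prop : Measurable fun t ↦ (((y - t) ^ (n + 1) : ℝ) : ℂ)⁻¹).aestronglyMeasurable.mul
      hh.aestronglyMeasurable) (.of_forall hh'_le)
  have hh'_norm : ρ ^ (n + 1) * (eLpNorm h' 2).toReal ≤ (eLpNorm h 2).toReal := by
    have := ENNReal.toReal_mono (by finiteness [hh.eLpNorm_ne_top])
      (eLpNorm_le_mul_eLpNorm_of_ae_le_mul (.of_forall hh'_le) 2)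
    rwa [ENNReal.toReal_mul, ENNReal.toReal_ofReal (by positivity),
      le_inv_mul_iff₀ (by positivity)] at this
  have hterm (m) : ρ ^ (2 * n + 1) * ‖(((b m - a m) ^ n : ℝ) : ℂ) * rotConv ψ (a m) (b m) h y‖ ^ 2
      ≤ (b m - a m)⁻¹ * ‖conv h (phim ψ (a m) (b m)) y‖ ^ 2 +
        (ρ ^ (n + 1)) ^ 2 * ((b m - a m)⁻¹ * ‖conv h' (phim χ (a m) (b m)) y‖ ^ 2) := by
    have hL : 0 < b m - a m := sub_pos.2 (hab.1 m)
    rw [norm_conv_phim_iterate_mulSubCoord ψ (n + 1) hρ hfar, norm_mul, norm_rotConv,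
      Complex.norm_real, norm_pow, norm_of_nonneg hL.le, abs_of_pos hL]
    exact pow_mul_sq_le_inv_mul_sq_add hL hρ n _
  rw [iteratedDeriv_rotFamily η hab.1 (isTempered_of_memLp_two hh), EuclideanSpace.norm_sq_eq,
    Finset.mul_sum]
  calc _ ≤ ∑ m, ((b m - a m)⁻¹ * ‖conv h (phim ψ (a m) (b m)) y‖ ^ 2 +
        (ρ ^ (n + 1)) ^ 2 * ((b m - a m)⁻¹ * ‖conv h' (phim χ (a m) (b m)) y‖ ^ 2)) :=
        Finset.sum_le_sum fun m _ ↦ hterm m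
    _ ≤ (‖ψ.toLp 2 volume‖ * (eLpNorm h 2).toReal) ^ 2 +
        (ρ ^ (n + 1)) ^ 2 * (‖χ.toLp 2 volume‖ * (eLpNorm h' 2).toReal) ^ 2 := by
        rw [Finset.sum_add_distrib, ← Finset.mul_sum]
        gcongr
        · exact sum_inv_mul_norm_conv_phim_sq_le hψ hab hh y
        · exact sum_inv_mul_norm_conv_phim_sq_le hχ hab hh' y
    _ = (‖ψ.toLp 2 volume‖ * (eLpNorm h 2).toReal) ^ 2 +
        (‖χ.toLp 2 volume‖ * (ρ ^ (n + 1) * (eLpNorm h' 2).toReal)) ^ 2 := by ring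
    _ ≤ (‖ψ.toLp 2 volume‖ * (eLpNorm h 2).toReal) ^ 2 +
        (‖χ.toLp 2 volume‖ * (eLpNorm h 2).toReal) ^ 2 := by gcongr
    _ = _ := by ring

/-- The constant of the pointwise decay estimate `enorm_iteratedDeriv_rotFamily_le`. -/
noncomputable def rotDerivConst (η : SchwartzMap ℝ ℂ) (n : ℕ) : ℝ≥0 :=
  (√(‖((SchwartzMap.derivCLM ℂ ℂ)^[n] η).toLp 2 volume‖ ^ 2 +
    ‖((mulSubCoord 0)^[n + 1] ((SchwartzMap.derivCLM ℂ ℂ)^[n] η)).toLp 2 volume‖ ^ 2)).toNNReal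

lemma enorm_iteratedDeriv_rotFamily_le {η : SchwartzMap ℝ ℂ}
    (hη : support (𝓕 (η : ℝ → ℂ)) ⊆ Ioo 0 1) (hab : Admissible a b) {h : ℝ → ℂ} (hh : MemLp h 2)
    (n : ℕ) {ρ y : ℝ} (hρ : 0 < ρ) (hfar : ∀ t, |t - y| < ρ → h t = 0) :
    ENNReal.ofReal (ρ ^ n * √ρ) * ‖iteratedDeriv n (rotFamily η a b h) y‖ₑ ≤
      rotDerivConst η n * eLpNorm h 2 volume := by
  rw [rotDerivConst]
  set B := ‖((SchwartzMap.derivCLM ℂ ℂ)^[n] η).toLp 2 volume‖ ^ 2 +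
    ‖((mulSubCoord 0)^[n + 1] ((SchwartzMap.derivCLM ℂ ℂ)^[n] η)).toLp 2 volume‖ ^ 2
  have hB : 0 ≤ B := by positivity
  have hreal : ρ ^ n * √ρ * ‖iteratedDeriv n (rotFamily η a b h) y‖ ≤
      √B * (eLpNorm h 2 volume).toReal := by
    refine (pow_le_pow_iff_left₀ (by positivity) (by positivity) two_ne_zero).1 ?_
    calc (ρ ^ n * √ρ * ‖iteratedDeriv n (rotFamily η a b h) y‖) ^ 2
        = ρ ^ (2 * n + 1) * ‖iteratedDeriv n (rotFamily η a b h) y‖ ^ 2 := by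
          rw [mul_pow, mul_pow, sq_sqrt hρ.le]
          ring
      _ ≤ B * (eLpNorm h 2 volume).toReal ^ 2 :=
          pow_mul_norm_iteratedDeriv_rotFamily_sq_le hη hab hh n hρ hfar
      _ = (√B * (eLpNorm h 2 volume).toReal) ^ 2 := by rw [mul_pow, sq_sqrt hB]
  have := ENNReal.ofReal_le_ofReal hreal
  rwa [ENNReal.ofReal_mul (p := ρ ^ n * √ρ) (by positivity), ofReal_norm,
    ENNReal.ofReal_mul (p := √B) (by positivity),
    ENNReal.ofReal_toReal hh.eLpNorm_ne_top] at this

end DistantData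

section PolynomialSelection

open scoped ProbabilityTheory

lemma eLpNorm_sub_le_of_Icc_subset {E : Type*} [NormedAddCommGroup E] {p : ℝ≥0∞}
    (hp : 1 ≤ p) (hp' : p ≠ ∞) {f P P' : ℝ → E} (hf : AEStronglyMeasurable f) (hP : Continuous P)
    (hP' : Continuous P') {u v u' v' K : ℝ} (huv : u < v) (hsub : Icc u v ⊆ Icc u' v')
    (hK : v' - u' ≤ K * (v - u)) (hK1 : 1 ≤ K) :
    eLpNorm (P' - P) p volume[|Icc u v] ≤ eLpNorm (f - P) p volume[|Icc u v] +
      ENNReal.ofReal K * eLpNorm (f - P') p volume[|Icc u' v'] := by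
  have hmeas {R : ℝ → E} (hR : Continuous R) : AEStronglyMeasurable (f - R) volume[|Icc u v] :=
    (hf.sub hR.aestronglyMeasurable).mono_ac ProbabilityTheory.cond_absolutelyContinuous
  have hroot : ENNReal.ofReal K ^ (1 / p).toReal ≤ ENNReal.ofReal K := by
    have hexp : (1 / p).toReal ≤ 1 :=
      ENNReal.toReal_le_of_le_ofReal one_pos.le (by simpa using hp)
    simpa using ENNReal.rpow_le_rpow_of_exponent_le (ENNReal.one_le_ofReal.2 hK1) hexp
  calc eLpNorm (P' - P) p volume[|Icc u v]
      = eLpNorm ((f - P) - (f - P')) p volume[|Icc u v] := by rw [sub_sub_sub_cancel_left]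
    _ ≤ eLpNorm (f - P) p volume[|Icc u v] + eLpNorm (f - P') p volume[|Icc u v] :=
        eLpNorm_sub_le (hmeas hP) (hmeas hP') hp
    _ ≤ _ := by
        gcongr
        exact (eLpNorm_cond_Icc_le huv hsub hK hp' (f - P')).trans (by gcongr)

variable {E : Type*} [NormedAddCommGroup E] [NormedSpace ℝ E]

lemma enorm_sub_le_of_mem_polyFun_dyadic {k : ℕ} {q : ℝ} (hq : 2 ^ k ≤ q) {p : ℝ≥0∞} (hp : 1 ≤ p)
    (hp' : p ≠ ∞) {f : ℝ → E} (hf : AEStronglyMeasurable f) {c l : ℝ} (hl : 0 < l) {A : ℝ≥0∞}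
    {P : ℕ → ℝ → E} (hP : ∀ j, P j ∈ polyFun E (k + 1))
    (hle : ∀ j, eLpNorm (f - P j) p volume[|Icc (c - 2 ^ j * l) (c + 2 ^ j * l)] ≤
      ENNReal.ofReal (q ^ j) * A) {i j : ℕ} (hij : i ≤ j) {y : ℝ}
    (hy : y ∈ Icc (c - 2 ^ j * l) (c + 2 ^ j * l)) :
    ‖P (i + 1) y - P i y‖ₑ ≤
      ENNReal.ofReal ((2 * (k + 1)) ^ (k + 2) * (1 + 2 * q) * q ^ j) * A := by
  have hq0 : 0 < q := (pow_pos two_pos k).trans_le hq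
  have hri : 0 < 2 ^ i * l := by positivity
  have hcont (j) := continuous_of_mem_polyFun (hP j)
  have hinc : eLpNorm (P (i + 1) - P i) p volume[|Icc (c - 2 ^ i * l) (c + 2 ^ i * l)] ≤
      ENNReal.ofReal (q ^ i * (1 + 2 * q)) * A := by
    have hlt : c - 2 ^ i * l < c + 2 ^ i * l := by linarith
    have hsub : Icc (c - 2 ^ i * l) (c + 2 ^ i * l) ⊆
        Icc (c - 2 ^ (i + 1) * l) (c + 2 ^ (i + 1) * l) := by
      rw [pow_succ]
      exact Icc_subset_Icc (by linarith) (by linarith)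
    refine (eLpNorm_sub_le_of_Icc_subset (K := 2) hp hp' hf (hcont i) (hcont (i + 1)) hlt hsub
      (by rw [pow_succ]; linarith) one_le_two).trans ?_
    calc _ ≤ ENNReal.ofReal (q ^ i) * A + ENNReal.ofReal 2 * (ENNReal.ofReal (q ^ (i + 1)) * A) :=
          add_le_add (hle i) (mul_le_mul_right (hle (i + 1)) _)
      _ = ENNReal.ofReal (q ^ i * (1 + 2 * q)) * A := by
          rw [← mul_assoc, ← add_mul, ← ENNReal.ofReal_mul two_pos.le,
            ← ENNReal.ofReal_add (by positivity) (by positivity)]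
          ring_nf
  have hpow : (2 : ℝ) ^ (j - i) * 2 ^ i = 2 ^ j := by rw [← pow_add, Nat.sub_add_cancel hij]
  calc ‖P (i + 1) y - P i y‖ₑ
      ≤ ENNReal.ofReal ((2 * (k + 1)) ^ (k + 2) * (2 ^ (j - i)) ^ k) *
          (ENNReal.ofReal (q ^ i * (1 + 2 * q)) * A) :=
        (enorm_le_eLpNorm_cond_of_mem_polyFun ((polyFun E _).sub_mem (hP (i + 1)) (hP i)) hri
          (one_le_pow₀ one_le_two) (by
            rw [← mul_assoc, hpow, abs_le]
            constructor <;> linarith [hy.1, hy.2]) hp).trans (mul_le_mul_right hinc _)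
    _ = ENNReal.ofReal ((2 * (k + 1)) ^ (k + 2) * (1 + 2 * q) * ((2 ^ k) ^ (j - i) * q ^ i)) *
          A := by
        rw [← mul_assoc, ← ENNReal.ofReal_mul (by positivity), pow_right_comm]
        ring_nf
    _ ≤ ENNReal.ofReal ((2 * (k + 1)) ^ (k + 2) * (1 + 2 * q) * (q ^ (j - i) * q ^ i)) * A := by
        gcongr
    _ = _ := by rw [← pow_add, Nat.sub_add_cancel hij]

lemma exists_mem_polyFun_forall_eLpNorm_sub_le {k : ℕ} {q : ℝ} (hq : 2 ^ k ≤ q) {p : ℝ≥0∞}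
    (hp : 1 ≤ p) (hp' : p ≠ ∞) {f : ℝ → E} (hf : AEStronglyMeasurable f) {c l : ℝ} (hl : 0 < l)
    {A : ℝ≥0∞} (h : ∀ j : ℕ, HasPolyApprox (k + 1) p f (c - 2 ^ j * l) (c + 2 ^ j * l)
      (ENNReal.ofReal (q ^ j) * A)) :
    ∃ Q ∈ polyFun E (k + 1), ∀ j : ℕ,
      eLpNorm (f - Q) p volume[|Icc (c - 2 ^ j * l) (c + 2 ^ j * l)] ≤
        ENNReal.ofReal ((1 + (2 * (k + 1)) ^ (k + 2) * (1 + 2 * q)) * (j + 1) * q ^ j) * A := by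
  choose P hP hle using h
  refine ⟨P 0, hP 0, fun j ↦ ?_⟩
  have hq0 : 0 < q := (pow_pos two_pos k).trans_le hq
  set K : ℝ := (2 * (k + 1)) ^ (k + 2) * (1 + 2 * q)
  have hK : 0 ≤ K := by positivity
  set μ := volume[|Icc (c - 2 ^ j * l) (c + 2 ^ j * l)]
  have : IsProbabilityMeasure μ := isProbabilityMeasure_cond_Icc (by
    have : 0 < 2 ^ j * l := by positivity
    linarith)
  have htel (t) (ht : t ∈ Icc (c - 2 ^ j * l) (c + 2 ^ j * l)) :
      ‖(P j - P 0) t‖ₑ ≤ j * (ENNReal.ofReal (K * q ^ j) * A) := by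
    rw [Pi.sub_apply, ← Finset.sum_range_sub (fun i ↦ P i t) j]
    refine (enorm_sum_le _ _).trans ((Finset.sum_le_card_nsmul _ _ _ fun i hi ↦
      enorm_sub_le_of_mem_polyFun_dyadic hq hp hp' hf hl hP hle (Finset.mem_range.1 hi).le
        ht).trans_eq ?_)
    rw [Finset.card_range, nsmul_eq_mul]
  have hPdiff : eLpNorm (P j - P 0) p μ ≤ j * (ENNReal.ofReal (K * q ^ j) * A) := by
    refine (eLpNorm_le_of_ae_enorm_bound (C := j * (ENNReal.ofReal (K * q ^ j) * A)) ?_).trans ?_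
    · filter_upwards [ProbabilityTheory.ae_cond_mem measurableSet_Icc] with t ht using htel t ht
    · simp
  calc eLpNorm (f - P 0) p μ = eLpNorm ((f - P j) + (P j - P 0)) p μ := by rw [sub_add_sub_cancel]
    _ ≤ ENNReal.ofReal (q ^ j) * A + j * (ENNReal.ofReal (K * q ^ j) * A) := by
        refine (eLpNorm_add_le ?_ ?_ hp).trans (add_le_add (hle j) hPdiff)
        · exact (hf.sub (continuous_of_mem_polyFun (hP j)).aestronglyMeasurable).mono_ac
            ProbabilityTheory.cond_absolutelyContinuous
        · exact ((continuous_of_mem_polyFun (hP j)).sub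
            (continuous_of_mem_polyFun (hP 0))).aestronglyMeasurable
    _ = ENNReal.ofReal ((1 + K * j) * q ^ j) * A := by
        rw [← mul_assoc, ← ENNReal.ofReal_natCast, ← ENNReal.ofReal_mul (by positivity), ← add_mul,
          ← ENNReal.ofReal_add (by positivity) (by positivity)]
        ring_nf
    _ ≤ _ := by
        gcongr
        nlinarith [mul_nonneg hK (Nat.cast_nonneg (α := ℝ) j)]

end PolynomialSelection

section DyadicShells

open scoped ProbabilityTheory

lemma eLpNorm_restrict_Icc_eq {E : Type*} [NormedAddCommGroup E] {u v : ℝ} (huv : u < v)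
    {p : ℝ≥0∞} (hp : p ≠ ∞) (w : ℝ → E) :
    eLpNorm w p (volume.restrict (Icc u v)) =
      ENNReal.ofReal (v - u) ^ (1 / p).toReal * eLpNorm w p volume[|Icc u v] := by
  have hne : ENNReal.ofReal (v - u) ≠ 0 := by simpa using huv
  rw [← smul_eq_mul, ← eLpNorm_smul_measure_of_ne_top hp, ProbabilityTheory.cond, smul_smul,
    Real.volume_Icc, ENNReal.mul_inv_cancel hne ENNReal.ofReal_ne_top, one_smul]

/-- The annulus `2 ^ j * l ≤ |t - c| < 2 ^ (j + 1) * l`. -/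
def dyadicShell (c l : ℝ) (j : ℕ) : Set ℝ :=
  (fun t ↦ |t - c|) ⁻¹' Ico (2 ^ j * l) (2 ^ (j + 1) * l)

lemma measurableSet_dyadicShell (c l : ℝ) (j : ℕ) : MeasurableSet (dyadicShell c l j) :=
  measurableSet_Ico.preimage (by fun_prop)

lemma monotone_two_pow_mul {l : ℝ} (hl : 0 < l) : Monotone fun j : ℕ ↦ (2 : ℝ) ^ j * l :=
  fun _ _ hij ↦ by
    dsimp only
    gcongr
    exact one_le_two

lemma pairwise_disjoint_dyadicShell (c : ℝ) {l : ℝ} (hl : 0 < l) :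
    Pairwise (Disjoint on dyadicShell c l) :=
  fun _ _ hij ↦ ((monotone_two_pow_mul hl).pairwise_disjoint_on_Ico_succ hij).preimage _

lemma iUnion_dyadicShell (c : ℝ) {l : ℝ} (hl : 0 < l) :
    ⋃ j, dyadicShell c l j = (Ioo (c - l) (c + l))ᶜ := by
  have hunbdd : ¬ BddAbove (range fun j : ℕ ↦ (2 : ℝ) ^ j * l) :=
    Filter.not_bddAbove_of_tendsto_atTop
      ((tendsto_pow_atTop_atTop_of_one_lt one_lt_two).atTop_mul_const hl)
  have hcover : ⋃ j : ℕ, Ico ((2 : ℝ) ^ j * l) (2 ^ (j + 1) * l) = Ici l := by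
    simpa using iUnion_Ico_map_succ_eq_Ici
      (fun j ↦ monotone_two_pow_mul hl (Nat.zero_le j)) hunbdd
  simp only [dyadicShell, ← preimage_iUnion, hcover, ← Real.ball_eq_Ioo]
  ext t
  simp [Real.dist_eq]

lemma dyadicShell_subset_Icc (c l : ℝ) (j : ℕ) :
    dyadicShell c l j ⊆ Icc (c - 2 ^ (j + 1) * l) (c + 2 ^ (j + 1) * l) := fun t ht ↦ by
  have := abs_lt.1 ht.2
  constructor <;> linarith

/-- The tail `∑ⱼ (2ʲl)⁻ⁿ (⨍ |w|²)^{1/2}` of dyadic means over the intervals `|t - c| ≤ 2ʲl`; it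
controls both the integrability of `w` against Schwartz functions and the influence of distant
values of `w` on the derivatives of its rotated family. -/
noncomputable def dyadicTail (n : ℕ) (w : ℝ → ℂ) (c l : ℝ) : ℝ≥0∞ :=
  ∑' j : ℕ, ENNReal.ofReal ((2 ^ j * l) ^ n)⁻¹ *
    eLpNorm w 2 volume[|Icc (c - 2 ^ j * l) (c + 2 ^ j * l)]

variable {n : ℕ} {w : ℝ → ℂ} {c l : ℝ}

lemma sub_two_pow_lt_add_two_pow (c : ℝ) (hl : 0 < l) (j : ℕ) :
    c - 2 ^ j * l < c + 2 ^ j * l := by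
  have : 0 < 2 ^ j * l := by positivity
  linarith

lemma eLpNorm_cond_Icc_ne_top_of_dyadicTail (hl : 0 < l) (h : dyadicTail n w c l ≠ ∞) (j : ℕ) :
    eLpNorm w 2 volume[|Icc (c - 2 ^ j * l) (c + 2 ^ j * l)] ≠ ∞ := by
  have hpos : 0 < ((2 ^ j * l) ^ n)⁻¹ := by positivity
  have hterm := ne_top_of_le_ne_top h (ENNReal.le_tsum j)
  exact (ENNReal.lt_top_of_mul_ne_top_right hterm (by simpa using hpos)).ne

lemma setLIntegral_Icc_enorm_le (hw : AEStronglyMeasurable w) (u v : ℝ) :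
    ∫⁻ t in Icc u v, ‖w t‖ₑ ≤ ENNReal.ofReal (v - u) * eLpNorm w 2 volume[|Icc u v] := by
  rcases le_or_gt v u with hvu | huv
  · rw [setLIntegral_measure_zero _ _ (by simpa using hvu)]
    exact zero_le
  have := isProbabilityMeasure_cond_Icc huv
  have hL1 := eLpNorm_restrict_Icc_eq huv ENNReal.one_ne_top w
  rw [eLpNorm_one_eq_lintegral_enorm] at hL1
  rw [hL1]
  simp only [div_one, ENNReal.toReal_one, ENNReal.rpow_one]
  gcongr
  exact eLpNorm_le_eLpNorm_of_exponent_le one_le_two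
    (hw.mono_ac ProbabilityTheory.cond_absolutelyContinuous)

lemma setLIntegral_dyadicShell_le (hw : AEStronglyMeasurable w) (hl : 0 < l) (n j : ℕ) :
    ∫⁻ t in dyadicShell c l j, ‖((1 + |t|) ^ (n + 1))⁻¹ • w t‖ₑ ≤
      ENNReal.ofReal (2 ^ (n + 2) * (1 + |c|) ^ (n + 1)) *
        (ENNReal.ofReal ((2 ^ (j + 1) * l) ^ n)⁻¹ *
          eLpNorm w 2 volume[|Icc (c - 2 ^ (j + 1) * l) (c + 2 ^ (j + 1) * l)]) := by
  have hweight (t) (ht : t ∈ dyadicShell c l j) : ‖((1 + |t|) ^ (n + 1))⁻¹ • w t‖ₑ ≤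
      ENNReal.ofReal ((1 + |c|) ^ (n + 1) * ((2 ^ j * l) ^ (n + 1))⁻¹) * ‖w t‖ₑ := by
    rw [enorm_smul, Real.enorm_of_nonneg (by positivity)]
    gcongr
    rw [← div_eq_mul_inv, le_div_iff₀ (by positivity), inv_mul_le_iff₀ (by positivity), ← mul_pow]
    refine pow_le_pow_left₀ (by positivity) ?_ _
    calc 2 ^ j * l ≤ |t - c| := ht.1
      _ ≤ |t| + |c| := abs_sub _ _
      _ ≤ (1 + |t|) * (1 + |c|) := by nlinarith [abs_nonneg t, abs_nonneg c]
  calc ∫⁻ t in dyadicShell c l j, ‖((1 + |t|) ^ (n + 1))⁻¹ • w t‖ₑ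
      ≤ ∫⁻ t in dyadicShell c l j,
          ENNReal.ofReal ((1 + |c|) ^ (n + 1) * ((2 ^ j * l) ^ (n + 1))⁻¹) * ‖w t‖ₑ :=
        setLIntegral_mono' (measurableSet_dyadicShell c l j) hweight
    _ ≤ ENNReal.ofReal ((1 + |c|) ^ (n + 1) * ((2 ^ j * l) ^ (n + 1))⁻¹) *
          (ENNReal.ofReal (2 ^ (j + 2) * l) *
            eLpNorm w 2 volume[|Icc (c - 2 ^ (j + 1) * l) (c + 2 ^ (j + 1) * l)]) := by
        rw [lintegral_const_mul' _ _ ENNReal.ofReal_ne_top]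
        gcongr
        refine (lintegral_mono_set (dyadicShell_subset_Icc c l j)).trans
          ((setLIntegral_Icc_enorm_le hw _ _).trans_eq ?_)
        ring_nf
    _ = _ := by
        rw [← mul_assoc, ← mul_assoc, ← ENNReal.ofReal_mul (by positivity),
          ← ENNReal.ofReal_mul (by positivity)]
        congr 2
        field_simp
        ring

lemma isTempered_of_dyadicTail_ne_top (hw : AEStronglyMeasurable w) (hl : 0 < l)
    (h : dyadicTail n w c l ≠ ∞) : IsTempered w := by
  set F : ℝ → ℂ := fun t ↦ ((1 + |t|) ^ (n + 1))⁻¹ • w t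
  have near : ∫⁻ t in Ioo (c - l) (c + l), ‖F t‖ₑ ≠ ∞ := by
    refine ne_top_of_le_ne_top ?_ (calc
      ∫⁻ t in Ioo (c - l) (c + l), ‖F t‖ₑ ≤ ∫⁻ t in Icc (c - l) (c + l), ‖w t‖ₑ := by
        refine (lintegral_mono fun t ↦ ?_).trans (lintegral_mono_set Ioo_subset_Icc_self)
        rw [enorm_smul, Real.enorm_of_nonneg (by positivity)]
        refine mul_le_of_le_one_left (zero_le) (ENNReal.ofReal_le_one.2 (inv_le_one_of_one_le₀ ?_))
        exact one_le_pow₀ (by linarith [abs_nonneg t])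
      _ ≤ _ := setLIntegral_Icc_enorm_le hw _ _)
    have := eLpNorm_cond_Icc_ne_top_of_dyadicTail hl h 0
    rw [pow_zero, one_mul] at this
    finiteness
  have far : ∫⁻ t in (Ioo (c - l) (c + l))ᶜ, ‖F t‖ₑ ≠ ∞ := by
    rw [← iUnion_dyadicShell c hl]
    refine ne_top_of_le_ne_top ?_ ((lintegral_iUnion_le _ _).trans (ENNReal.tsum_le_tsum fun j ↦
      setLIntegral_dyadicShell_le hw hl n j))
    rw [ENNReal.tsum_mul_left]
    refine ENNReal.mul_ne_top ENNReal.ofReal_ne_top (ne_top_of_le_ne_top h ?_)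
    exact ENNReal.tsum_comp_le_tsum_of_injective (add_left_injective 1) _
  refine ⟨n + 1, (continuous_one_add_abs_pow_inv _).aestronglyMeasurable.smul hw, ?_⟩
  rw [hasFiniteIntegral_iff_enorm,
    ← lintegral_add_compl _ (measurableSet_Ioo (a := c - l) (b := c + l))]
  finiteness

lemma ofReal_sqrt_mul_eLpNorm_two_cond_Icc {E : Type*} [NormedAddCommGroup E] {u v : ℝ}
    (huv : u < v) (w : ℝ → E) :
    ENNReal.ofReal √(v - u) * eLpNorm w 2 volume[|Icc u v] =
      eLpNorm w 2 (volume.restrict (Icc u v)) := by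
  rw [eLpNorm_restrict_Icc_eq huv ENNReal.ofNat_ne_top,
    ENNReal.ofReal_rpow_of_pos (sub_pos.2 huv), Real.sqrt_eq_rpow]
  simp

lemma eLpNorm_two_indicator_le {E : Type*} [NormedAddCommGroup E] {S : Set ℝ}
    (hS : MeasurableSet S) {u v : ℝ} (huv : u < v) (hsub : S ⊆ Icc u v) (w : ℝ → E) :
    eLpNorm (S.indicator w) 2 volume ≤ ENNReal.ofReal √(v - u) * eLpNorm w 2 volume[|Icc u v] := by
  rw [eLpNorm_indicator_eq_eLpNorm_restrict hS]
  refine (eLpNorm_mono_measure _ (Measure.restrict_mono hsub le_rfl)).trans_eq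
    (ofReal_sqrt_mul_eLpNorm_two_cond_Icc huv w).symm

lemma dyadicTail_le {D q : ℝ} (hD : 0 ≤ D) (hq : 0 ≤ q) (hqn : q < 2 ^ n) (hl : 0 < l) {A : ℝ≥0∞}
    (h : ∀ j : ℕ, eLpNorm w 2 volume[|Icc (c - 2 ^ j * l) (c + 2 ^ j * l)] ≤
      ENNReal.ofReal (D * (j + 1) * q ^ j) * A) :
    dyadicTail n w c l ≤
      ENNReal.ofReal (D * (l ^ n)⁻¹ * ∑' j : ℕ, (j + 1) * (q / 2 ^ n) ^ j) * A := by
  have hr0 : 0 ≤ q / 2 ^ n := by positivity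
  have hr1 : ‖q / 2 ^ n‖ < 1 := by
    rwa [norm_of_nonneg hr0, div_lt_one (by positivity)]
  have hsum : Summable fun j : ℕ ↦ ((j : ℝ) + 1) * (q / 2 ^ n) ^ j := by
    simpa only [add_mul, one_mul, pow_one] using
      (summable_pow_mul_geometric_of_norm_lt_one 1 hr1).add (summable_geometric_of_norm_lt_one hr1)
  rw [ENNReal.ofReal_mul (by positivity),
    ENNReal.ofReal_tsum_of_nonneg (fun j ↦ by positivity) hsum, ← ENNReal.tsum_mul_left,
    ← ENNReal.tsum_mul_right]
  refine ENNReal.tsum_le_tsum fun j ↦ (mul_le_mul_right (h j) _).trans_eq ?_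
  rw [← mul_assoc, ← ENNReal.ofReal_mul (by positivity), ← ENNReal.ofReal_mul (by positivity)]
  congr 2
  rw [mul_pow, div_pow, pow_right_comm]
  field_simp

end DyadicShells

section RotatedFamilyApproximation

open scoped ProbabilityTheory

variable {η : SchwartzMap ℝ ℂ} {N : ℕ} {a b : Fin N → ℝ} {w : ℝ → ℂ} {c l : ℝ}

lemma enorm_iteratedDeriv_rotFamily_dyadicShell_le {n : ℕ}
    (hη : support (𝓕 (η : ℝ → ℂ)) ⊆ Ioo 0 1) (hab : Admissible a b)
    (hw : AEStronglyMeasurable w) (hl : 0 < l) (htail : dyadicTail n w c l ≠ ∞) {y : ℝ}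
    (hy : |y - c| ≤ l / 2) (j : ℕ) :
    ‖iteratedDeriv n (rotFamily η a b ((dyadicShell c l j).indicator w)) y‖ₑ ≤
      rotDerivConst η n * ENNReal.ofReal (4 ^ n * √8) * (ENNReal.ofReal ((2 ^ (j + 1) * l) ^ n)⁻¹ *
        eLpNorm w 2 volume[|Icc (c - 2 ^ (j + 1) * l) (c + 2 ^ (j + 1) * l)]) := by
  set ρ := 2 ^ j * l / 2 with hρ_def
  have hρ : 0 < ρ := by positivity
  set e := eLpNorm w 2 volume[|Icc (c - 2 ^ (j + 1) * l) (c + 2 ^ (j + 1) * l)]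
  have hnorm :
      eLpNorm ((dyadicShell c l j).indicator w) 2 volume ≤ ENNReal.ofReal √(8 * ρ) * e := by
    convert eLpNorm_two_indicator_le (measurableSet_dyadicShell c l j)
      (sub_two_pow_lt_add_two_pow c hl (j + 1)) (dyadicShell_subset_Icc c l j) w using 4
    rw [hρ_def]
    ring
  have hmem : MemLp ((dyadicShell c l j).indicator w) 2 :=
    ⟨hw.indicator (measurableSet_dyadicShell c l j), hnorm.trans_lt <|
      ENNReal.mul_lt_top ENNReal.ofReal_lt_top
        (eLpNorm_cond_Icc_ne_top_of_dyadicTail hl htail (j + 1)).lt_top⟩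
  have hfar (t : ℝ) (ht : |t - y| < ρ) : (dyadicShell c l j).indicator w t = 0 := by
    refine indicator_of_notMem (fun htj ↦ ?_) _
    have h1 := htj.1
    have h2 : l ≤ 2 ^ j * l := le_mul_of_one_le_left hl.le (one_le_pow₀ one_le_two)
    linarith [abs_sub_le t y c]
  have hconst : (ρ ^ n * √ρ)⁻¹ * √(8 * ρ) = 4 ^ n * √8 * ((2 ^ (j + 1) * l) ^ n)⁻¹ := by
    rw [sqrt_mul (by norm_num), show 2 ^ (j + 1) * l = 4 * ρ by rw [hρ_def]; ring]
    rw [mul_pow 4 ρ]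
    field_simp
  calc ‖iteratedDeriv n (rotFamily η a b ((dyadicShell c l j).indicator w)) y‖ₑ
      = ENNReal.ofReal (ρ ^ n * √ρ)⁻¹ * (ENNReal.ofReal (ρ ^ n * √ρ) *
          ‖iteratedDeriv n (rotFamily η a b ((dyadicShell c l j).indicator w)) y‖ₑ) := by
        rw [← mul_assoc, ← ENNReal.ofReal_mul (by positivity), inv_mul_cancel₀ (by positivity),
          ENNReal.ofReal_one, one_mul]
    _ ≤ ENNReal.ofReal (ρ ^ n * √ρ)⁻¹ *
          (rotDerivConst η n * (ENNReal.ofReal √(8 * ρ) * e)) := by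
        gcongr ENNReal.ofReal _ * ?_
        exact (enorm_iteratedDeriv_rotFamily_le hη hab hmem n hρ hfar).trans (by gcongr)
    _ = rotDerivConst η n * (ENNReal.ofReal ((ρ ^ n * √ρ)⁻¹ * √(8 * ρ)) * e) := by
        rw [ENNReal.ofReal_mul (p := (ρ ^ n * √ρ)⁻¹) (by positivity)]
        ring
    _ = _ := by
        rw [hconst, ENNReal.ofReal_mul (p := 4 ^ n * √8) (by positivity)]
        ring

lemma enorm_iteratedDeriv_rotFamily_compl_Ioo_le (hη : support (𝓕 (η : ℝ → ℂ)) ⊆ Ioo 0 1)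
    (hab : Admissible a b) {n : ℕ} (hw : AEStronglyMeasurable w) (hl : 0 < l)
    (htail : dyadicTail n w c l ≠ ∞) {y : ℝ} (hy : |y - c| ≤ l / 2) :
    ‖iteratedDeriv n (rotFamily η a b ((Ioo (c - l) (c + l))ᶜ.indicator w)) y‖ₑ ≤
      rotDerivConst η n * ENNReal.ofReal (4 ^ n * √8) * dyadicTail n w c l := by
  rw [← iUnion_dyadicShell c hl]
  refine (enorm_iteratedDeriv_rotFamily_indicator_iUnion_le η hab.1
    (isTempered_of_dyadicTail_ne_top hw hl htail) (measurableSet_dyadicShell c l)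
    (pairwise_disjoint_dyadicShell c hl) n y).trans ?_
  refine (ENNReal.tsum_le_tsum fun j ↦
    enorm_iteratedDeriv_rotFamily_dyadicShell_le hη hab hw hl htail hy j).trans ?_
  rw [ENNReal.tsum_mul_left]
  gcongr
  exact ENNReal.tsum_comp_le_tsum_of_injective (add_left_injective 1) _

lemma hasPolyApprox_rotFamily_compl_Ioo (hη : support (𝓕 (η : ℝ → ℂ)) ⊆ Ioo 0 1)
    (hab : Admissible a b) {n : ℕ} {p : ℝ≥0∞} (hw : AEStronglyMeasurable w) (hl : 0 < l)
    (htail : dyadicTail (n + 1) w c l ≠ ∞) :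
    HasPolyApprox (n + 1) p (rotFamily η a b ((Ioo (c - l) (c + l))ᶜ.indicator w))
      (c - l / 2) (c + l / 2) (rotDerivConst η (n + 1) * ENNReal.ofReal (4 ^ (n + 1) * √8) *
        dyadicTail (n + 1) w c l * ENNReal.ofReal (l ^ (n + 1))) := by
  set G := rotFamily η a b ((Ioo (c - l) (c + l))ᶜ.indicator w)
  set M := rotDerivConst η (n + 1) * ENNReal.ofReal (4 ^ (n + 1) * √8) *
    dyadicTail (n + 1) w c l
  have hM : M ≠ ∞ := by finiteness
  have huv : c - l / 2 < c + l / 2 := by linarith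
  have hG : ContDiff ℝ (n + 1) G := contDiff_rotFamily η hab.1
    ((isTempered_of_dyadicTail_ne_top hw hl htail).indicator measurableSet_Ioo.compl)
  have hderiv (t) (ht : t ∈ Icc (c - l / 2) (c + l / 2)) :
      ‖iteratedDeriv (n + 1) G t‖ ≤ M.toReal := by
    rw [← toReal_enorm]
    exact ENNReal.toReal_mono hM (enorm_iteratedDeriv_rotFamily_compl_Ioo_le hη hab hw hl htail
      (abs_le.2 ⟨by linarith [ht.1], by linarith [ht.2]⟩))
  obtain ⟨P, hP, hle⟩ := exists_mem_polyFun_norm_sub_le hG huv hderiv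
  have := isProbabilityMeasure_cond_Icc huv
  refine ⟨P, hP, (eLpNorm_le_of_ae_bound (C := M.toReal * l ^ (n + 1)) ?_).trans_eq ?_⟩
  · filter_upwards [ProbabilityTheory.ae_cond_mem measurableSet_Icc] with t ht
    exact (hle t ht).trans_eq (by ring)
  · rw [ENNReal.ofReal_mul ENNReal.toReal_nonneg, ENNReal.ofReal_toReal hM]
    simp

lemma eLpNorm_rotFamily_two_le (hη : support (𝓕 (η : ℝ → ℂ)) ⊆ Ioo 0 1) (hab : Admissible a b)
    {B : ℝ≥0} (hB : ∀ ξ, ‖𝓕 (η : ℝ → ℂ) ξ‖ₑ ≤ B) {h : ℝ → ℂ} (hh : MemLp h 2) :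
    eLpNorm (rotFamily η a b h) 2 volume ≤ B * eLpNorm h 2 volume := by
  refine (ENNReal.pow_le_pow_left_iff two_ne_zero).1 ?_
  have hnorm (y : ℝ) : ‖rotFamily η a b h y‖ₑ ^ 2 =
      ∑ m, ‖conv h (phimSchwartz η (hab.1 m)) y‖ₑ ^ 2 := by
    simp only [coe_phimSchwartz, ← ofReal_norm, ← norm_rotConv]
    rw [← ENNReal.ofReal_pow (norm_nonneg _), EuclideanSpace.norm_sq_eq,
      ENNReal.ofReal_sum_of_nonneg fun _ _ ↦ by positivity]
    simp only [ENNReal.ofReal_pow, norm_nonneg, rotFamily]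
  rw [eLpNorm_two_sq, lintegral_congr hnorm]
  refine lintegral_sum_enorm_conv_sq_le (pairwise_disjoint_support_fourier_phimSchwartz hη hab)
    (fun m ξ ↦ ?_) hh
  rw [fourier_phimSchwartz]
  exact hB _

lemma eLpNorm_rotFamily_Ioo_le (hη : support (𝓕 (η : ℝ → ℂ)) ⊆ Ioo 0 1) (hab : Admissible a b)
    {B : ℝ≥0} (hB : ∀ ξ, ‖𝓕 (η : ℝ → ℂ) ξ‖ₑ ≤ B) (hw : AEStronglyMeasurable w) (hl : 0 < l)
    (hfin : eLpNorm w 2 volume[|Icc (c - l) (c + l)] ≠ ∞) :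
    eLpNorm (rotFamily η a b ((Ioo (c - l) (c + l)).indicator w)) 2
        volume[|Icc (c - l / 2) (c + l / 2)] ≤
      ENNReal.ofReal √2 * B * eLpNorm w 2 volume[|Icc (c - l) (c + l)] := by
  have huv : c - l / 2 < c + l / 2 := by linarith
  have hlocal := eLpNorm_two_indicator_le measurableSet_Ioo (by linarith : c - l < c + l)
    Ioo_subset_Icc_self w
  have hmem : MemLp ((Ioo (c - l) (c + l)).indicator w) 2 :=
    ⟨hw.indicator measurableSet_Ioo, hlocal.trans_lt (by finiteness)⟩
  have hsqrt : ENNReal.ofReal √l ≠ 0 := by simpa using hl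
  refine (ENNReal.mul_le_mul_iff_right hsqrt ENNReal.ofReal_ne_top).1 ?_
  calc ENNReal.ofReal √l * eLpNorm (rotFamily η a b ((Ioo (c - l) (c + l)).indicator w)) 2
        volume[|Icc (c - l / 2) (c + l / 2)]
      ≤ eLpNorm (rotFamily η a b ((Ioo (c - l) (c + l)).indicator w)) 2 volume := by
        convert eLpNorm_mono_measure _ (Measure.restrict_le_self (s := Icc (c - l / 2) (c + l / 2)))
        rw [← ofReal_sqrt_mul_eLpNorm_two_cond_Icc huv]
        ring_nf
    _ ≤ B * (ENNReal.ofReal √(c + l - (c - l)) * eLpNorm w 2 volume[|Icc (c - l) (c + l)]) :=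
        (eLpNorm_rotFamily_two_le hη hab hB hmem).trans (by gcongr)
    _ = _ := by
        rw [show c + l - (c - l) = l * 2 by ring, sqrt_mul hl.le,
          ENNReal.ofReal_mul (by positivity)]
        ring

lemma hasPolyApprox_rotFamily_of_dyadicTail (hη : support (𝓕 (η : ℝ → ℂ)) ⊆ Ioo 0 1)
    (hab : Admissible a b) {B : ℝ≥0} (hB : ∀ ξ, ‖𝓕 (η : ℝ → ℂ) ξ‖ₑ ≤ B) {n : ℕ}
    (hw : AEStronglyMeasurable w) (hl : 0 < l) (htail : dyadicTail (n + 1) w c l ≠ ∞) :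
    HasPolyApprox (n + 1) 2 (rotFamily η a b w) (c - l / 2) (c + l / 2)
      ((ENNReal.ofReal √2 * B + rotDerivConst η (n + 1) * ENNReal.ofReal (4 ^ (n + 1) * √8)) *
        (dyadicTail (n + 1) w c l * ENNReal.ofReal (l ^ (n + 1)))) := by
  have hfin : eLpNorm w 2 volume[|Icc (c - l) (c + l)] ≠ ∞ := by
    simpa using eLpNorm_cond_Icc_ne_top_of_dyadicTail hl htail 0
  have hmean : eLpNorm w 2 volume[|Icc (c - l) (c + l)] ≤
      dyadicTail (n + 1) w c l * ENNReal.ofReal (l ^ (n + 1)) := by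
    have hterm : ENNReal.ofReal (l ^ (n + 1))⁻¹ * eLpNorm w 2 volume[|Icc (c - l) (c + l)] ≤
        dyadicTail (n + 1) w c l := by
      refine Eq.trans_le ?_ (ENNReal.le_tsum 0)
      simp
    rwa [ENNReal.ofReal_inv_of_pos (by positivity), mul_comm, ← div_eq_mul_inv,
      ENNReal.div_le_iff (by simpa using pow_pos hl _) ENNReal.ofReal_ne_top] at hterm
  have htemp := isTempered_of_dyadicTail_ne_top hw hl htail
  have hnear := htemp.indicator (measurableSet_Ioo (a := c - l) (b := c + l))
  have hfar := htemp.indicator (measurableSet_Ioo (a := c - l) (b := c + l)).compl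
  have hcont {h : ℝ → ℂ} (hh : IsTempered h) : Continuous (rotFamily η a b h) :=
    (contDiff_rotFamily η hab.1 hh (n := 0)).continuous
  obtain ⟨P, hP, hle⟩ := hasPolyApprox_rotFamily_compl_Ioo (p := 2) hη hab hw hl htail
  refine ⟨P, hP, ?_⟩
  have hsplit : rotFamily η a b w = rotFamily η a b ((Ioo (c - l) (c + l)).indicator w) +
      rotFamily η a b ((Ioo (c - l) (c + l))ᶜ.indicator w) := by
    rw [← rotFamily_add η hab.1 hnear hfar, indicator_self_add_compl]
  rw [hsplit, add_sub_assoc]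
  refine (eLpNorm_add_le (hcont hnear).aestronglyMeasurable
    ((hcont hfar).sub (continuous_of_mem_polyFun hP)).aestronglyMeasurable one_le_two).trans ?_
  refine (add_le_add ((eLpNorm_rotFamily_Ioo_le hη hab hB hw hl hfin).trans
    (mul_le_mul_right hmean _)) hle).trans_eq ?_
  ring

lemma exists_hasPolyApprox_rotFamily_of_dyadic (hη : support (𝓕 (η : ℝ → ℂ)) ⊆ Ioo 0 1)
    {k : ℕ} {q : ℝ} (hq : 2 ^ k ≤ q) (hq' : q < 2 ^ (k + 1)) :
    ∃ C : ℝ≥0, ∀ {N : ℕ} {a b : Fin N → ℝ}, Admissible a b → ∀ {f : ℝ → ℂ},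
      AEStronglyMeasurable f → ∀ {c l : ℝ}, 0 < l → ∀ {A : ℝ≥0∞}, A ≠ ∞ →
        (∀ j : ℕ, HasPolyApprox (k + 1) 2 f (c - 2 ^ j * l) (c + 2 ^ j * l)
          (ENNReal.ofReal (q ^ j) * A)) →
        IsTempered f ∧ HasPolyApprox (k + 1) 2 (rotFamily η a b f) (c - l / 2) (c + l / 2)
          (C * A) := by
  obtain ⟨B, hB⟩ : ∃ B : ℝ≥0, ∀ ξ, ‖𝓕 (η : ℝ → ℂ) ξ‖ₑ ≤ B := by
    refine ⟨‖SchwartzMap.toBoundedContinuousFunction (𝓕 η)‖₊, fun ξ ↦ ?_⟩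
    rw [← SchwartzMap.fourier_coe]
    exact enorm_le_coe.2 ((SchwartzMap.toBoundedContinuousFunction (𝓕 η)).nnnorm_coe_le_nnnorm ξ)
  set D : ℝ := 1 + (2 * (k + 1)) ^ (k + 2) * (1 + 2 * q)
  set T : ℝ := ∑' j : ℕ, (j + 1) * (q / 2 ^ (k + 1)) ^ j
  have hq0 : 0 < q := (pow_pos two_pos k).trans_le hq
  refine ⟨((ENNReal.ofReal √2 * B + rotDerivConst η (k + 1) *
    ENNReal.ofReal (4 ^ (k + 1) * √8)) * ENNReal.ofReal (D * T)).toNNReal,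
    fun {N a b} hab {f} hf {c l} hl {A} hA h ↦ ?_⟩
  obtain ⟨Q, hQ, hfQ⟩ :=
    exists_mem_polyFun_forall_eLpNorm_sub_le hq one_le_two ENNReal.ofNat_ne_top hf hl h
  have hw : AEStronglyMeasurable (f - Q) :=
    hf.sub (continuous_of_mem_polyFun hQ).aestronglyMeasurable
  have htail_le := dyadicTail_le (n := k + 1) (by positivity) hq0.le hq' hl hfQ
  have htail : dyadicTail (k + 1) (f - Q) c l ≠ ∞ := ne_top_of_le_ne_top (by finiteness) htail_le
  have hwtemp := isTempered_of_dyadicTail_ne_top hw hl htail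
  have hQtemp := isTempered_of_mem_polyFun hQ
  rw [← sub_add_cancel f Q]
  refine ⟨hwtemp.add hQtemp, ?_⟩
  rw [rotFamily_add η hab.1 hwtemp hQtemp, rotFamily_eq_zero_of_mem_polyFun hη hab hQ, add_zero]
  obtain ⟨P, hP, hle⟩ := hasPolyApprox_rotFamily_of_dyadicTail hη hab hB hw hl htail
  refine ⟨P, hP, hle.trans ?_⟩
  rw [ENNReal.coe_toNNReal (by finiteness), mul_assoc]
  refine mul_le_mul_right ((mul_le_mul_left htail_le _).trans_eq ?_) _
  rw [mul_right_comm, ← ENNReal.ofReal_mul (by positivity)]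
  congr 2
  field_simp
  rfl

end RotatedFamilyApproximation

section PolynomialOscillation

open scoped ProbabilityTheory

variable {E : Type*} [NormedAddCommGroup E] [NormedSpace ℝ E]
  {F : Type*} [NormedAddCommGroup F] [NormedSpace ℝ F]
  {n : ℕ} {s : ℝ} {p q : ℝ≥0∞} {g : ℝ → E} {u v x : ℝ}

/-- The distance from `g` to the polynomials of degree less than `n`, in the normalized `L^p` norm
on `[u, v]`. -/
noncomputable def polyOscillation (n : ℕ) (p : ℝ≥0∞) (g : ℝ → E) (u v : ℝ) : ℝ≥0∞ :=
  ⨅ P ∈ polyFun E n, eLpNorm (g - P) p volume[|Icc u v]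

lemma HasPolyApprox.polyOscillation_le {c : ℝ≥0∞} (h : HasPolyApprox n p g u v c) :
    polyOscillation n p g u v ≤ c :=
  let ⟨P, hP, hle⟩ := h
  iInf₂_le_of_le P hP hle

lemma hasPolyApprox_of_polyOscillation_lt {c : ℝ≥0∞} (h : polyOscillation n p g u v < c) :
    HasPolyApprox n p g u v c := by
  simp only [polyOscillation, iInf_lt_iff] at h
  obtain ⟨P, hP, hlt⟩ := h
  exact ⟨P, hP, hlt.le⟩

lemma polyOscillation_mono_exponent (hpq : p ≤ q) (hg : AEStronglyMeasurable g) (huv : u < v) :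
    polyOscillation n p g u v ≤ polyOscillation n q g u v := by
  have := isProbabilityMeasure_cond_Icc huv
  exact iInf₂_mono fun P hP ↦ eLpNorm_le_eLpNorm_of_exponent_le hpq
    ((hg.sub (continuous_of_mem_polyFun hP).aestronglyMeasurable).mono_ac
      ProbabilityTheory.cond_absolutelyContinuous)

lemma mul_polyOscillation {c : ℝ≥0∞} (hc0 : c ≠ 0) (hc : c ≠ ∞) :
    c * polyOscillation n p g u v = ⨅ P ∈ polyFun E n, c * eLpNorm (g - P) p volume[|Icc u v] := by
  simp_rw [polyOscillation, ENNReal.mul_iInf_of_ne hc0 hc]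

lemma polyOscillation_le_of_Icc_subset {u' v' K : ℝ} (huv : u < v) (hsub : Icc u v ⊆ Icc u' v')
    (hK : v' - u' ≤ K * (v - u)) (hp : p ≠ ∞) :
    polyOscillation n p g u v ≤
      ENNReal.ofReal K ^ (1 / p).toReal * polyOscillation n p g u' v' := by
  have hlen : v - u ≤ v' - u' := by
    have := (Icc_subset_Icc_iff huv.le).1 hsub
    linarith
  have hK0 : 0 < K := pos_of_mul_pos_left ((sub_pos.2 huv).trans_le (hlen.trans hK)) (by linarith)
  rw [mul_polyOscillation (by simp [hK0]) (by finiteness)]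
  exact iInf₂_mono fun P _ ↦ eLpNorm_cond_Icc_le huv hsub hK hp _

lemma polyOscillation_comp_le (L : E →ₗ[ℝ] F) (hL : ∀ y, ‖L y‖ ≤ ‖y‖) :
    polyOscillation n p (L ∘ g) u v ≤ polyOscillation n p g u v :=
  le_iInf₂ fun P hP ↦ iInf₂_le_of_le (L ∘ P) (comp_mem_polyFun hP L) <|
    eLpNorm_mono fun t ↦ by simpa using hL (g t - P t)

/-- The sharp maximal function of order `s` of a vector-valued function, relative to the
polynomials of degree less than `n` and the exponent `p`. -/
noncomputable def polySharpMax (n : ℕ) (s : ℝ) (p : ℝ≥0∞) (g : ℝ → E) (x : ℝ) : ℝ≥0∞ :=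
  ⨆ (u : ℝ) (v : ℝ) (_ : u < v) (_ : x ∈ Icc u v),
    ENNReal.ofReal (v - u) ^ (-s) * polyOscillation n p g u v

/-- The variant of `polySharpMax` in which the point is interior to the interval. It is comparable
to `polySharpMax` and, unlike it, lower semicontinuous, hence measurable. -/
noncomputable def openPolySharpMax (n : ℕ) (s : ℝ) (p : ℝ≥0∞) (g : ℝ → E) (x : ℝ) : ℝ≥0∞ :=
  ⨆ (u : ℝ) (v : ℝ) (_ : x ∈ Ioo u v), ENNReal.ofReal (v - u) ^ (-s) * polyOscillation n p g u v

lemma ofReal_sub_rpow_ne_zero (huv : u < v) (s : ℝ) : ENNReal.ofReal (v - u) ^ s ≠ 0 :=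
  (ENNReal.rpow_pos (ENNReal.ofReal_pos.2 (sub_pos.2 huv)) (by finiteness)).ne'

lemma ofReal_sub_rpow_ne_top (huv : u < v) (s : ℝ) : ENNReal.ofReal (v - u) ^ s ≠ ∞ :=
  ENNReal.rpow_ne_top_of_ne_zero (by simpa using huv) (by finiteness)

lemma ofReal_rpow_neg_mul_le_iff (huv : u < v) {A c : ℝ≥0∞} :
    ENNReal.ofReal (v - u) ^ (-s) * A ≤ c ↔ A ≤ c * ENNReal.ofReal (v - u) ^ s := by
  rw [ENNReal.rpow_neg, mul_comm, ← div_eq_mul_inv,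
    ENNReal.div_le_iff (ofReal_sub_rpow_ne_zero huv s) (ofReal_sub_rpow_ne_top huv s)]

lemma polySharpMax_le_iff {c : ℝ≥0∞} : polySharpMax n s p g x ≤ c ↔
    ∀ u v, u < v → x ∈ Icc u v → polyOscillation n p g u v ≤ c * ENNReal.ofReal (v - u) ^ s := by
  simp only [polySharpMax, iSup_le_iff]
  exact forall₄_congr fun u v huv _ ↦ ofReal_rpow_neg_mul_le_iff huv

lemma openPolySharpMax_le_iff {c : ℝ≥0∞} : openPolySharpMax n s p g x ≤ c ↔
    ∀ u v, x ∈ Ioo u v → polyOscillation n p g u v ≤ c * ENNReal.ofReal (v - u) ^ s := by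
  simp only [openPolySharpMax, iSup_le_iff]
  exact forall₃_congr fun u v hx ↦ ofReal_rpow_neg_mul_le_iff (hx.1.trans hx.2)

lemma measurable_openPolySharpMax : Measurable (openPolySharpMax n s p g) :=
  measurable_iSup_mem_Ioo _

lemma openPolySharpMax_le_polySharpMax : openPolySharpMax n s p g x ≤ polySharpMax n s p g x :=
  openPolySharpMax_le_iff.2 fun u v hx ↦
    polySharpMax_le_iff.1 le_rfl u v (hx.1.trans hx.2) (Ioo_subset_Icc_self hx)

lemma polySharpMax_le_openPolySharpMax (hs : 0 ≤ s) (hp : p ≠ ∞) :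
    polySharpMax n s p g x ≤ 2 ^ (1 / p).toReal * 2 ^ s * openPolySharpMax n s p g x := by
  refine polySharpMax_le_iff.2 fun u v huv hx ↦ ?_
  set r := (v - u) / 2 with hr
  have hr0 : 0 < r := by rw [hr]; linarith
  calc polyOscillation n p g u v
      ≤ ENNReal.ofReal 2 ^ (1 / p).toReal * polyOscillation n p g (u - r) (v + r) :=
        polyOscillation_le_of_Icc_subset huv (Icc_subset_Icc (by linarith) (by linarith))
          (by linarith) hp
    _ ≤ ENNReal.ofReal 2 ^ (1 / p).toReal *
          (openPolySharpMax n s p g x * ENNReal.ofReal (v + r - (u - r)) ^ s) := by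
        gcongr
        exact openPolySharpMax_le_iff.1 le_rfl _ _ ⟨by linarith [hx.1], by linarith [hx.2]⟩
    _ = _ := by
        rw [show v + r - (u - r) = 2 * (v - u) by linarith, ENNReal.ofReal_mul two_pos.le,
          ENNReal.mul_rpow_of_nonneg _ _ hs, ENNReal.ofReal_ofNat]
        ring

lemma polySharpMax_mono_exponent (hpq : p ≤ q) (hg : AEStronglyMeasurable g) :
    polySharpMax n s p g x ≤ polySharpMax n s q g x :=
  polySharpMax_le_iff.2 fun u v huv hx ↦
    (polyOscillation_mono_exponent hpq hg huv).trans (polySharpMax_le_iff.1 le_rfl u v huv hx)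

lemma polySharpMax_comp_le (L : E →ₗ[ℝ] F) (hL : ∀ y, ‖L y‖ ≤ ‖y‖) :
    polySharpMax n s p (L ∘ g) x ≤ polySharpMax n s p g x :=
  polySharpMax_le_iff.2 fun u v huv hx ↦
    (polyOscillation_comp_le L hL).trans (polySharpMax_le_iff.1 le_rfl u v huv hx)

lemma hasPolyApprox_of_polySharpMax_lt {c : ℝ≥0∞} (h : polySharpMax n s p g x < c) (huv : u < v)
    (hx : x ∈ Icc u v) : HasPolyApprox n p g u v (c * ENNReal.ofReal (v - u) ^ s) :=
  hasPolyApprox_of_polyOscillation_lt <| (polySharpMax_le_iff.1 le_rfl u v huv hx).trans_lt <|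
    ENNReal.mul_lt_mul_left (ofReal_sub_rpow_ne_zero huv s) (ofReal_sub_rpow_ne_top huv s) h

end PolynomialOscillation

section SharpMaximalFunction

open scoped ProbabilityTheory

lemma toLp_eval_mem_polyFun {n N : ℕ} {D : Fin N → Polynomial ℂ} (hD : ∀ m, (D m).degree < n) :
    (fun t : ℝ ↦ (WithLp.toLp 2 fun m ↦ (D m).eval (t : ℂ) : EuclideanSpace ℂ (Fin N))) ∈
      polyFun (EuclideanSpace ℂ (Fin N)) n := by
  have expand : (fun t : ℝ ↦ (WithLp.toLp 2 fun m ↦ (D m).eval (t : ℂ) :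
      EuclideanSpace ℂ (Fin N))) =
        ∑ k ∈ Finset.range n, fun t : ℝ ↦ t ^ k • WithLp.toLp 2 fun m ↦ (D m).coeff k := by
    ext t m
    rw [Finset.sum_apply, PiLp.toLp_apply]
    by_cases h0 : D m = 0
    · simp [h0]
    · rw [Polynomial.eval_eq_sum_range' ((Polynomial.natDegree_lt_iff_degree_lt h0).2 (hD m))]
      simp [mul_comm]
  rw [expand]
  exact Submodule.sum_mem _ fun k hk ↦ pow_smul_mem_polyFun (Finset.mem_range.1 hk) _

lemma exists_eq_toLp_eval_of_mem_polyFun {n N : ℕ} {P : ℝ → EuclideanSpace ℂ (Fin N)}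
    (hP : P ∈ polyFun (EuclideanSpace ℂ (Fin N)) n) :
    ∃ D : Fin N → Polynomial ℂ, (∀ m, (D m).degree < n) ∧
      P = fun t : ℝ ↦ WithLp.toLp 2 fun m ↦ (D m).eval (t : ℂ) := by
  induction hP using Submodule.span_induction with
  | mem P hP =>
    obtain ⟨k, hk, c, rfl⟩ := hP
    refine ⟨fun m ↦ Polynomial.monomial k (c m), fun _ ↦
      (Polynomial.degree_monomial_le _ _).trans_lt (by exact_mod_cast hk), ?_⟩
    ext t m
    simp [mul_comm]
  | zero => exact ⟨0, fun _ ↦ by simp, by ext; simp⟩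
  | add P Q _ _ hP hQ =>
    obtain ⟨D, hD, rfl⟩ := hP
    obtain ⟨D', hD', rfl⟩ := hQ
    exact ⟨D + D', fun m ↦ (Polynomial.degree_add_le _ _).trans_lt (max_lt (hD m) (hD' m)),
      by ext; simp⟩
  | smul r P _ hP =>
    obtain ⟨D, hD, rfl⟩ := hP
    exact ⟨fun m ↦ (r : ℂ) • D m, fun m ↦ (Polynomial.degree_smul_le _ _).trans_lt (hD m),
      by ext; simp⟩

lemma eLpNorm_cond_Icc_sub_toLp_eval {N : ℕ} {p : ℝ} (hp : 0 < p) (h : Fin N → ℝ → ℂ)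
    (D : Fin N → Polynomial ℂ) (u v : ℝ) :
    eLpNorm ((fun t : ℝ ↦ (WithLp.toLp 2 fun m ↦ h m t : EuclideanSpace ℂ (Fin N))) -
        fun t : ℝ ↦ WithLp.toLp 2 fun m ↦ (D m).eval (t : ℂ)) (ENNReal.ofReal p)
          volume[|Icc u v] =
      ((ENNReal.ofReal (v - u))⁻¹ * ∫⁻ t in Icc u v,
        ENNReal.ofReal ((∑ m, ‖h m t - (D m).eval (t : ℂ)‖ ^ 2) ^ (p / 2))) ^ (1 / p) := by
  rw [eLpNorm_eq_lintegral_rpow_enorm_toReal (by simpa using hp) (by simp),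
    ENNReal.toReal_ofReal hp.le, lintegral_cond_Icc]
  congr 3 with t
  rw [Pi.sub_apply, ← ofReal_norm, ENNReal.ofReal_rpow_of_nonneg (norm_nonneg _) hp.le,
    EuclideanSpace.norm_eq, sqrt_eq_rpow, ← rpow_mul (by positivity)]
  congr 2
  ring

lemma sharpMax_eq_polySharpMax {N n : ℕ} {s p : ℝ} (hp : 0 < p) (h : Fin N → ℝ → ℂ) (x : ℝ) :
    sharpMax n s p h x = polySharpMax n s (ENNReal.ofReal p)
      (fun t ↦ (WithLp.toLp 2 fun m ↦ h m t : EuclideanSpace ℂ (Fin N))) x := by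
  refine iSup_congr fun u ↦ iSup_congr fun v ↦ iSup_congr fun huv ↦ iSup_congr fun _ ↦ ?_
  simp_rw [← eLpNorm_cond_Icc_sub_toLp_eval hp]
  rw [mul_polyOscillation (ofReal_sub_rpow_ne_zero huv _) (ofReal_sub_rpow_ne_top huv _)]
  refine le_antisymm (le_iInf₂ fun P hP ↦ ?_) (le_iInf₂ fun D hD ↦ ?_)
  · obtain ⟨D, hD, rfl⟩ := exists_eq_toLp_eval_of_mem_polyFun hP
    exact iInf₂_le D hD
  · exact iInf₂_le _ (toLp_eval_mem_polyFun hD)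

lemma polySharpMax_le_sharpMax_fin_one {n : ℕ} {s p : ℝ} (hp : 0 < p) (f : ℝ → ℂ) (x : ℝ) :
    polySharpMax n s (ENNReal.ofReal p) f x ≤ sharpMax n s p (fun _ : Fin 1 ↦ f) x := by
  rw [sharpMax_eq_polySharpMax hp]
  exact polySharpMax_comp_le (g := fun t ↦ (WithLp.toLp 2 fun _ ↦ f t : EuclideanSpace ℂ (Fin 1)))
    ((EuclideanSpace.proj (𝕜 := ℂ) 0).restrictScalars ℝ).toLinearMap fun y ↦ PiLp.norm_apply_le y 0

end SharpMaximalFunction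

section SharpMaximalInequalities

open scoped ProbabilityTheory

variable {E : Type*} [NormedAddCommGroup E] [NormedSpace ℝ E]

lemma openPolySharpMax_le_maximalFunction {k : ℕ} {s p : ℝ} (hs : 0 < s) (hp : 0 < p) {g : ℝ → E}
    (hg : Continuous g) {H : ℝ → ℝ≥0∞} (hH : Measurable H)
    (h : ∀ x u v, u < v → x ∈ Icc u v →
      HasPolyApprox (k + 1) 1 g u v (H x * ENNReal.ofReal (v - u) ^ s)) (x : ℝ) :
    openPolySharpMax (k + 1) s (ENNReal.ofReal p) g x ≤ telescopeConst k s * 40 ^ p⁻¹ *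
      maximalFunction (fun t ↦ H t ^ (p⁻¹ + s / 4)⁻¹) x ^ (p⁻¹ + s / 4) := by
  refine openPolySharpMax_le_iff.2 fun u v hx ↦ ?_
  refine (hasPolyApprox_self_improvement hs hp hg hH h
    (hx.1.trans hx.2)).polyOscillation_le.trans ?_
  rw [mul_right_comm _ (ENNReal.ofReal (v - u) ^ s)]
  gcongr
  rw [← setLAverage_eq_lintegral_cond]
  exact setLAverage_le_maximalFunction _ hx

lemma exists_lintegral_polySharpMax_rpow_le_of_hasPolyApprox (k : ℕ) {s p : ℝ} (hs : 0 < s)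
    (hp : 0 < p) : ∃ D : ℝ≥0, ∀ {E : Type*} [NormedAddCommGroup E] [NormedSpace ℝ E] {g : ℝ → E},
      Continuous g → ∀ {H : ℝ → ℝ≥0∞}, Measurable H →
        (∀ x u v, u < v → x ∈ Icc u v →
          HasPolyApprox (k + 1) 1 g u v (H x * ENNReal.ofReal (v - u) ^ s)) →
        ∫⁻ x, polySharpMax (k + 1) s (ENNReal.ofReal p) g x ^ p ≤ D * ∫⁻ x, H x ^ p := by
  set θ := p⁻¹ + s / 4 with hθ
  have hr : 1 < θ * p := by
    rw [hθ, add_mul, inv_mul_cancel₀ hp.ne']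
    linarith [show 0 < s / 4 * p by positivity]
  have hθ0 : 0 < θ := by positivity
  set K : ℝ≥0∞ := 2 ^ (1 / ENNReal.ofReal p).toReal * 2 ^ s * (telescopeConst k s * 40 ^ p⁻¹)
  set M : ℝ := θ * p * 10 * (θ * p - 1)⁻¹ * 2 ^ (θ * p - 1)
  have hK : K ≠ ∞ := by
    have := telescopeConst_ne_top k hs
    finiteness
  refine ⟨(K ^ p * ENNReal.ofReal M).toNNReal, fun {E} _ _ {g} hg {H} hH h ↦ ?_⟩
  set W : ℝ → ℝ≥0∞ := fun t ↦ H t ^ θ⁻¹ with hW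
  have pointwise (x : ℝ) : polySharpMax (k + 1) s (ENNReal.ofReal p) g x ≤
      K * maximalFunction W x ^ θ := by
    refine (polySharpMax_le_openPolySharpMax hs.le ENNReal.ofReal_ne_top).trans ?_
    rw [mul_assoc _ (telescopeConst k s * _)]
    gcongr
    exact openPolySharpMax_le_maximalFunction hs hp hg hH h x
  rw [ENNReal.coe_toNNReal (by finiteness)]
  calc ∫⁻ x, polySharpMax (k + 1) s (ENNReal.ofReal p) g x ^ p
      ≤ ∫⁻ x, K ^ p * maximalFunction W x ^ (θ * p) := by
        refine lintegral_mono fun x ↦ (ENNReal.rpow_le_rpow (pointwise x) hp.le).trans_eq ?_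
        rw [ENNReal.mul_rpow_of_nonneg _ _ hp.le, ENNReal.rpow_mul]
    _ = K ^ p * ∫⁻ x, maximalFunction W x ^ (θ * p) :=
        lintegral_const_mul _ ((measurable_maximalFunction W).pow_const _)
    _ ≤ K ^ p * (ENNReal.ofReal M * ∫⁻ x, W x ^ (θ * p)) := by
        gcongr
        exact lintegral_maximalFunction_rpow_le (hH.pow_const _) hr
    _ = K ^ p * ENNReal.ofReal M * ∫⁻ x, H x ^ p := by
        simp_rw [hW, ← ENNReal.rpow_mul, inv_mul_cancel_left₀ hθ0.ne', mul_assoc]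

lemma le_mul_lintegral_rpow_of_forall_add_pos {α : Type*} [MeasurableSpace α] {μ : Measure α}
    [SigmaFinite μ] {p : ℝ} (hp : 1 ≤ p) {F : α → ℝ≥0∞} (hF : Measurable F) {A K : ℝ≥0∞}
    (hK : K ≠ ∞)
    (h : ∀ w : α → ℝ≥0∞, Measurable w → (∀ x, 0 < w x) → A ≤ K * ∫⁻ x, (F x + w x) ^ p ∂μ) :
    A ≤ K * 2 ^ (p - 1) * ∫⁻ x, F x ^ p ∂μ := by
  have hp0 : 0 < p := one_pos.trans_le hp
  set L : ℝ≥0∞ := K * 2 ^ (p - 1)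
  have hL : L ≠ ∞ := by finiteness
  refine ENNReal.le_of_forall_pos_le_add fun ε hε _ ↦ ?_
  obtain ⟨w, hw0, hw, hwε⟩ := exists_pos_lintegral_lt_of_sigmaFinite μ
    (ENNReal.div_pos (ENNReal.coe_pos.2 hε).ne' hL).ne'
  calc A ≤ K * ∫⁻ x, (F x + (w x : ℝ≥0∞) ^ p⁻¹) ^ p ∂μ :=
        h _ (by fun_prop) fun x ↦ ENNReal.rpow_pos (by simpa using hw0 x) (by finiteness)
    _ ≤ K * ∫⁻ x, 2 ^ (p - 1) * (F x ^ p + w x) ∂μ := by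
        gcongr with x
        refine (ENNReal.rpow_add_le_mul_rpow_add_rpow _ _ hp).trans_eq ?_
        rw [ENNReal.rpow_inv_rpow hp0.ne']
    _ = L * ∫⁻ x, F x ^ p ∂μ + L * ∫⁻ x, w x ∂μ := by
        rw [lintegral_const_mul _ (by fun_prop), lintegral_add_left (hF.pow_const p), mul_add,
          mul_add]
        ring
    _ ≤ L * ∫⁻ x, F x ^ p ∂μ + ε := by
        gcongr
        exact (mul_le_mul_right hwε.le L).trans ENNReal.mul_div_le

theorem exists_lintegral_polySharpMax_rpow_le (k : ℕ) {s p : ℝ} (hs : 0 < s) (hp : 1 ≤ p) :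
    ∃ D : ℝ≥0, ∀ {E : Type*} [NormedAddCommGroup E] [NormedSpace ℝ E] {g : ℝ → E},
      Continuous g → ∫⁻ x, polySharpMax (k + 1) s (ENNReal.ofReal p) g x ^ p ≤
        D * ∫⁻ x, polySharpMax (k + 1) s 1 g x ^ p := by
  have hp0 : 0 < p := one_pos.trans_le hp
  obtain ⟨D, hD⟩ := exists_lintegral_polySharpMax_rpow_le_of_hasPolyApprox k hs hp0
  set K : ℝ≥0∞ := 2 * 2 ^ s
  have hK : K ≠ ∞ := by finiteness
  refine ⟨(D * 2 ^ (p - 1) * K ^ p).toNNReal, fun {E} _ _ {g} hg ↦ ?_⟩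
  set F := openPolySharpMax (k + 1) s 1 g
  have hF : Measurable F := measurable_openPolySharpMax
  have approx (w : ℝ → ℝ≥0∞) (hw : ∀ x, 0 < w x) (x u v : ℝ) (huv : u < v) (hx : x ∈ Icc u v) :
      HasPolyApprox (k + 1) 1 g u v ((K * F x + w x) * ENNReal.ofReal (v - u) ^ s) := by
    obtain htop | htop := eq_or_ne (K * F x) ∞
    · exact ⟨0, zero_mem _, by simp [htop, ENNReal.top_mul (ofReal_sub_rpow_ne_zero huv s)]⟩
    · refine hasPolyApprox_of_polySharpMax_lt (lt_of_le_of_lt ?_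
        (ENNReal.lt_add_right htop (hw x).ne')) huv hx
      simpa using polySharpMax_le_openPolySharpMax hs.le ENNReal.one_ne_top
  rw [ENNReal.coe_toNNReal (by finiteness)]
  calc ∫⁻ x, polySharpMax (k + 1) s (ENNReal.ofReal p) g x ^ p
      ≤ D * 2 ^ (p - 1) * ∫⁻ x, (K * F x) ^ p :=
        le_mul_lintegral_rpow_of_forall_add_pos hp (hF.const_mul K) ENNReal.coe_ne_top
          fun w hw hw0 ↦ hD hg ((hF.const_mul K).add hw) (approx w hw0)
    _ = D * 2 ^ (p - 1) * K ^ p * ∫⁻ x, F x ^ p := by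
        simp_rw [ENNReal.mul_rpow_of_nonneg _ _ hp0.le]
        rw [lintegral_const_mul _ (hF.pow_const p), mul_assoc _ (K ^ p)]
    _ ≤ D * 2 ^ (p - 1) * K ^ p * ∫⁻ x, polySharpMax (k + 1) s 1 g x ^ p := by
        gcongr
        exact openPolySharpMax_le_polySharpMax

end SharpMaximalInequalities

section RotatedFamilyBound

variable {η : SchwartzMap ℝ ℂ} {s : ℝ}

lemma exists_polySharpMax_rotFamily_le_of_lt (hη : support (𝓕 (η : ℝ → ℂ)) ⊆ Ioo 0 1)
    (hs : 0 ≤ s) : ∃ C : ℝ≥0, ∀ {N : ℕ} {a b : Fin N → ℝ}, Admissible a b → ∀ {f : ℝ → ℂ},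
      AEStronglyMeasurable f → ∀ {x : ℝ} {A : ℝ≥0∞}, A ≠ ∞ →
        polySharpMax (⌊s⌋₊ + 1) s 2 f x < A → IsTempered f ∧
          polySharpMax (⌊s⌋₊ + 1) s 2 (rotFamily η a b f) x ≤ C * A := by
  have hq : (2 : ℝ) ^ ⌊s⌋₊ ≤ 2 ^ s := by
    rw [← rpow_natCast]
    exact rpow_le_rpow_of_exponent_le one_le_two (Nat.floor_le hs)
  have hq' : (2 : ℝ) ^ s < 2 ^ (⌊s⌋₊ + 1) := by
    rw [← rpow_natCast]
    exact rpow_lt_rpow_of_exponent_lt one_lt_two (by exact_mod_cast Nat.lt_floor_add_one s)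
  obtain ⟨C, hC⟩ := exists_hasPolyApprox_rotFamily_of_dyadic hη hq hq'
  refine ⟨C * 2 ^ s, fun {N a b} hab {f} hf {x A} hA hlt ↦ ?_⟩
  have transfer (u v : ℝ) (huv : u < v) (hx : x ∈ Icc u v) : IsTempered f ∧
      HasPolyApprox (⌊s⌋₊ + 1) 2 (rotFamily η a b f) u v
        (C * (A * ENNReal.ofReal (2 * (v - u)) ^ s)) := by
    have hl : 0 < v - u := sub_pos.2 huv
    have happrox := hC hab hf (c := (u + v) / 2) hl
      (A := A * ENNReal.ofReal (2 * (v - u)) ^ s) (by finiteness) fun j ↦ ?_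
    · rwa [show (u + v) / 2 - (v - u) / 2 = u by ring,
        show (u + v) / 2 + (v - u) / 2 = v by ring] at happrox
    have hj : v - u ≤ 2 ^ j * (v - u) := le_mul_of_one_le_left hl.le (one_le_pow₀ one_le_two)
    convert hasPolyApprox_of_polySharpMax_lt hlt (u := (u + v) / 2 - 2 ^ j * (v - u))
      (v := (u + v) / 2 + 2 ^ j * (v - u)) (by linarith)
      ⟨by linarith [hx.1], by linarith [hx.2]⟩ using 1
    rw [show (u + v) / 2 + 2 ^ j * (v - u) - ((u + v) / 2 - 2 ^ j * (v - u)) =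
        2 ^ j * (2 * (v - u)) by ring, ENNReal.ofReal_mul (p := 2 ^ j) (by positivity),
      ENNReal.mul_rpow_of_nonneg _ _ hs, ENNReal.ofReal_rpow_of_pos (x := 2 ^ j) (by positivity),
      ← rpow_pow_comm two_pos.le]
    ring
  refine ⟨(transfer x (x + 1) (by linarith) ⟨le_rfl, by linarith⟩).1,
    polySharpMax_le_iff.2 fun u v huv hx ↦
      (transfer u v huv hx).2.polyOscillation_le.trans_eq ?_⟩
  rw [ENNReal.ofReal_mul two_pos.le, ENNReal.mul_rpow_of_nonneg _ _ hs, ENNReal.ofReal_ofNat,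
    ENNReal.coe_mul, ENNReal.coe_rpow_of_nonneg _ hs, ENNReal.coe_ofNat]
  ring

theorem exists_polySharpMax_rotFamily_le (hη : support (𝓕 (η : ℝ → ℂ)) ⊆ Ioo 0 1)
    (hs : 0 ≤ s) : ∃ C : ℝ≥0, ∀ {N : ℕ} {a b : Fin N → ℝ}, Admissible a b → ∀ {f : ℝ → ℂ},
      AEStronglyMeasurable f → (∃ x, polySharpMax (⌊s⌋₊ + 1) s 2 f x ≠ ∞) → IsTempered f ∧
        ∀ x, polySharpMax (⌊s⌋₊ + 1) s 2 (rotFamily η a b f) x ≤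
          C * polySharpMax (⌊s⌋₊ + 1) s 2 f x := by
  obtain ⟨C, hC⟩ := exists_polySharpMax_rotFamily_le_of_lt hη hs
  refine ⟨C + 1, fun {N a b} hab {f} hf ⟨x₀, hx₀⟩ ↦
    ⟨(hC hab hf (by finiteness) (ENNReal.lt_add_right hx₀ one_ne_zero)).1, fun x ↦ ?_⟩⟩
  have hC0 : ((C + 1 : ℝ≥0) : ℝ≥0∞) ≠ 0 := by simp
  rw [mul_comm, ← ENNReal.div_le_iff hC0 ENNReal.coe_ne_top]
  refine le_of_forall_gt_imp_ge_of_dense fun A hA ↦ ?_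
  obtain rfl | htop := eq_or_ne A ∞
  · exact le_top
  rw [ENNReal.div_le_iff hC0 ENNReal.coe_ne_top, mul_comm]
  exact (hC hab hf htop hA).2.trans (by gcongr; simp)

theorem exists_lintegral_polySharpMax_rotFamily_rpow_le
    (hη : support (𝓕 (η : ℝ → ℂ)) ⊆ Ioo 0 1) (hs : 0 < s) {p : ℝ} (hp : 2 ≤ p) :
    ∃ C : ℝ≥0, ∀ {N : ℕ} {a b : Fin N → ℝ}, Admissible a b → ∀ {f : ℝ → ℂ},
      AEStronglyMeasurable f →
        ∫⁻ x, polySharpMax (⌊s⌋₊ + 1) s (ENNReal.ofReal p) f x ^ p ≠ ∞ →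
        ∫⁻ x, polySharpMax (⌊s⌋₊ + 1) s (ENNReal.ofReal p) (rotFamily η a b f) x ^ p ≤
          C * ∫⁻ x, polySharpMax (⌊s⌋₊ + 1) s (ENNReal.ofReal p) f x ^ p := by
  have hp0 : 0 < p := by linarith
  have hp2 : 2 ≤ ENNReal.ofReal p := by simpa using ENNReal.ofReal_le_ofReal hp
  obtain ⟨D, hD⟩ := exists_lintegral_polySharpMax_rpow_le ⌊s⌋₊ hs (by linarith : 1 ≤ p)
  obtain ⟨C, hC⟩ := exists_polySharpMax_rotFamily_le hη hs.le
  refine ⟨D * C ^ p, fun {N a b} hab {f} hf hfin ↦ ?_⟩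
  have hexp (x : ℝ) := polySharpMax_mono_exponent (n := ⌊s⌋₊ + 1) (s := s) (x := x) hp2 hf
  have hpoint : ∃ x, polySharpMax (⌊s⌋₊ + 1) s 2 f x ≠ ∞ := by
    by_contra! htop
    simp [fun x ↦ top_le_iff.1 ((htop x).ge.trans (hexp x)), hp0] at hfin
  obtain ⟨htemp, hle⟩ := hC hab hf hpoint
  have hcont : Continuous (rotFamily η a b f) :=
    (contDiff_rotFamily η hab.1 htemp (n := 0)).continuous
  calc ∫⁻ x, polySharpMax (⌊s⌋₊ + 1) s (ENNReal.ofReal p) (rotFamily η a b f) x ^ p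
      ≤ D * ∫⁻ x, polySharpMax (⌊s⌋₊ + 1) s 1 (rotFamily η a b f) x ^ p := hD hcont
    _ ≤ D * ∫⁻ x, (C : ℝ≥0∞) ^ p * polySharpMax (⌊s⌋₊ + 1) s (ENNReal.ofReal p) f x ^ p := by
        gcongr with x
        rw [← ENNReal.mul_rpow_of_nonneg _ _ hp0.le]
        gcongr
        exact (polySharpMax_mono_exponent one_le_two hcont.aestronglyMeasurable).trans <|
          (hle x).trans (mul_le_mul_right (hexp x) _)
    _ = _ := by
        rw [lintegral_const_mul' _ _ (by finiteness), ENNReal.coe_mul,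
          ENNReal.coe_rpow_of_nonneg _ hp0.le, mul_assoc]

end RotatedFamilyBound

/-- uniform boundedness of the rotated family on `Ċ^s_p = Ḟ^s_{p∞}`:
for `2 ≤ p < ∞`, `s > 0` and `i = ⌊s⌋ + 1`, if `‖M^{i,s}_p f‖_{L^p} < ∞` then
`‖M^{i,s}_p g‖_{L^p} ≤ C ‖M^{i,s}_p f‖_{L^p}`, where `g_m(x) = e^{-2πi a_m x}(f∗φ_m)(x)`. -/
theorem statement13 (φ : SchwartzMap ℝ ℂ)
    (hφ : Function.support (𝓕 ⇑φ) ⊆ Set.Ioo 0 1)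
    (p : ℝ) (hp : 2 ≤ p) (s : ℝ) (hs : 0 < s) :
    ∃ C : ℝ, 0 < C ∧ ∀ (N : ℕ) (a b : Fin N → ℝ), Admissible a b →
      ∀ f : ℝ → ℂ, Measurable f →
        (∫⁻ x : ℝ, sharpMax (Nat.floor s + 1) s p (fun _ : Fin 1 => f) x ^ p) ^ (1/p) < ∞ →
        (∫⁻ x : ℝ, sharpMax (Nat.floor s + 1) s p
            (fun m : Fin N => rotConv ⇑φ (a m) (b m) f) x ^ p) ^ (1/p)
          ≤ ENNReal.ofReal C *
            (∫⁻ x : ℝ, sharpMax (Nat.floor s + 1) s p (fun _ : Fin 1 => f) x ^ p) ^ (1/p) := by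
  have hp0 : 0 < p := by linarith
  obtain ⟨C, hC⟩ := exists_lintegral_polySharpMax_rotFamily_rpow_le hφ hs hp
  refine ⟨(C + 1) ^ (1 / p), by positivity, fun N a b hab f hf hfin ↦ ?_⟩
  have hscalar : ∫⁻ x, polySharpMax (⌊s⌋₊ + 1) s (ENNReal.ofReal p) f x ^ p ≤
      ∫⁻ x, sharpMax (⌊s⌋₊ + 1) s p (fun _ : Fin 1 ↦ f) x ^ p := by
    gcongr with x
    exact polySharpMax_le_sharpMax_fin_one hp0 f x
  have hpiece := hC hab hf.aestronglyMeasurable <|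
    ne_top_of_le_ne_top ((ENNReal.rpow_lt_top_iff_of_pos (by positivity)).1 hfin).ne hscalar
  rw [← ENNReal.ofReal_rpow_of_pos (by positivity),
    ← ENNReal.mul_rpow_of_nonneg _ _ (by positivity)]
  gcongr
  simp_rw [sharpMax_eq_polySharpMax hp0 fun m ↦ rotConv φ (a m) (b m) f]
  refine hpiece.trans (mul_le_mul' ?_ hscalar)
  simp [ENNReal.ofReal_add]
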